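/- arXiv:1407.7804 — 4 statements merged into one kernel-verified Lean document; each statement's English description precedes it below -/
import Mathlib

section
/- There exist δ > 0 depending only on γ, and constants C', W₀ > 0 depending only on C, c, γ, such that for all W ≥ W₀ both ‖P K g_α‖ ≤ C'·W^{−1−δ}·|μ| and ‖P K* g_α‖ ≤ C'·W^{−1−δ}·|μ|, where K* is the Hilbert-space adjoint of K. Equivalently, the off-diagonal blocks B = μ^{−1}(1−P)KP and C = μ^{−1}PK(1−P) of the normalized operator μ^{−1}K have operator norms O(W^{−1−δ}). -/
open MeasureTheory Complex Real
open scoped ComplexInnerProductSpace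

noncomputable section

/-- The Hilbert space `L²(ℝ, ℂ)`. -/
abbrev Hsp : Type := Lp ℂ 2 (volume : Measure ℝ)

/-- The kernel `K(x,y) = exp(−W²ζ²(x−y)² − U(x)/2 − U(y)/2)`. -/
def kerK (W : ℝ) (ζ : ℂ) (U : ℝ → ℂ) (x y : ℝ) : ℂ :=
  Complex.exp (-(W : ℂ)^2 * ζ^2 * ((x : ℂ) - (y : ℂ))^2 - U x / 2 - U y / 2)

/-- The harmonic-approximation kernel `K̃(x,y) = exp(−W²ζ²(x−y)² − (U''(0)/4)(x²+y²))`. -/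
def kerKt (W : ℝ) (ζ : ℂ) (U : ℝ → ℂ) (x y : ℝ) : ℂ :=
  Complex.exp (-(W : ℂ)^2 * ζ^2 * ((x : ℂ) - (y : ℂ))^2
    - (deriv (deriv U) 0 / 4) * ((x : ℂ)^2 + (y : ℂ)^2))

/-- `α = W·√(ζ²U''(0)/2)`, a positive real by assumption (U2). -/
def alph (W : ℝ) (ζ : ℂ) (U : ℝ → ℂ) : ℝ :=
  W * Real.sqrt ((ζ^2 * deriv (deriv U) 0).re / 2)

/-- `μ = √(π/(W²ζ² + α))`, principal branch. -/
def muK (W : ℝ) (ζ : ℂ) (U : ℝ → ℂ) : ℂ :=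
  ((π : ℂ) / ((W : ℂ)^2 * ζ^2 + (alph W ζ U : ℂ))) ^ (1/2 : ℂ)

/-- The Gaussian `g_α(x) = (2α/π)^{1/4}·exp(−αx²)` (for real `α > 0`, a unit vector). -/
def gaussF (α : ℝ) (x : ℝ) : ℂ :=
  (((2*α/π) ^ (1/4 : ℝ) : ℝ) : ℂ) * Complex.exp (-(α : ℂ) * (x : ℂ)^2)

/-- `T` is the integral operator on `L²(ℝ)` with kernel `k`. -/
def IsKerOp (k : ℝ → ℝ → ℂ) (T : Hsp →L[ℂ] Hsp) : Prop :=
  ∀ f : Hsp, ∀ᵐ x : ℝ, (T f : ℝ → ℂ) x = ∫ y : ℝ, k x y * (f : ℝ → ℂ) y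

/-- The orthogonal projection of `L²(ℝ)` onto the orthogonal complement of the
unit vector `g`: `P u = u − ⟪g, u⟫·g`. -/
def projP (g : Hsp) : Hsp →L[ℂ] Hsp :=
  ContinuousLinearMap.id ℂ Hsp - (innerSL ℂ g).smulRight g

/-- Assumptions (U1)–(U4) on the potential `U`, together with the conditions on `ζ`. -/
structure UHyp (C c γ : ℝ) (ζ : ℂ) (U : ℝ → ℂ) : Prop where
  hζ : ‖ζ‖ = 1
  hζre : 0 < (ζ^2).re
  hU1smooth : ContDiff ℝ (⊤ : ℕ∞) U
  hU1zero : U 0 = 0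
  hU1deriv : deriv U 0 = 0
  hU2im : (ζ^2 * deriv (deriv U) 0).im = 0
  hU2pos : 0 < (ζ^2 * deriv (deriv U) 0).re
  hU3 : ∀ x : ℝ, (1/C) * min 1 (x^2) ≤ (U x).re
  hU4 : ∃ UC : ℂ → ℂ, (∀ x : ℝ, UC x = U x) ∧
      AnalyticOnNhd ℂ UC {z : ℂ | |z.im| ≤ c} ∧
      ∀ z : ℂ, |z.im| ≤ c → ‖deriv UC z‖ ≤ C * (max 1 (UC z).re) ^ γ

end

lemma norm_sub_zero_le_of_norm_deriv_le {f f' : ℂ → ℂ} {r M : ℝ} {k : ℕ} (hM : 0 ≤ M)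
    (hf : ∀ z, ‖z‖ ≤ r → HasDerivAt f (f' z) z) (hb : ∀ z, ‖z‖ ≤ r → ‖f' z‖ ≤ M * ‖z‖ ^ k)
    {z : ℂ} (hz : ‖z‖ ≤ r) : ‖f z - f 0‖ ≤ M * ‖z‖ ^ (k + 1) := by
  have h := (convex_closedBall (0 : ℂ) ‖z‖).norm_image_sub_le_of_norm_hasDerivWithin_le
    (f := f) (f' := f') (C := M * ‖z‖ ^ k) (x := 0) (y := z)
    (fun y hy => (hf y ((mem_closedBall_zero_iff.1 hy).trans hz)).hasDerivWithinAt)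
    (fun y hy => by
      have hy' := mem_closedBall_zero_iff.1 hy
      refine (hb y (hy'.trans hz)).trans ?_
      gcongr)
    (by simp) (by simp)
  calc ‖f z - f 0‖ ≤ M * ‖z‖ ^ k * ‖z - 0‖ := h
    _ = M * ‖z‖ ^ (k + 1) := by rw [sub_zero]; ring

/-- A function controlled by its own real part through its derivative stays bounded near a zero. -/
lemma norm_le_one_of_norm_deriv_le {f : ℂ → ℂ} {C c γ : ℝ} (hC : 1 ≤ C)
    (hf0 : f 0 = 0) (hf : AnalyticOnNhd ℂ f {z : ℂ | |z.im| ≤ c})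
    (hd : ∀ z : ℂ, |z.im| ≤ c → ‖deriv f z‖ ≤ C * (max 1 (f z).re) ^ γ)
    {z : ℂ} (hzc : ‖z‖ ≤ c) (hzC : ‖z‖ ≤ 1 / (2 * C)) : ‖f z‖ ≤ 1 := by
  have hmem : ∀ t ∈ Set.Icc (0 : ℝ) 1, |((t : ℂ) * z).im| ≤ c := by
    intro t ht
    refine (abs_im_le_norm _).trans ?_
    rw [norm_mul, norm_real, norm_of_nonneg ht.1]
    nlinarith [ht.2, norm_nonneg z]
  have hder : ∀ t ∈ Set.Icc (0 : ℝ) 1,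
      HasDerivAt (fun s : ℝ => f ((s : ℂ) * z)) (deriv f ((t : ℂ) * z) * z) t := by
    intro t ht
    have h1 := (hf _ (hmem t ht)).differentiableAt.hasDerivAt
    have h2 : HasDerivAt (fun s : ℂ => s * z) z (t : ℂ) := by
      simpa using (hasDerivAt_id (t : ℂ)).mul_const z
    exact (h1.comp (t : ℂ) h2).comp_ofReal
  have key := image_norm_le_of_norm_deriv_right_lt_deriv_boundary
    (f := fun s : ℝ => f ((s : ℂ) * z)) (f' := fun t : ℝ => deriv f ((t : ℂ) * z) * z)
    (a := 0) (b := 1) (B := fun t => t) (B' := fun _ => 1)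
    (fun t ht => (hder t ht).continuousAt.continuousWithinAt)
    (fun t ht => (hder t ⟨ht.1, ht.2.le⟩).hasDerivWithinAt)
    (by simp [hf0]) (fun t => hasDerivAt_id t)
    (fun t ht hb => by
      have hre : (f ((t : ℂ) * z)).re ≤ 1 := by
        refine (re_le_norm _).trans ?_
        have : ‖f ((t : ℂ) * z)‖ = t := hb
        rw [this]; exact ht.2.le
      have h1 := hd _ (hmem t ⟨ht.1, ht.2.le⟩)
      rw [max_eq_left hre, Real.one_rpow, mul_one] at h1
      rw [norm_mul]
      have h2 : C * ‖z‖ ≤ 1 / 2 := by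
        calc C * ‖z‖ ≤ C * (1 / (2 * C)) := by gcongr
          _ = 1 / 2 := by field_simp
      nlinarith [norm_nonneg z])
  simpa using key (x := 1) (by simp)

/-- Second-order Taylor estimate for the potential, uniform over the class `UHyp`. -/
lemma UHyp.exists_taylor_bound {C c γ : ℝ} (hC : 1 ≤ C) (hc : 0 < c) :
    ∃ r A M : ℝ, 0 < r ∧ 0 < A ∧ 0 < M ∧ ∀ (ζ : ℂ) (U : ℝ → ℂ), UHyp C c γ ζ U →
      ‖deriv (deriv U) 0‖ ≤ A ∧
      ∀ x : ℝ, |x| ≤ r → ‖U x - deriv (deriv U) 0 / 2 * (x : ℂ) ^ 2‖ ≤ M * |x| ^ 3 := by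
  set R : ℝ := min c (1 / (2 * C)) with hR
  have hR0 : 0 < R := by positivity
  set r : ℝ := R / 2 with hr
  have hr0 : 0 < r := by positivity
  refine ⟨r, 2 / r ^ 2, 6 / r ^ 3, hr0, by positivity, by positivity, ?_⟩
  intro ζ U h
  obtain ⟨f, hfU, hf, hd⟩ := h.hU4
  have hf0 : f 0 = 0 := by simpa [h.hU1zero] using hfU 0
  have hbd : ∀ z : ℂ, ‖z‖ ≤ R → ‖f z‖ ≤ 1 := fun z hz =>
    norm_le_one_of_norm_deriv_le hC hf0 hf hd (hz.trans (min_le_left _ _))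
      (hz.trans (min_le_right _ _))
  have han : ∀ z : ℂ, ‖z‖ ≤ R → AnalyticAt ℂ f z := fun z hz =>
    hf z ((abs_im_le_norm z).trans (hz.trans (min_le_left _ _)))
  have hcauchy : ∀ (n : ℕ) (z : ℂ), ‖z‖ ≤ r → ‖iteratedDeriv n f z‖ ≤ n.factorial * 1 / r ^ n := by
    intro n z hz
    have hball : ∀ w ∈ Metric.closedBall z r, ‖w‖ ≤ R := by
      intro w hw
      have h1 : ‖w - z‖ ≤ r := by simpa [dist_eq_norm] using hw
      calc ‖w‖ = ‖(w - z) + z‖ := by ring_nf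
        _ ≤ ‖w - z‖ + ‖z‖ := norm_add_le _ _
        _ ≤ R := by rw [hr] at *; linarith
    refine Complex.norm_iteratedDeriv_le_of_forall_mem_sphere_norm_le n hr0 ?_ ?_
    · refine DifferentiableOn.diffContOnCl_ball (U := Metric.closedBall z r) ?_ subset_rfl
      exact fun w hw => (han w (hball w hw)).differentiableAt.differentiableWithinAt
    · exact fun w hw => hbd w (hball w (Metric.sphere_subset_closedBall hw))
  have hreal : ∀ x : ℝ, AnalyticAt ℂ f x := fun x => hf _ (by simpa using hc.le)
  have hU1 : deriv U = fun x : ℝ => deriv f x := by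
    funext x
    have h1 := (hreal x).differentiableAt.hasDerivAt.comp_ofReal
    rw [show (fun y : ℝ => f y) = U from funext hfU] at h1
    exact h1.deriv
  have hU2 : deriv (deriv U) 0 = deriv (deriv f) 0 := by
    rw [hU1]
    simpa using (hreal 0).deriv.differentiableAt.hasDerivAt.comp_ofReal.deriv
  have hd0 : deriv f 0 = 0 := by
    have := h.hU1deriv
    rw [hU1] at this
    simpa using this
  set A := deriv (deriv f) 0 with hA
  rw [hU2]
  have hit2 : iteratedDeriv 2 f = deriv (deriv f) := by
    simp [iteratedDeriv_succ, iteratedDeriv_zero]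
  have hit3 : iteratedDeriv 3 f = deriv (deriv (deriv f)) := by
    rw [iteratedDeriv_succ, hit2]
  have hrR : r ≤ R := by rw [hr]; linarith
  refine ⟨?_, ?_⟩
  · have := hcauchy 2 0 (by simpa using hr0.le)
    rw [hit2] at this
    simpa [Nat.factorial] using this
  · intro x hx
    have hM : (0 : ℝ) ≤ 6 / r ^ 3 := by positivity
    have e1 : ∀ z : ℂ, ‖z‖ ≤ r → ‖deriv (deriv f) z - A‖ ≤ 6 / r ^ 3 * ‖z‖ ^ 1 := by
      intro z hz
      refine norm_sub_zero_le_of_norm_deriv_le (r := r) (k := 0) hM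
        (fun y hy => (han y (hy.trans hrR)).deriv.deriv.differentiableAt.hasDerivAt) ?_ hz
      intro y hy
      have := hcauchy 3 y hy
      rw [hit3] at this
      simpa [Nat.factorial] using this
    have e2 : ∀ z : ℂ, ‖z‖ ≤ r → ‖deriv f z - A * z‖ ≤ 6 / r ^ 3 * ‖z‖ ^ 2 := by
      intro z hz
      have := norm_sub_zero_le_of_norm_deriv_le (f := fun z => deriv f z - A * z) (r := r) (k := 1) hM
        (fun y hy => (han y (hy.trans hrR)).deriv.differentiableAt.hasDerivAt.sub
          (by simpa using (hasDerivAt_id y).const_mul A)) e1 hz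
      simpa [hd0] using this
    have e3 : ‖f x - A / 2 * (x : ℂ) ^ 2‖ ≤ 6 / r ^ 3 * ‖(x : ℂ)‖ ^ 3 := by
      have := norm_sub_zero_le_of_norm_deriv_le (f := fun z => f z - A / 2 * z ^ 2) (r := r) (k := 2) hM
        (fun y hy => (han y (hy.trans hrR)).differentiableAt.hasDerivAt.sub
          (by
            have h2 := (hasDerivAt_pow 2 y).const_mul (A / 2)
            have h3 : A / 2 * (((2 : ℕ) : ℂ) * y ^ (2 - 1)) = A * y := by norm_num; ring
            rw [h3] at h2
            exact h2)) e2 (z := x) (by simpa using hx)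
      simpa [hf0] using this
    simpa [hfU x] using e3

lemma norm_cexp_neg_sub_cexp_neg_le {a b : ℂ} (ha : 0 ≤ a.re) (hb : 0 ≤ b.re) :
    ‖cexp (-a) - cexp (-b)‖ ≤ ‖a - b‖ := by
  have h := (convex_halfSpace_re_ge 0).norm_image_sub_le_of_norm_hasDerivWithin_le
    (f := fun z => cexp (-z)) (f' := fun z => cexp (-z) * (-1)) (C := 1) (x := b) (y := a)
    (fun z _ => ((Complex.hasDerivAt_exp (-z)).comp z (hasDerivAt_neg z)).hasDerivWithinAt)
    (fun z hz => by
      have hz' : 0 ≤ z.re := hz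
      simpa [Complex.norm_exp] using hz') hb ha
  simpa using h

/-- The consequences of `UHyp` used in the harmonic approximation, with constants depending only
on `C`, `c` and `γ`. -/
lemma UHyp.exists_uniform_bounds {C c γ : ℝ} (hC : 1 ≤ C) (hc : 0 < c) :
    ∃ σ A M : ℝ, 0 < σ ∧ 0 < A ∧ 0 < M ∧ ∀ (ζ : ℂ) (U : ℝ → ℂ), UHyp C c γ ζ U →
      ‖deriv (deriv U) 0‖ ≤ A ∧ 0 ≤ (deriv (deriv U) 0).re ∧ σ ≤ (ζ ^ 2).re ∧
      2 / C ≤ (ζ ^ 2 * deriv (deriv U) 0).re ∧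
      ∀ x : ℝ, ‖cexp (-(U x / 2)) - cexp (-(deriv (deriv U) 0 / 4 * (x : ℂ) ^ 2))‖
        ≤ M * |x| ^ 3 := by
  obtain ⟨r, A, M, hr, hA, hM, H⟩ := UHyp.exists_taylor_bound (γ := γ) hC hc
  refine ⟨2 / C / A, A, M + 2 / r ^ 3, by positivity, hA, by positivity, ?_⟩
  intro ζ U h
  obtain ⟨hUA, hT⟩ := H ζ U h
  have hCpos : 0 < C := by linarith
  set q := deriv (deriv U) 0 with hq
  have hre : 2 / C ≤ q.re := by
    refine le_of_forall_pos_le_add fun ε hε => ?_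
    set x : ℝ := min (min r 1) (ε / (2 * M)) with hx
    have hx0 : 0 < x := by positivity
    have hxr : x ≤ r := (min_le_left _ _).trans (min_le_left _ _)
    have hx1 : x ≤ 1 := (min_le_left _ _).trans (min_le_right _ _)
    have hxε : M * x ≤ ε / 2 := by
      calc M * x ≤ M * (ε / (2 * M)) := by gcongr; exact min_le_right _ _
        _ = ε / 2 := by field_simp
    have h1 := hT x (by rwa [abs_of_pos hx0])
    have h2 := h.hU3 x
    rw [min_eq_right (by nlinarith)] at h2
    have h3 := (re_le_norm _).trans h1
    have h4 : (U x - q / 2 * (x : ℂ) ^ 2).re = (U x).re - q.re / 2 * x ^ 2 := by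
      rw [← ofReal_pow, sub_re, re_mul_ofReal]; simp
    rw [h4, abs_of_pos hx0] at h3
    have h5 : x ^ 2 * (1 / C) ≤ x ^ 2 * (q.re / 2 + M * x) := by nlinarith
    have h6 := le_of_mul_le_mul_left h5 (by positivity)
    have h7 : 2 / C = 2 * (1 / C) := by ring
    linarith
  have hq0 : 0 < q.re := lt_of_lt_of_le (by positivity) hre
  have hζ2 : ‖ζ ^ 2‖ = 1 := by rw [norm_pow, h.hζ, one_pow]
  set a := (ζ ^ 2 * q).re with ha
  have haq : ζ ^ 2 * q = (a : ℂ) := Complex.ext (by simp [ha]) (by simpa using h.hU2im)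
  have hanorm : a = ‖q‖ := by
    have h1 : ‖ζ ^ 2 * q‖ = ‖q‖ := by rw [norm_mul, hζ2, one_mul]
    rw [← h1, haq, norm_real, norm_of_nonneg h.hU2pos.le]
  have hqre : q.re = a * (ζ ^ 2).re := by
    have h1 : q = a * (starRingEnd ℂ) (ζ ^ 2) := by
      rw [← haq, mul_right_comm, Complex.mul_conj, normSq_eq_norm_sq, hζ2]; simp
    rw [h1, re_ofReal_mul, conj_re]
  refine ⟨hUA, hq0.le, ?_, ?_, ?_⟩
  · rw [div_le_iff₀ hA]
    have := h.hζre
    nlinarith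
  · rw [hanorm]
    exact hre.trans (re_le_norm q)
  · intro x
    have hUre : 0 ≤ (U x).re := le_trans (by positivity) (h.hU3 x)
    have h1 : 0 ≤ (U x / 2).re := by
      have : (U x / 2).re = (U x).re / 2 := by simp
      rw [this]; positivity
    have h2 : 0 ≤ (q / 4 * (x : ℂ) ^ 2).re := by
      rw [← ofReal_pow, re_mul_ofReal]
      have : (q / 4).re = q.re / 4 := by simp
      rw [this]; positivity
    have hx3 : 0 ≤ |x| ^ 3 := by positivity
    rcases le_or_gt |x| r with hx | hx
    · refine (norm_cexp_neg_sub_cexp_neg_le h1 h2).trans ?_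
      have e1 : U x / 2 - q / 4 * (x : ℂ) ^ 2 = (1 / 2 : ℂ) * (U x - q / 2 * (x : ℂ) ^ 2) := by ring
      rw [e1, norm_mul]
      have e2 : ‖(1 / 2 : ℂ)‖ = 1 / 2 := by norm_num
      rw [e2]
      have e3 := hT x hx
      have e4 : 0 ≤ 2 / r ^ 3 * |x| ^ 3 := by positivity
      nlinarith [norm_nonneg (U x - q / 2 * (x : ℂ) ^ 2)]
    · have e1 : ‖cexp (-(U x / 2))‖ ≤ 1 := by
        rw [Complex.norm_exp, neg_re, Real.exp_le_one_iff]; linarith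
      have e2 : ‖cexp (-(q / 4 * (x : ℂ) ^ 2))‖ ≤ 1 := by
        rw [Complex.norm_exp, neg_re, Real.exp_le_one_iff]; linarith
      have e3 : 1 ≤ |x| ^ 3 / r ^ 3 := by
        rw [one_le_div (by positivity)]; gcongr
      have e4 : (M + 2 / r ^ 3) * |x| ^ 3 = M * |x| ^ 3 + 2 * (|x| ^ 3 / r ^ 3) := by ring
      have e5 : 0 ≤ M * |x| ^ 3 := by positivity
      rw [e4]
      exact (norm_sub_le _ _).trans (by linarith)

lemma abs_cube_mul_exp_le {α : ℝ} (hα : 0 < α) (x : ℝ) :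
    |x| ^ 3 * rexp (-(α / 4) * x ^ 2) ≤ 8 / (α * √α) := by
  set t := √α * |x| with ht
  have ht0 : 0 ≤ t := by positivity
  have hsq : √α ^ 2 = α := Real.sq_sqrt hα.le
  have ht2 : t ^ 2 = α * x ^ 2 := by rw [ht, mul_pow, hsq, sq_abs]
  have ht3 : t ^ 3 = α * √α * |x| ^ 3 := by
    rw [ht, mul_pow, pow_succ (√α), hsq]
  have h1 : t ^ 3 ≤ 8 * rexp (t ^ 2 / 4) := by
    have := Real.quadratic_le_exp_of_nonneg (x := t ^ 2 / 4) (by positivity)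
    nlinarith [sq_nonneg (t ^ 2 / 2 - t)]
  have h2 : rexp (-(α / 4) * x ^ 2) = (rexp (t ^ 2 / 4))⁻¹ := by
    rw [← Real.exp_neg, ht2]; ring_nf
  rw [h2, ← div_eq_mul_inv, div_le_div_iff₀ (Real.exp_pos _) (by positivity)]
  linarith

lemma sq_mul_exp_le {α : ℝ} (hα : 0 < α) (x : ℝ) :
    x ^ 2 * rexp (-(α / 4) * x ^ 2) ≤ 4 / α := by
  have h1 := Real.add_one_le_exp (α / 4 * x ^ 2)
  have h2 : rexp (-(α / 4) * x ^ 2) = (rexp (α / 4 * x ^ 2))⁻¹ := by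
    rw [← Real.exp_neg]; ring_nf
  rw [h2, ← div_eq_mul_inv, div_le_div_iff₀ (Real.exp_pos _) (by positivity)]
  linarith

lemma norm_integral_le_of_norm_le_gaussian {f : ℝ → ℂ} {p q B x : ℝ} (hq : 0 ≤ q) (hqp : q ≤ p)
    (hp : 0 < p) (hB : 0 ≤ B)
    (hf : ∀ y, ‖f y‖ ≤ B * (rexp (-p * (x - y) ^ 2) * rexp (-q * y ^ 2))) :
    ‖∫ y, f y‖ ≤ B * √(2 * π / p) * rexp (-(q / 4) * x ^ 2) := by
  have hInt : Integrable (fun y : ℝ => rexp (-(p / 2) * (y - x) ^ 2)) :=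
    (integrable_exp_neg_mul_sq (by positivity : 0 < p / 2)).comp_sub_right x
  have hval : ∫ y : ℝ, rexp (-(p / 2) * (y - x) ^ 2) = √(2 * π / p) := by
    rw [integral_sub_right_eq_self (fun y : ℝ => rexp (-(p / 2) * y ^ 2)) x, integral_gaussian]
    congr 1
    field_simp
  have h := norm_integral_le_of_norm_le
    (g := fun y => (B * rexp (-(q / 4) * x ^ 2)) * rexp (-(p / 2) * (y - x) ^ 2))
    (hInt.const_mul _) (Filter.Eventually.of_forall fun y => (hf y).trans (by
      rw [mul_assoc B, ← Real.exp_add, ← Real.exp_add]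
      refine mul_le_mul_of_nonneg_left (Real.exp_le_exp.2 ?_) hB
      nlinarith [mul_nonneg hq (sq_nonneg (x - 2 * y)), mul_nonneg hq (sq_nonneg y),
        mul_nonneg (sub_nonneg.2 hqp) (sq_nonneg (x - y))]))
  rw [integral_const_mul, hval] at h
  linarith

lemma integral_cexp_gaussian_convolution {w s : ℂ} (h : 0 < (w + s).re) (x : ℝ) :
    ∫ y : ℝ, cexp (-w * ((x : ℂ) - y) ^ 2) * cexp (-s * (y : ℂ) ^ 2) =
      ((π : ℂ) / (w + s)) ^ (1 / 2 : ℂ) * cexp (-(s - s ^ 2 / (w + s)) * (x : ℂ) ^ 2) := by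
  have hne : w + s ≠ 0 := fun h0 => by rw [h0] at h; simp at h
  have h1 := integral_cexp_quadratic (b := -(w + s)) (by rw [neg_re]; linarith) (2 * w * x) (-w * x ^ 2)
  rw [neg_neg] at h1
  convert h1 using 2
  · funext y
    rw [← Complex.exp_add]
    ring_nf
  · congr 1
    field_simp
    ring

lemma norm_cpow_half {z : ℂ} (hz : z ≠ 0) : ‖z ^ (1 / 2 : ℂ)‖ = √‖z‖ := by
  rw [Complex.norm_cpow_of_ne_zero hz, Real.sqrt_eq_rpow]
  simp

set_option maxHeartbeats 1000000 in
/-- Quasi-mode estimate: if `e` agrees with `exp (-b x ^ 2)` to third order, the Gaussian of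
parameter `α` with `α ^ 2 = 2 w b` is an approximate eigenfunction of the operator with kernel
`e x * exp (-w (x - y) ^ 2) * e y`. -/
lemma exists_quasimode_bound {σ k L A M : ℝ} (hσ : 0 < σ) (hk : 0 < k) (hL : 0 < L) (hA : 0 < A)
    (hM : 0 < M) :
    ∃ D W₀ : ℝ, 0 < D ∧ 1 ≤ W₀ ∧ ∀ (W α : ℝ) (w b : ℂ) (e : ℝ → ℂ), W₀ ≤ W →
      σ * W ^ 2 ≤ w.re → k * W ≤ α → α ≤ L * W → ‖b‖ ≤ A → 0 ≤ b.re →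
      (α : ℂ) ^ 2 = 2 * w * b → Continuous e → (∀ x, ‖e x‖ ≤ 1) →
      (∀ x : ℝ, ‖e x - cexp (-(b * (x : ℂ) ^ 2))‖ ≤ M * |x| ^ 3) →
      ∃ ev : ℂ, ∀ x : ℝ,
        ‖(∫ y : ℝ, e x * cexp (-w * ((x : ℂ) - y) ^ 2) * e y * cexp (-(α : ℂ) * (y : ℂ) ^ 2)) -
            ev * cexp (-(α : ℂ) * (x : ℂ) ^ 2)‖ ≤
          D / (W ^ 2 * √W) * rexp (-(α / 16) * x ^ 2) := by
  refine ⟨M * (8 / (k * √k)) * √(2 * π / σ) +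
      √(π / σ) * (M * (8 / (k * √k)) + A ^ 2 / σ * (4 / k)),
    max 1 (max (L / σ) (2 * ((A + L) ^ 2 / σ) / k)), by positivity, le_max_left _ _, ?_⟩
  intro W α w b e hW hw hkα hαL hbA hb hαw he he1 hee
  have hW1 : 1 ≤ W := (le_max_left _ _).trans hW
  have hW2 : L / σ ≤ W := ((le_max_left _ _).trans (le_max_right _ _)).trans hW
  have hW3 : 2 * ((A + L) ^ 2 / σ) / k ≤ W := ((le_max_right _ _).trans (le_max_right _ _)).trans hW
  rw [div_le_iff₀ hσ] at hW2
  rw [div_le_iff₀ hk] at hW3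
  have hW0 : 0 < W := by linarith
  have hα : 0 < α := lt_of_lt_of_le (by positivity) hkα
  have hσW : 0 < σ * W ^ 2 := by positivity
  set p := w.re with hp
  have hp0 : 0 < p := by linarith
  have hαp : α ≤ p := by nlinarith
  set s : ℂ := b + α with hs
  have hwsre : σ * W ^ 2 ≤ (w + s).re := by
    simp only [hs, add_re, ofReal_re]; linarith
  have hwsnorm : σ * W ^ 2 ≤ ‖w + s‖ := hwsre.trans (re_le_norm _)
  have hws0 : w + s ≠ 0 := norm_pos_iff.1 (hσW.trans_le hwsnorm)
  have hsnorm : ‖s‖ ≤ (A + L) * W := by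
    calc ‖s‖ ≤ ‖b‖ + ‖(α : ℂ)‖ := norm_add_le _ _
      _ ≤ A + L * W := by rw [norm_real, norm_of_nonneg hα.le]; gcongr
      _ ≤ (A + L) * W := by nlinarith
  set ρ : ℂ := s ^ 2 / (w + s) with hρ
  have hρnorm : ‖ρ‖ ≤ (A + L) ^ 2 / σ := by
    rw [hρ, norm_div, norm_pow]
    calc ‖s‖ ^ 2 / ‖w + s‖ ≤ ((A + L) * W) ^ 2 / (σ * W ^ 2) := by gcongr
      _ = (A + L) ^ 2 / σ := by field_simp
  have hρα : ‖ρ‖ ≤ α / 2 := by linarith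
  -- the defect of the exponent
  have hdef : b + (s - ρ) - α = b ^ 2 / (w + s) := by
    rw [hρ]
    field_simp
    rw [hs]
    linear_combination -hαw
  have hdefnorm : ‖b ^ 2 / (w + s)‖ ≤ A ^ 2 / (σ * W ^ 2) := by
    rw [norm_div, norm_pow]; gcongr
  set ev : ℂ := ((π : ℂ) / (w + s)) ^ (1 / 2 : ℂ) with hev
  have hsqW : ∀ a : ℝ, √(a / W ^ 2) = √a / W := fun a => by
    rw [Real.sqrt_div' _ (sq_nonneg W), Real.sqrt_sq hW0.le]
  have hevnorm : ‖ev‖ ≤ √(π / σ) / W := by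
    rw [hev, norm_cpow_half (div_ne_zero (by exact_mod_cast Real.pi_ne_zero) hws0), norm_div,
      norm_real, norm_of_nonneg Real.pi_pos.le]
    rw [← hsqW, div_div]
    gcongr
  have hα32 : 8 / (α * √α) ≤ 8 / (k * √k) / (W * √W) := by
    have h1 : √k * √W ≤ √α := by
      rw [← Real.sqrt_mul hk.le]; exact Real.sqrt_le_sqrt hkα
    have h2 : (k * √k) * (W * √W) ≤ α * √α := by
      calc (k * √k) * (W * √W) = (k * W) * (√k * √W) := by ring
        _ ≤ α * √α := by gcongr
    rw [div_div]
    gcongr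
  have hE : ∀ (z : ℂ) (x : ℝ), ‖cexp (-z * (x : ℂ) ^ 2)‖ = rexp (-z.re * x ^ 2) := by
    intro z x
    rw [Complex.norm_exp, ← ofReal_pow, re_mul_ofReal, neg_re]
  have hG : ∀ x y : ℝ, ‖cexp (-w * ((x : ℂ) - y) ^ 2)‖ = rexp (-p * (x - y) ^ 2) := by
    intro x y
    rw [← ofReal_sub, hE]
  have hGle : ∀ x y : ℝ, ‖cexp (-w * ((x : ℂ) - y) ^ 2)‖ ≤ 1 := by
    intro x y
    rw [hG, Real.exp_le_one_iff]
    nlinarith [mul_nonneg hp0.le (sq_nonneg (x - y))]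
  refine ⟨ev, fun x => ?_⟩
  have hdom : ∀ f : ℝ → ℂ, Continuous f → (∀ y, ‖f y‖ ≤ 1) →
      Integrable (fun y : ℝ => cexp (-w * ((x : ℂ) - y) ^ 2) * (f y * cexp (-(α : ℂ) * (y : ℂ) ^ 2))) := by
    intro f hf hf1
    refine (integrable_exp_neg_mul_sq hα).mono' (by fun_prop) (Filter.Eventually.of_forall fun y => ?_)
    rw [norm_mul, norm_mul, hE, ofReal_re]
    have h1 := hGle x y
    have h2 := hf1 y
    calc _ ≤ 1 * (1 * rexp (-α * y ^ 2)) := by gcongr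
      _ = _ := by ring
  have hbexp : ∀ y : ℝ, ‖cexp (-(b * (y : ℂ) ^ 2))‖ ≤ 1 := by
    intro y
    rw [← neg_mul, hE, Real.exp_le_one_iff]
    nlinarith [mul_nonneg hb (sq_nonneg y)]
  have hI1 := hdom e he he1
  have hI2 := hdom (fun y => cexp (-(b * (y : ℂ) ^ 2))) (by fun_prop) hbexp
  have hexact : ∫ y : ℝ, cexp (-w * ((x : ℂ) - y) ^ 2) *
      (cexp (-(b * (y : ℂ) ^ 2)) * cexp (-(α : ℂ) * (y : ℂ) ^ 2)) =
      ev * cexp (-(s - ρ) * (x : ℂ) ^ 2) := by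
    rw [← integral_cexp_gaussian_convolution (hσW.trans_le hwsre) x]
    congr 1
    funext y
    rw [← Complex.exp_add (-(b * (y : ℂ) ^ 2)), hs]
    ring_nf
  have hsplit : (∫ y : ℝ, e x * cexp (-w * ((x : ℂ) - y) ^ 2) * e y * cexp (-(α : ℂ) * (y : ℂ) ^ 2)) -
      ev * cexp (-(α : ℂ) * (x : ℂ) ^ 2) =
      e x * (∫ y : ℝ, cexp (-w * ((x : ℂ) - y) ^ 2) *
        ((e y - cexp (-(b * (y : ℂ) ^ 2))) * cexp (-(α : ℂ) * (y : ℂ) ^ 2))) +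
      ev * (e x * cexp (-(s - ρ) * (x : ℂ) ^ 2) - cexp (-(α : ℂ) * (x : ℂ) ^ 2)) := by
    have h1 : (∫ y : ℝ, cexp (-w * ((x : ℂ) - y) ^ 2) *
        ((e y - cexp (-(b * (y : ℂ) ^ 2))) * cexp (-(α : ℂ) * (y : ℂ) ^ 2))) =
        (∫ y : ℝ, cexp (-w * ((x : ℂ) - y) ^ 2) * (e y * cexp (-(α : ℂ) * (y : ℂ) ^ 2))) -
          ev * cexp (-(s - ρ) * (x : ℂ) ^ 2) := by
      rw [← hexact, ← integral_sub hI1 hI2]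
      congr 1; funext y; ring
    have h2 : (∫ y : ℝ, e x * cexp (-w * ((x : ℂ) - y) ^ 2) * e y * cexp (-(α : ℂ) * (y : ℂ) ^ 2)) =
        e x * ∫ y : ℝ, cexp (-w * ((x : ℂ) - y) ^ 2) * (e y * cexp (-(α : ℂ) * (y : ℂ) ^ 2)) := by
      rw [← integral_const_mul]
      congr 1; funext y; ring
    rw [h1, h2]; ring
  have hcube : ∀ y : ℝ, |y| ^ 3 * rexp (-(α / 4) * y ^ 2) ≤ 8 / (k * √k) / (W * √W) :=
    fun y => (abs_cube_mul_exp_le hα y).trans hα32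
  have hfirst : ‖∫ y : ℝ, cexp (-w * ((x : ℂ) - y) ^ 2) *
        ((e y - cexp (-(b * (y : ℂ) ^ 2))) * cexp (-(α : ℂ) * (y : ℂ) ^ 2))‖ ≤
      (M * (8 / (k * √k) / (W * √W))) * √(2 * π / p) * rexp (-(α / 4 / 4) * x ^ 2) := by
    refine norm_integral_le_of_norm_le_gaussian (by positivity) (by linarith) hp0 (by positivity)
      fun y => ?_
    rw [norm_mul, norm_mul, hG, hE, ofReal_re]
    have h1 : rexp (-α * y ^ 2) ≤ rexp (-(α / 4) * y ^ 2) * rexp (-(α / 4) * y ^ 2) := by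
      rw [← Real.exp_add]
      gcongr
      nlinarith [mul_nonneg hα.le (sq_nonneg y)]
    calc _ ≤ rexp (-p * (x - y) ^ 2) * ((M * |y| ^ 3) *
          (rexp (-(α / 4) * y ^ 2) * rexp (-(α / 4) * y ^ 2))) := by
            gcongr
            exact hee y
      _ = M * (|y| ^ 3 * rexp (-(α / 4) * y ^ 2)) *
          (rexp (-p * (x - y) ^ 2) * rexp (-(α / 4) * y ^ 2)) := by ring
      _ ≤ _ := by
        gcongr
        exact hcube y
  have hsqrtp : √(2 * π / p) ≤ √(2 * π / σ) / W := by
    rw [← hsqW, div_div]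
    gcongr
  have hsecond : ‖e x * cexp (-(s - ρ) * (x : ℂ) ^ 2) - cexp (-(α : ℂ) * (x : ℂ) ^ 2)‖ ≤
      (M * (8 / (k * √k) / (W * √W)) + A ^ 2 / (σ * W ^ 2) * (4 / α)) *
        rexp (-(α / 16) * x ^ 2) := by
    set τ : ℂ := s - ρ - (α / 2 : ℝ) with hτ
    have hτre : 0 ≤ τ.re := by
      simp only [hτ, hs, sub_re, add_re, ofReal_re]
      have := (re_le_norm ρ).trans hρα
      linarith
    have hfac : e x * cexp (-(s - ρ) * (x : ℂ) ^ 2) - cexp (-(α : ℂ) * (x : ℂ) ^ 2) =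
        cexp (-((α / 2 : ℝ) : ℂ) * (x : ℂ) ^ 2) *
        ((e x - cexp (-(b * (x : ℂ) ^ 2))) * cexp (-τ * (x : ℂ) ^ 2) +
          (cexp (-((b + τ) * (x : ℂ) ^ 2)) - cexp (-(((α / 2 : ℝ) : ℂ) * (x : ℂ) ^ 2)))) := by
      have h1 : cexp (-(s - ρ) * (x : ℂ) ^ 2) =
          cexp (-((α / 2 : ℝ) : ℂ) * (x : ℂ) ^ 2) * cexp (-τ * (x : ℂ) ^ 2) := by
        rw [← Complex.exp_add, hτ]; ring_nf
      have h2 : cexp (-(α : ℂ) * (x : ℂ) ^ 2) = cexp (-((α / 2 : ℝ) : ℂ) * (x : ℂ) ^ 2) *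
          cexp (-(((α / 2 : ℝ) : ℂ) * (x : ℂ) ^ 2)) := by
        rw [← Complex.exp_add]; push_cast; ring_nf
      have h3 : cexp (-((b + τ) * (x : ℂ) ^ 2)) =
          cexp (-(b * (x : ℂ) ^ 2)) * cexp (-τ * (x : ℂ) ^ 2) := by
        rw [← Complex.exp_add]; ring_nf
      rw [h1, h2, h3]; ring
    have hτ1 : ‖cexp (-τ * (x : ℂ) ^ 2)‖ ≤ 1 := by
      rw [hE, Real.exp_le_one_iff]
      nlinarith [mul_nonneg hτre (sq_nonneg x)]
    have hdiff : ‖cexp (-((b + τ) * (x : ℂ) ^ 2)) - cexp (-(((α / 2 : ℝ) : ℂ) * (x : ℂ) ^ 2))‖ ≤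
        A ^ 2 / (σ * W ^ 2) * x ^ 2 := by
      refine (norm_cexp_neg_sub_cexp_neg_le ?_ ?_).trans ?_
      · rw [← ofReal_pow, re_mul_ofReal, add_re]; positivity
      · rw [← ofReal_pow, re_mul_ofReal, ofReal_re]; positivity
      · have h1 : (b + τ) * (x : ℂ) ^ 2 - ((α / 2 : ℝ) : ℂ) * (x : ℂ) ^ 2 =
            b ^ 2 / (w + s) * ((x ^ 2 : ℝ) : ℂ) := by
          rw [← hdef, hτ]; push_cast; ring
        rw [h1, norm_mul, norm_real, norm_of_nonneg (sq_nonneg x)]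
        gcongr
    rw [hfac, norm_mul, hE, ofReal_re]
    have h1 : rexp (-(α / 2) * x ^ 2) = rexp (-(α / 4) * x ^ 2) * rexp (-(α / 4) * x ^ 2) := by
      rw [← Real.exp_add]; ring_nf
    have h2 : rexp (-(α / 4) * x ^ 2) ≤ rexp (-(α / 16) * x ^ 2) := by
      gcongr
      linarith
    have h3 : ‖(e x - cexp (-(b * (x : ℂ) ^ 2))) * cexp (-τ * (x : ℂ) ^ 2) +
          (cexp (-((b + τ) * (x : ℂ) ^ 2)) - cexp (-(((α / 2 : ℝ) : ℂ) * (x : ℂ) ^ 2)))‖ ≤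
        M * |x| ^ 3 + A ^ 2 / (σ * W ^ 2) * x ^ 2 := by
      refine (norm_add_le _ _).trans (add_le_add ?_ hdiff)
      rw [norm_mul]
      calc _ ≤ (M * |x| ^ 3) * 1 := by gcongr; exact hee x
        _ = _ := mul_one _
    calc _ ≤ (rexp (-(α / 4) * x ^ 2) * rexp (-(α / 4) * x ^ 2)) *
          (M * |x| ^ 3 + A ^ 2 / (σ * W ^ 2) * x ^ 2) := by rw [h1]; gcongr
      _ = (M * (|x| ^ 3 * rexp (-(α / 4) * x ^ 2)) +
          A ^ 2 / (σ * W ^ 2) * (x ^ 2 * rexp (-(α / 4) * x ^ 2))) *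
            rexp (-(α / 4) * x ^ 2) := by ring
      _ ≤ _ := by
        gcongr
        · exact hcube x
        · exact sq_mul_exp_le hα x
  have hsmall : A ^ 2 / (σ * W ^ 2) * (4 / α) ≤ A ^ 2 / σ * (4 / k) / (W * √W) := by
    have hs1 : √W ≤ W := by
      rw [Real.sqrt_le_left hW0.le]; nlinarith
    have h1 : W * √W ≤ W ^ 2 * W := by
      calc W * √W ≤ W * W := by gcongr
        _ ≤ W ^ 2 * W := by nlinarith
    calc A ^ 2 / (σ * W ^ 2) * (4 / α) ≤ A ^ 2 / (σ * W ^ 2) * (4 / (k * W)) := by gcongr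
      _ = A ^ 2 / σ * (4 / k) / (W ^ 2 * W) := by field_simp
      _ ≤ _ := by gcongr
  rw [hsplit]
  refine (norm_add_le _ _).trans ?_
  rw [norm_mul, norm_mul]
  have hex := he1 x
  have h16 : α / 4 / 4 = α / 16 := by ring
  rw [h16] at hfirst
  calc _ ≤ 1 * ((M * (8 / (k * √k) / (W * √W))) * (√(2 * π / σ) / W) * rexp (-(α / 16) * x ^ 2)) +
      (√(π / σ) / W) * ((M * (8 / (k * √k) / (W * √W)) + A ^ 2 / σ * (4 / k) / (W * √W)) *
        rexp (-(α / 16) * x ^ 2)) := by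
        gcongr
        · exact hfirst.trans (by gcongr)
        · exact hsecond.trans (by gcongr)
    _ = _ := by
      have : √W ≠ 0 := by positivity
      field_simp

lemma norm_gaussF {α : ℝ} (hα : 0 < α) (x : ℝ) :
    ‖gaussF α x‖ = (2 * α / π) ^ (1 / 4 : ℝ) * rexp (-α * x ^ 2) := by
  rw [gaussF, norm_mul, norm_real, norm_of_nonneg (by positivity), Complex.norm_exp, ← ofReal_pow,
    re_mul_ofReal, neg_re, ofReal_re]

lemma conj_gaussF (α x : ℝ) : (starRingEnd ℂ) (gaussF α x) = gaussF α x := by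
  rw [gaussF, map_mul, conj_ofReal, ← Complex.exp_conj]
  simp

lemma continuous_gaussF (α : ℝ) : Continuous (gaussF α) := by
  unfold gaussF
  fun_prop

lemma norm_gaussF_sq {α : ℝ} (hα : 0 < α) (x : ℝ) :
    ‖gaussF α x‖ ^ 2 = √(2 * α / π) * rexp (-(2 * α) * x ^ 2) := by
  have h : 0 ≤ 2 * α / π := by positivity
  rw [norm_gaussF hα, mul_pow, ← Real.exp_nat_mul, ← Real.rpow_natCast, ← Real.rpow_mul h,
    Real.sqrt_eq_rpow]
  congr 2 <;> push_cast <;> ring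

lemma memLp_gaussF {α : ℝ} (hα : 0 < α) : MemLp (gaussF α) 2 volume := by
  rw [memLp_two_iff_integrable_sq_norm (continuous_gaussF α).aestronglyMeasurable]
  simp_rw [norm_gaussF_sq hα]
  exact (integrable_exp_neg_mul_sq (by positivity)).const_mul _

lemma norm_eq_one_of_ae_eq_gaussF {α : ℝ} (hα : 0 < α) {g : Hsp}
    (hg : ∀ᵐ x : ℝ, (g : ℝ → ℂ) x = gaussF α x) : ‖g‖ = 1 := by
  have h1 : ((‖g‖ ^ 2 : ℝ) : ℂ) = 1 := by
    have h2 : inner ℂ g g = ((‖g‖ ^ 2 : ℝ) : ℂ) := by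
      rw [inner_self_eq_norm_sq_to_K]; push_cast; rfl
    rw [← h2, L2.inner_def]
    have h3 : ∫ x : ℝ, inner ℂ ((g : ℝ → ℂ) x) ((g : ℝ → ℂ) x) =
        ∫ x : ℝ, ((√(2 * α / π) * rexp (-(2 * α) * x ^ 2) : ℝ) : ℂ) := by
      refine integral_congr_ae ?_
      filter_upwards [hg] with x hx
      rw [hx, inner_self_eq_norm_sq_to_K, ← norm_gaussF_sq hα]
      push_cast; rfl
    rw [h3, integral_complex_ofReal, integral_const_mul, integral_gaussian, ← Real.sqrt_mul (by positivity)]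
    have h4 : 2 * α / π * (π / (2 * α)) = 1 := by
      have := Real.pi_pos
      field_simp
    rw [h4]; simp
  have h5 : ‖g‖ ^ 2 = 1 := by exact_mod_cast h1
  nlinarith [norm_nonneg g]

/-- An `L²` function dominated by a wider Gaussian has norm controlled by the prefactor. -/
lemma norm_le_of_ae_le_gaussian {α B : ℝ} (hα : 0 < α) {u : Hsp}
    (hu : ∀ᵐ x : ℝ, ‖(u : ℝ → ℂ) x‖ ≤
      (2 * α / π) ^ (1 / 4 : ℝ) * (B * rexp (-(α / 16) * x ^ 2))) : ‖u‖ ≤ 2 * B := by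
  have hα' : 0 < α / 16 := by positivity
  set G : Hsp := (memLp_gaussF hα').toLp _ with hG
  have hGae : ∀ᵐ x : ℝ, (G : ℝ → ℂ) x = gaussF (α / 16) x := (memLp_gaussF hα').coeFn_toLp
  have h := Lp.norm_le_mul_norm_of_ae_le_mul (c := 2 * B) (f := u) (g := G) (by
    filter_upwards [hu, hGae] with x hx hGx
    rw [hGx, norm_gaussF hα']
    refine hx.trans (le_of_eq ?_)
    have h1 : (2 * α / π) ^ (1 / 4 : ℝ) = 2 * (2 * (α / 16) / π) ^ (1 / 4 : ℝ) := by
      have h2 : (2 : ℝ) = (16 : ℝ) ^ (1 / 4 : ℝ) := by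
        rw [show (16 : ℝ) = 2 ^ (4 : ℝ) by norm_num, ← Real.rpow_mul (by norm_num)]
        norm_num
      nth_rw 2 [h2]
      rw [← Real.mul_rpow (by norm_num) (by positivity)]
      congr 1; ring
    rw [h1]; ring)
  rwa [norm_eq_one_of_ae_eq_gaussF hα' hGae, mul_one] at h

lemma norm_projP_le_norm_sub_smul {g : Hsp} (hg : ‖g‖ = 1) (u : Hsp) (a : ℂ) :
    ‖projP g u‖ ≤ ‖u - a • g‖ := by
  have hgg : inner ℂ g g = (1 : ℂ) := by
    rw [inner_self_eq_norm_sq_to_K, hg]; simp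
  have happ : ∀ v : Hsp, projP g v = v - (inner ℂ g v : ℂ) • g := fun v => rfl
  have h1 : projP g u = projP g (u - a • g) := by
    rw [map_sub, map_smul, happ g, hgg, one_smul, sub_self, smul_zero, sub_zero]
  rw [h1, happ]
  set v := u - a • g
  have h2 := norm_sub_sq (𝕜 := ℂ) v ((inner ℂ g v : ℂ) • g)
  have h3 : RCLike.re (inner ℂ v ((inner ℂ g v : ℂ) • g)) = ‖(inner ℂ g v : ℂ)‖ ^ 2 := by
    rw [inner_smul_right, ← inner_conj_symm v g, RCLike.mul_conj]
    norm_cast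
  rw [h3, norm_smul, hg, mul_one] at h2
  refine le_of_sq_le_sq ?_ (norm_nonneg _)
  nlinarith [sq_nonneg ‖(inner ℂ g v : ℂ)‖]

/-- For a symmetric kernel, the adjoint acts on real functions as the complex conjugate. -/
lemma adjoint_apply_eq_star {k : ℝ → ℝ → ℂ} {K : Hsp →L[ℂ] Hsp} (hK : IsKerOp k K)
    (hk : ∀ x y, k x y = k y x) {g : Hsp}
    (hg : ∀ᵐ x : ℝ, (starRingEnd ℂ) ((g : ℝ → ℂ) x) = (g : ℝ → ℂ) x)
    (hInt : ∀ h : Hsp, Integrable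
      (Function.uncurry fun x y : ℝ => (g : ℝ → ℂ) x * (k x y * (h : ℝ → ℂ) y))
      ((volume : Measure ℝ).prod volume)) :
    ContinuousLinearMap.adjoint K g = star (K g) := by
  refine ext_inner_right ℂ fun h => ?_
  rw [ContinuousLinearMap.adjoint_inner_left, L2.inner_def, L2.inner_def]
  have h1 : ∫ x : ℝ, inner ℂ ((g : ℝ → ℂ) x) ((K h : ℝ → ℂ) x) =
      ∫ x : ℝ, ∫ y : ℝ, (g : ℝ → ℂ) x * (k x y * (h : ℝ → ℂ) y) := by
    refine integral_congr_ae ?_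
    filter_upwards [hg, hK h] with x hgx hKx
    rw [hKx, RCLike.inner_apply, hgx, integral_const_mul, mul_comm]
  have h2 : ∫ y : ℝ, inner ℂ ((star (K g) : Hsp) y) ((h : ℝ → ℂ) y) =
      ∫ y : ℝ, ∫ x : ℝ, (g : ℝ → ℂ) x * (k x y * (h : ℝ → ℂ) y) := by
    refine integral_congr_ae ?_
    filter_upwards [hK g, Lp.coeFn_star (K g)] with y hKy hsy
    rw [hsy, Pi.star_apply, RCLike.inner_apply, RCLike.star_def, RCLike.conj_conj, hKy,
      ← integral_const_mul]
    congr 1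
    funext x
    rw [hk y x]
    ring
  rw [h1, h2]
  exact integral_integral_swap (hInt h)

lemma integrable_gaussF_mul_kernel {α p : ℝ} (hα : 0 < α) (hp : 0 < p) {k : ℝ → ℝ → ℂ}
    (hkc : Continuous (Function.uncurry k))
    (hkb : ∀ x y, ‖k x y‖ ≤ rexp (-p * (x - y) ^ 2)) {g : Hsp}
    (hg : ∀ᵐ x : ℝ, (g : ℝ → ℂ) x = gaussF α x) (h : Hsp) :
    Integrable (Function.uncurry fun x y : ℝ => (g : ℝ → ℂ) x * (k x y * (h : ℝ → ℂ) y))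
      ((volume : Measure ℝ).prod volume) := by
  set q := min α p / 3 with hq
  have hq0 : 0 < q := by positivity
  have hqα : 3 * q ≤ α := by rw [hq]; linarith [min_le_left α p]
  have hqp : 3 * q ≤ p := by rw [hq]; linarith [min_le_right α p]
  set N : ℝ := (2 * α / π) ^ (1 / 4 : ℝ) with hN
  have hN0 : 0 ≤ N := by positivity
  have hi1 : Integrable (fun x : ℝ => N * rexp (-q * x ^ 2)) :=
    (integrable_exp_neg_mul_sq hq0).const_mul _
  have hi2 : Integrable (fun y : ℝ => ‖gaussF q y * (h : ℝ → ℂ) y‖) :=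
    ((memLp_gaussF hq0).integrable_mul (Lp.memLp h)).norm
  set N' : ℝ := (2 * q / π) ^ (1 / 4 : ℝ) with hN'
  have hN'0 : 0 < N' := by positivity
  have hi := hi1.mul_prod (hi2.const_mul N'⁻¹)
  refine hi.mono' ?_ ?_
  · exact (Lp.aestronglyMeasurable g).comp_fst.mul
      (hkc.aestronglyMeasurable.mul (Lp.aestronglyMeasurable h).comp_snd)
  · have hg' : ∀ᵐ z : ℝ × ℝ ∂((volume : Measure ℝ).prod volume),
        (g : ℝ → ℂ) z.1 = gaussF α z.1 := Measure.quasiMeasurePreserving_fst.ae hg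
    filter_upwards [hg'] with z hz
    obtain ⟨x, y⟩ := z
    simp only [Function.uncurry_apply_pair] at hz ⊢
    rw [hz, norm_mul, norm_mul, norm_mul, norm_gaussF hα, norm_gaussF hq0, ← hN, ← hN']
    have hexp : rexp (-α * x ^ 2) * rexp (-p * (x - y) ^ 2) ≤
        rexp (-q * x ^ 2) * rexp (-q * y ^ 2) := by
      rw [← Real.exp_add, ← Real.exp_add]
      refine Real.exp_le_exp.2 ?_
      nlinarith [mul_nonneg (sub_nonneg.2 hqα) (sq_nonneg x),
        mul_nonneg (sub_nonneg.2 hqp) (sq_nonneg (x - y)),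
        mul_nonneg hq0.le (sq_nonneg (3 * x - 2 * y)), mul_nonneg hq0.le (sq_nonneg x),
        mul_nonneg hq0.le (sq_nonneg y), mul_nonneg hq0.le (sq_nonneg (5 * x - 3 * y))]
    calc _ ≤ N * rexp (-α * x ^ 2) * (rexp (-p * (x - y) ^ 2) * ‖(h : ℝ → ℂ) y‖) := by
          gcongr
          exact hkb x y
      _ = N * ‖(h : ℝ → ℂ) y‖ * (rexp (-α * x ^ 2) * rexp (-p * (x - y) ^ 2)) := by ring
      _ ≤ N * ‖(h : ℝ → ℂ) y‖ * (rexp (-q * x ^ 2) * rexp (-q * y ^ 2)) := by gcongr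
      _ = _ := by field_simp

/-- the off-diagonal blocks of the normalized operator `μ⁻¹K` are
`O(W^{−1−δ})`: namely `‖P K g_α‖ ≤ C'·W^{−1−δ}·|μ|` and `‖P K* g_α‖ ≤ C'·W^{−1−δ}·|μ|`. -/
theorem stmt_1 :
    ∀ (C c γ : ℝ), 1 ≤ C → 0 < c → 1 < γ →
    ∃ δ : ℝ, 0 < δ ∧ ∃ C' : ℝ, 0 < C' ∧ ∃ W₀ : ℝ, 0 < W₀ ∧
    ∀ (W : ℝ) (ζ : ℂ) (U : ℝ → ℂ), W₀ ≤ W → UHyp C c γ ζ U →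
    ∀ K : Hsp →L[ℂ] Hsp, IsKerOp (kerK W ζ U) K →
    ∀ g : Hsp, (∀ᵐ x : ℝ, (g : ℝ → ℂ) x = gaussF (alph W ζ U) x) →
    ‖projP g (K g)‖ ≤ C' * W ^ (-1 - δ) * ‖muK W ζ U‖ ∧
    ‖projP g (ContinuousLinearMap.adjoint K g)‖ ≤ C' * W ^ (-1 - δ) * ‖muK W ζ U‖ := by
  intro C c γ hC hc _
  obtain ⟨σ, A, M, hσ, hA, hM, hbounds⟩ := UHyp.exists_uniform_bounds (γ := γ) hC hc
  have hCpos : 0 < C := by linarith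
  set k : ℝ := √(1 / C) with hk
  set L : ℝ := √(A / 2) with hL
  have hk0 : 0 < k := by positivity
  have hL0 : 0 < L := by positivity
  obtain ⟨D, W₀, hD, hW₀, hquasi⟩ := exists_quasimode_bound hσ hk0 hL0 hA hM
  refine ⟨1 / 2, by norm_num, 2 * D * √(1 + L), by positivity, W₀, by linarith, ?_⟩
  intro W ζ U hW hU K hK g hg
  obtain ⟨hqA, hqre, hσζ, haC, hexp⟩ := hbounds ζ U hU
  set q := deriv (deriv U) 0 with hq
  set α := alph W ζ U with hα
  set a := (ζ ^ 2 * q).re with ha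
  have hW1 : 1 ≤ W := hW₀.trans hW
  have hW0 : 0 < W := by linarith
  have hζ2 : ‖ζ ^ 2‖ = 1 := by rw [norm_pow, hU.hζ, one_pow]
  have haq : ζ ^ 2 * q = (a : ℂ) := Complex.ext (by simp [ha]) (by simpa using hU.hU2im)
  have haA : a ≤ A := by
    refine (re_le_norm _).trans ?_
    rwa [norm_mul, hζ2, one_mul]
  have hαdef : α = W * √(a / 2) := rfl
  have hkα : k * W ≤ α := by
    rw [hαdef, mul_comm k]
    have : 1 / C ≤ a / 2 := by
      have h7 : 2 / C = 2 * (1 / C) := by ring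
      linarith
    exact mul_le_mul_of_nonneg_left (Real.sqrt_le_sqrt this) hW0.le
  have hαL : α ≤ L * W := by
    rw [hαdef, mul_comm]
    exact mul_le_mul_of_nonneg_right (Real.sqrt_le_sqrt (by linarith)) hW0.le
  have hα0 : 0 < α := lt_of_lt_of_le (by positivity) hkα
  set w : ℂ := (W : ℂ) ^ 2 * ζ ^ 2 with hw
  have hwre : w.re = W ^ 2 * (ζ ^ 2).re := by
    rw [hw, ← ofReal_pow, re_ofReal_mul]
  have hwσ : σ * W ^ 2 ≤ w.re := by
    rw [hwre, mul_comm]; gcongr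
  have hw0 : 0 < w.re := lt_of_lt_of_le (by positivity) hwσ
  have hwnorm : ‖w‖ = W ^ 2 := by
    rw [hw, norm_mul, hζ2, norm_pow, norm_real, norm_of_nonneg hW0.le, mul_one]
  have hαw : (α : ℂ) ^ 2 = 2 * w * (q / 4) := by
    have h1 : α ^ 2 = W ^ 2 * (a / 2) := by
      rw [hαdef, mul_pow, Real.sq_sqrt (by linarith [hU.hU2pos])]
    have h2 : 2 * w * (q / 4) = (W : ℂ) ^ 2 * (ζ ^ 2 * q) / 2 := by rw [hw]; ring
    rw [h2, haq, ← ofReal_pow, h1]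
    push_cast; ring
  have hUcont : Continuous U := hU.hU1smooth.continuous
  have hUre : ∀ x, 0 ≤ (U x).re := fun x => le_trans (by positivity) (hU.hU3 x)
  set e : ℝ → ℂ := fun x => cexp (-(U x / 2)) with he
  have hcont_e : Continuous e := by fun_prop
  have hnorm_e : ∀ x, ‖e x‖ ≤ 1 := by
    intro x
    have h1 : (U x / 2).re = (U x).re / 2 := by simp
    rw [he, Complex.norm_exp, neg_re, Real.exp_le_one_iff, h1]
    linarith [hUre x]
  have hker : ∀ x y : ℝ, kerK W ζ U x y = e x * cexp (-w * ((x : ℂ) - y) ^ 2) * e y := by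
    intro x y
    rw [he, kerK, hw, ← Complex.exp_add, ← Complex.exp_add]
    ring_nf
  have hkerc : Continuous (Function.uncurry (kerK W ζ U)) := by
    have : Function.uncurry (kerK W ζ U) =
        fun z : ℝ × ℝ => e z.1 * cexp (-w * ((z.1 : ℂ) - z.2) ^ 2) * e z.2 := by
      funext z; exact hker z.1 z.2
    rw [this]
    fun_prop
  have hkerb : ∀ x y, ‖kerK W ζ U x y‖ ≤ rexp (-w.re * (x - y) ^ 2) := by
    intro x y
    have h1 : ‖cexp (-w * ((x : ℂ) - y) ^ 2)‖ = rexp (-w.re * (x - y) ^ 2) := by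
      rw [Complex.norm_exp, ← ofReal_sub, ← ofReal_pow, re_mul_ofReal, neg_re]
    rw [hker, norm_mul, norm_mul, h1]
    have h2 := hnorm_e x
    have h3 := hnorm_e y
    calc _ ≤ 1 * rexp (-w.re * (x - y) ^ 2) * 1 := by gcongr
      _ = _ := by ring
  have hkersymm : ∀ x y, kerK W ζ U x y = kerK W ζ U y x := by
    intro x y
    rw [kerK, kerK]; ring_nf
  have hqA4 : ‖q / 4‖ ≤ A := by
    rw [norm_div]
    norm_num
    linarith
  have hqre4 : 0 ≤ (q / 4).re := by
    have : (q / 4).re = q.re / 4 := by simp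
    rw [this]; positivity
  obtain ⟨ev, hev⟩ := hquasi W α w (q / 4) e hW hwσ hkα hαL hqA4 hqre4 hαw hcont_e hnorm_e hexp
  set N : ℝ := (2 * α / π) ^ (1 / 4 : ℝ) with hN
  have hN0 : 0 ≤ N := by positivity
  have hgα : ∀ x, gaussF α x = (N : ℂ) * cexp (-(α : ℂ) * (x : ℂ) ^ 2) := fun x => rfl
  have hpt : ∀ᵐ x : ℝ, ‖(K g : ℝ → ℂ) x - ev * gaussF α x‖ ≤
      N * (D / (W ^ 2 * √W) * rexp (-(α / 16) * x ^ 2)) := by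
    filter_upwards [hK g] with x hx
    have h1 : (K g : ℝ → ℂ) x = (N : ℂ) *
        ∫ y : ℝ, e x * cexp (-w * ((x : ℂ) - y) ^ 2) * e y * cexp (-(α : ℂ) * (y : ℂ) ^ 2) := by
      rw [hx, ← integral_const_mul]
      refine integral_congr_ae ?_
      filter_upwards [hg] with y hy
      rw [hy, hker, hgα]; ring
    have h2 := hev x
    rw [h1, hgα, mul_left_comm, ← mul_sub, norm_mul, norm_real, norm_of_nonneg hN0]
    gcongr
  have hgnorm : ‖g‖ = 1 := norm_eq_one_of_ae_eq_gaussF hα0 hg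
  have hmu : 1 / (√(1 + L) * W) ≤ ‖muK W ζ U‖ := by
    have hne : w + (α : ℂ) ≠ 0 := by
      intro h0
      have h1 : (w + (α : ℂ)).re = w.re + α := by simp
      rw [h0, zero_re] at h1
      linarith
    have h2 : ‖w + (α : ℂ)‖ ≤ (1 + L) * W ^ 2 := by
      refine (norm_add_le _ _).trans ?_
      rw [hwnorm, norm_real, norm_of_nonneg hα0.le]
      nlinarith [mul_nonneg hL0.le (mul_nonneg hW0.le (sub_nonneg.2 hW1))]
    have h3 : ‖muK W ζ U‖ = √(π / ‖w + (α : ℂ)‖) := by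
      have h4 : muK W ζ U = ((π : ℂ) / (w + (α : ℂ))) ^ (1 / 2 : ℂ) := rfl
      rw [h4, norm_cpow_half (div_ne_zero (by exact_mod_cast Real.pi_ne_zero) hne), norm_div,
        norm_real, norm_of_nonneg Real.pi_pos.le]
    rw [h3]
    have hpos : 0 < ‖w + (α : ℂ)‖ := norm_pos_iff.2 hne
    refine Real.le_sqrt_of_sq_le ?_
    rw [div_pow, mul_pow, Real.sq_sqrt (by positivity), one_pow]
    have hpi : (1 : ℝ) ≤ π := by linarith [Real.pi_gt_three]
    gcongr
  have hfinal : 2 * (D / (W ^ 2 * √W)) ≤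
      2 * D * √(1 + L) * W ^ (-1 - 1 / 2 : ℝ) * ‖muK W ζ U‖ := by
    have hrpow : W ^ (-1 - 1 / 2 : ℝ) = 1 / (W * √W) := by
      rw [show (-1 - 1 / 2 : ℝ) = -(1 + 1 / 2) by norm_num, Real.rpow_neg hW0.le,
        Real.rpow_add hW0, Real.rpow_one, Real.sqrt_eq_rpow, one_div (W * _)]
    rw [hrpow]
    calc 2 * (D / (W ^ 2 * √W)) =
        2 * D * √(1 + L) * (1 / (W * √W)) * (1 / (√(1 + L) * W)) := by
          have h1 : √(1 + L) ≠ 0 := by positivity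
          field_simp
      _ ≤ _ := by gcongr
  constructor
  · refine ((norm_projP_le_norm_sub_smul hgnorm (K g) ev).trans ?_).trans hfinal
    refine norm_le_of_ae_le_gaussian hα0 ?_
    filter_upwards [hpt, hg, Lp.coeFn_sub (K g) (ev • g), Lp.coeFn_smul ev g] with x h1 h2 h3 h4
    rw [h3, Pi.sub_apply, h4, Pi.smul_apply, h2, smul_eq_mul]
    exact h1
  · have hgreal : ∀ᵐ x : ℝ, (starRingEnd ℂ) ((g : ℝ → ℂ) x) = (g : ℝ → ℂ) x := by
      filter_upwards [hg] with x hx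
      rw [hx, conj_gaussF]
    rw [adjoint_apply_eq_star hK hkersymm hgreal
      (integrable_gaussF_mul_kernel hα0 hw0 hkerc hkerb hg)]
    refine ((norm_projP_le_norm_sub_smul hgnorm _ ((starRingEnd ℂ) ev)).trans ?_).trans hfinal
    refine norm_le_of_ae_le_gaussian hα0 ?_
    filter_upwards [hpt, hg, Lp.coeFn_sub (star (K g)) ((starRingEnd ℂ) ev • g),
      Lp.coeFn_smul ((starRingEnd ℂ) ev) g, Lp.coeFn_star (K g)] with x h1 h2 h3 h4 h5
    rw [h3, Pi.sub_apply, h4, Pi.smul_apply, h2, h5, smul_eq_mul, Pi.star_apply, RCLike.star_def,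
      ← conj_gaussF α x, ← map_mul, ← map_sub, RCLike.norm_conj]
    exact h1
end

section
/- The set of nonzero spectral values of the compact operator K_hr on L²(ℝ) equals {λ_j^hr : j ∈ ℕ}, where λ_j^hr = √(π/(W²ζ² + α_hr + (a+ib)/2)) · (W²ζ²/(W²ζ² + α_hr + (a+ib)/2))^j (principal square root). In particular the Gaussian g_{α_hr}(x) = (2α_hr/π)^{1/4}·exp(−α_hr·x²) is an eigenfunction of K_hr with eigenvalue λ₀^hr = √(π/(W²ζ² + α_hr + (a+ib)/2)). -/
open MeasureTheory Complex Real
open scoped ComplexInnerProductSpace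

noncomputable section

/-- The harmonic-oscillator kernel
`K_hr(x,y) = exp(−W²ζ²(x−y)² − ((a+ib)/2)(x²+y²))`. -/
def kerHr (W : ℝ) (ζ : ℂ) (a b : ℝ) (x y : ℝ) : ℂ :=
  Complex.exp (-(W : ℂ)^2 * ζ^2 * ((x : ℂ) - (y : ℂ))^2
    - (((a : ℂ) + (b : ℂ) * Complex.I) / 2) * ((x : ℂ)^2 + (y : ℂ)^2))

/-- The eigenvalues `λ_j^hr` of the harmonic oscillator (principal square root). -/
def lamHr (W : ℝ) (ζ : ℂ) (a b : ℝ) (αhr : ℂ) (j : ℕ) : ℂ :=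
  ((π : ℂ) / ((W : ℂ)^2 * ζ^2 + αhr + ((a : ℂ) + (b : ℂ) * Complex.I) / 2)) ^ (1/2 : ℂ) *
    (((W : ℂ)^2 * ζ^2) / ((W : ℂ)^2 * ζ^2 + αhr + ((a : ℂ) + (b : ℂ) * Complex.I) / 2)) ^ j

/-- The squared singular values `(s_j^hr)²` of the harmonic oscillator, where
`A = 2W²·Re ζ² + a`. -/
def ssqHr (W a A : ℝ) (j : ℕ) : ℝ :=
  Real.sqrt (π^2 / (W^4 + 2*a*A + Real.sqrt ((2*W^4 + a*A) * (a*A)))) *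
    (W^4 / (W^4 + 2*a*A + Real.sqrt ((2*W^4 + a*A) * (a*A)))) ^ j

/-- The (complex) Gaussian `g_α(x) = (2α/π)^{1/4}·exp(−αx²)`, principal branch. -/
def gaussC (α : ℂ) (x : ℝ) : ℂ :=
  (2 * α / (π : ℂ)) ^ (1/4 : ℂ) * Complex.exp (-α * (x : ℂ)^2)

end

/-- An integrable-with-exponential-weights function on the line all of whose moments vanish is
zero almost everywhere. -/
theorem ae_eq_zero_of_forall_integral_pow_mul_eq_zero {F : ℝ → ℂ}
    (hF : AEStronglyMeasurable F) (hexp : ∀ r : ℝ, Integrable fun x : ℝ => rexp (r * |x|) * ‖F x‖)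
    (h : ∀ n : ℕ, ∫ x : ℝ, (x : ℂ) ^ n * F x = 0) : ∀ᵐ x : ℝ, F x = 0 := by
  have hint : Integrable F := by
    refine (integrable_norm_iff hF).1 ?_
    simpa using hexp 0
  have hfourier : ∀ w : ℂ, ∫ x : ℝ, cexp (w * x) * F x = 0 := by
    intro w
    have key : HasSum (fun n : ℕ => ∫ x : ℝ, (w * x) ^ n / (n.factorial : ℂ) * F x)
        (∫ x : ℝ, cexp (w * x) * F x) := by
      have hs : ∀ x : ℝ, HasSum (fun n : ℕ => (‖w‖ * |x|) ^ n / n.factorial * ‖F x‖)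
          (rexp (‖w‖ * |x|) * ‖F x‖) := by
        intro x
        refine HasSum.mul_right _ ?_
        rw [Real.exp_eq_exp_ℝ]
        simpa [div_eq_inv_mul] using NormedSpace.exp_series_hasSum_exp' (𝕂 := ℝ) (‖w‖ * |x|)
      refine hasSum_integral_of_dominated_convergence
        (fun n x => (‖w‖ * |x|) ^ n / n.factorial * ‖F x‖) (fun n => ?_) (fun n => ?_)
        (.of_forall fun x => (hs x).summable) ?_ (.of_forall fun x => ?_)
      · exact (by fun_prop : Continuous fun x : ℝ =>
          (w * x) ^ n / (n.factorial : ℂ)).aestronglyMeasurable.mul hF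
      · exact .of_forall fun x => by simp
      · simpa only [(hs _).tsum_eq] using hexp ‖w‖
      · refine HasSum.mul_right _ ?_
        rw [Complex.exp_eq_exp_ℂ]
        simpa [div_eq_inv_mul] using NormedSpace.exp_series_hasSum_exp' (𝕂 := ℂ) (w * x)
    refine key.unique ?_
    convert hasSum_zero with n
    calc ∫ x : ℝ, (w * x) ^ n / (n.factorial : ℂ) * F x
        = ∫ x : ℝ, (w ^ n / (n.factorial : ℂ)) * ((x : ℂ) ^ n * F x) := by
          congr with x; ring
      _ = 0 := by rw [integral_const_mul, h, mul_zero]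
  have hF0 : ∀ w : ℝ, (FourierTransform.fourier F : ℝ → ℂ) w = 0 := by
    intro w
    rw [fourier_real_eq_integral_exp_smul]
    refine (integral_congr_ae (.of_forall fun x => ?_)).trans (hfourier (-2 * π * w * Complex.I))
    simp only [smul_eq_mul]
    congr 2
    push_cast
    ring
  refine ae_eq_zero_of_integral_contDiff_smul_eq_zero hint.locallyIntegrable
    fun g g_smooth g_cpt => ?_
  have hg₁ : HasCompactSupport (Complex.ofRealCLM ∘ g) := g_cpt.comp_left rfl
  have hg₂ : ContDiff ℝ (⊤ : ℕ∞) (Complex.ofRealCLM ∘ g) :=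
    Complex.ofRealCLM.contDiff.comp g_smooth
  set ψ := hg₁.toSchwartzMap hg₂
  set φ := FourierTransform.fourierInv ψ
  have hφ : FourierTransform.fourier φ = ψ := FourierTransform.fourier_fourierInv_eq ψ
  have := VectorFourier.integral_fourierIntegral_smul_eq_flip (L := innerₗ ℝ) (μ := volume)
    (ν := volume) Real.continuous_fourierChar continuous_inner hint φ.integrable
  have hψ : ∀ x, VectorFourier.fourierIntegral fourierChar volume (innerₗ ℝ).flip φ x = g x := by
    intro x
    rw [flip_innerₗ]
    change FourierTransform.fourier (φ : ℝ → ℂ) x = (ψ x)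
    rw [← SchwartzMap.fourier_coe, hφ]
  have hzero : ∀ ξ, VectorFourier.fourierIntegral fourierChar volume (innerₗ ℝ) F ξ = 0 := hF0
  simp only [hψ, hzero, smul_eq_mul, zero_mul, integral_zero] at this
  refine Eq.trans ?_ this.symm
  congr with x
  rw [Complex.real_smul, mul_comm]

/-- An integral operator on `L²(ℝ)` whose kernel is continuous and dominated by `G(x)G(y)` with
`G ∈ L²` is compact. -/
theorem IsKerOp.isCompactOperator {k : ℝ → ℝ → ℂ} {T : Hsp →L[ℂ] Hsp} (hT : IsKerOp k T)
    (hk : ∀ x, Continuous (k x)) {G : ℝ → ℝ} (hG : MemLp G 2)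
    (hG0 : ∀ x, 0 ≤ G x) (hkG : ∀ x y, ‖k x y‖ ≤ G x * G y) : IsCompactOperator T := by
  have hmem : ∀ x, MemLp (fun y => star (k x y)) 2 := fun x =>
    (hG.const_mul (G x)).mono (hk x).star.aestronglyMeasurable <| .of_forall fun y => by
      simpa using (hkG x y).trans (le_abs_self _)
  have hnorm : ∀ x, ‖(hmem x).toLp‖ ≤ G x * ‖hG.toLp‖ := by
    intro x
    refine Lp.norm_le_mul_norm_of_ae_le_mul ?_
    filter_upwards [(hmem x).coeFn_toLp, hG.coeFn_toLp] with y h1 h2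
    rw [h1, h2, norm_star]
    exact (hkG x y).trans (mul_le_mul_of_nonneg_left (le_abs_self _) (hG0 x))
  have hTx : ∀ f : Hsp, ∀ᵐ x, (T f : ℝ → ℂ) x = inner ℂ (hmem x).toLp f := by
    intro f
    filter_upwards [hT f] with x hx
    rw [hx, L2.inner_def]
    refine integral_congr_ae ?_
    filter_upwards [(hmem x).coeFn_toLp] with y h1
    rw [h1]
    simp [mul_comm]
  -- `T` maps bounded weakly null sequences to norm-null sequences.
  have hnull : ∀ (v : ℕ → Hsp) (C : ℝ), (∀ n, ‖v n‖ ≤ C) →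
      (∀ h : Hsp, Filter.Tendsto (fun n => inner ℂ h (v n)) Filter.atTop (nhds 0)) →
      Filter.Tendsto (fun n => T (v n)) Filter.atTop (nhds 0) := by
    intro v C hC hv
    have hsq : ∀ n, ∫ x, ‖(T (v n) : ℝ → ℂ) x‖ ^ 2 = ‖T (v n)‖ ^ 2 := by
      intro n
      rw [← inner_self_eq_norm_sq (𝕜 := ℂ), L2.inner_def, ← integral_re (L2.integrable_inner _ _)]
      simp only [inner_self_eq_norm_sq]
    have hlim : Filter.Tendsto (fun n => ∫ x, ‖(T (v n) : ℝ → ℂ) x‖ ^ 2) Filter.atTop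
        (nhds (∫ x : ℝ, (0 : ℝ))) := by
      refine tendsto_integral_of_dominated_convergence (fun x => (G x * ‖hG.toLp‖ * C) ^ 2)
        (fun n => ((Lp.aestronglyMeasurable _).norm.pow 2)) ?_ (fun n => ?_) ?_
      · exact ((hG.mul_const _).mul_const _).integrable_sq
      · filter_upwards [hTx (v n)] with x hx
        rw [hx, Real.norm_of_nonneg (by positivity)]
        gcongr
        exact (norm_inner_le_norm _ _).trans (mul_le_mul (hnorm x) (hC n) (norm_nonneg _)
          ((norm_nonneg _).trans (hnorm x)))
      · filter_upwards [ae_all_iff.2 fun n => hTx (v n)] with x hx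
        simp only [hx]
        simpa using ((hv (hmem x).toLp).norm.pow 2)
    simp only [hsq, integral_zero] at hlim
    rw [tendsto_zero_iff_norm_tendsto_zero]
    simpa using hlim.sqrt
  refine (isCompactOperator_iff_image_closedBall_subset_compact (T : Hsp →ₗ[ℂ] Hsp) one_pos).2
    ⟨T '' Metric.closedBall 0 1, IsSeqCompact.isCompact fun u hu => ?_, subset_rfl⟩
  choose w hw hwu using hu
  have : Fact ((2 : ENNReal) ≠ ⊤) := ⟨by simp⟩
  have : TopologicalSpace.SeparableSpace Hsp :=
    TopologicalSpace.SecondCountableTopology.to_separableSpace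
  obtain ⟨ψ, hψ, φ, hφ, hlim⟩ := WeakDual.isSeqCompact_closedBall ℂ Hsp 0 1
    (x := fun n => StrongDual.toWeakDual (InnerProductSpace.toDual ℂ Hsp (w n)))
    (fun n => by simpa using hw n)
  obtain ⟨f, rfl⟩ : ∃ f, ψ = StrongDual.toWeakDual (InnerProductSpace.toDual ℂ Hsp f) :=
    ⟨(InnerProductSpace.toDual ℂ Hsp).symm (WeakDual.toStrongDual ψ), by simp⟩
  have hf : ‖f‖ ≤ 1 := by simpa using hψ
  refine ⟨T f, ⟨f, by simpa using hf, rfl⟩, φ, hφ, ?_⟩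
  have := hnull (fun n => w (φ n) - f) 2 (fun n => ?_) (fun h => ?_)
  · simp only [map_sub, hwu] at this
    simpa [tendsto_sub_nhds_zero_iff, Function.comp_def] using this
  · have := hw (φ n)
    simp at this
    linarith [norm_sub_le (w (φ n)) f]
  · have h1 : Filter.Tendsto (fun n => inner ℂ (w (φ n)) h) Filter.atTop (nhds (inner ℂ f h)) :=
      ((WeakDual.eval_continuous h).tendsto _).comp hlim
    simpa [inner_sub_right, RCLike.star_def] using h1.star.sub_const (inner ℂ h f)

/-- Polynomial multiples of a complex Gaussian are integrable. -/
theorem integrable_pow_mul_cexp_quadratic {β : ℂ} (hβ : 0 < β.re) (t : ℂ) (n : ℕ) :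
    Integrable fun x : ℝ => (x : ℂ) ^ n * cexp (-β * x ^ 2 + t * x) := by
  have h1 := (integrable_cexp_quadratic hβ (t + 1) 0).norm
  have h2 := (integrable_cexp_quadratic hβ (t - 1) 0).norm
  refine ((h1.add h2).const_mul (n.factorial : ℝ)).mono'
    (by fun_prop : Continuous _).aestronglyMeasurable (.of_forall fun x => ?_)
  have e1 : ∀ u : ℂ, ∀ ε : ℝ, ‖cexp (-β * x ^ 2 + (t + ε) * x + 0)‖ =
      ‖cexp (-β * x ^ 2 + t * x)‖ * rexp (ε * x) := by
    intro u ε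
    rw [show -β * x ^ 2 + (t + ε) * x + 0 = (-β * x ^ 2 + t * x) + ((ε * x : ℝ) : ℂ) by
      push_cast; ring, Complex.exp_add, norm_mul, Complex.norm_exp_ofReal]
  have hp := e1 0 1
  have hm := e1 0 (-1)
  simp only [ofReal_one, ofReal_neg, ← sub_eq_add_neg, one_mul, neg_mul, one_mul] at hp hm
  have hpow : |x| ^ n ≤ n.factorial * (rexp x + rexp (-x)) := by
    have := Real.pow_div_factorial_le_exp (|x|) (abs_nonneg x) n
    rw [div_le_iff₀ (by positivity)] at this
    calc |x| ^ n ≤ rexp |x| * n.factorial := this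
      _ ≤ (rexp x + rexp (-x)) * n.factorial := by
        gcongr
        rcases abs_cases x with h | h <;> rw [h.1]
        · linarith [Real.exp_pos (-x)]
        · linarith [Real.exp_pos x]
      _ = _ := mul_comm _ _
  simp only [Pi.add_apply, neg_mul, hp, hm, norm_mul, norm_pow, norm_real, Real.norm_eq_abs]
  calc |x| ^ n * ‖cexp (-(β * x ^ 2) + t * x)‖
      ≤ (n.factorial * (rexp x + rexp (-x))) * ‖cexp (-(β * x ^ 2) + t * x)‖ := by gcongr
    _ = _ := by ring

/-- A polynomial times the Gaussian `exp(−αx²)`. -/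
noncomputable def polyGauss (α : ℂ) (p : Polynomial ℂ) (x : ℝ) : ℂ := p.eval (x : ℂ) * cexp (-α * (x : ℂ) ^ 2)

theorem continuous_polyGauss (α : ℂ) (p : Polynomial ℂ) : Continuous (polyGauss α p) := by
  unfold polyGauss
  exact (p.continuous.comp continuous_ofReal).mul (by fun_prop)

theorem memLp_polyGauss {α : ℂ} (hα : 0 < α.re) (p : Polynomial ℂ) :
    MemLp (polyGauss α p) 2 := by
  induction p using Polynomial.induction_on' with
  | add p q hp hq =>
    refine (hp.add hq).ae_eq (.of_forall fun x => ?_)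
    simp [polyGauss, add_mul]
  | monomial n z =>
    rw [memLp_two_iff_integrable_sq_norm (continuous_polyGauss _ _).aestronglyMeasurable]
    have h2 : 0 < (2 * α).re := by simpa using hα
    refine ((integrable_pow_mul_cexp_quadratic h2 0 (2 * n)).norm.const_mul (‖z‖ ^ 2)).congr
      (.of_forall fun x => ?_)
    simp only [polyGauss, Polynomial.eval_monomial, norm_mul, mul_pow, norm_pow]
    rw [← norm_pow (cexp _), ← Complex.exp_nat_mul, ← pow_mul, mul_assoc, mul_comm n 2]
    congr 4
    push_cast
    ring

/-- Polynomial multiples of a Gaussian, as elements of `L²(ℝ)`. -/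
noncomputable def polyGaussLp {α : ℂ} (hα : 0 < α.re) : Polynomial ℂ →ₗ[ℂ] Hsp where
  toFun p := (memLp_polyGauss hα p).toLp
  map_add' p q := by
    rw [← MemLp.toLp_add]
    congr 1 with x
    simp [polyGauss, add_mul]
  map_smul' z p := by
    rw [RingHom.id_apply, ← MemLp.toLp_const_smul]
    congr 1 with x
    simp [polyGauss, mul_assoc]

theorem coeFn_polyGaussLp {α : ℂ} (hα : 0 < α.re) (p : Polynomial ℂ) :
    ∀ᵐ x : ℝ, (polyGaussLp hα p : ℝ → ℂ) x = polyGauss α p x :=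
  (memLp_polyGauss hα p).coeFn_toLp

theorem polyGaussLp_injective {α : ℂ} (hα : 0 < α.re) : Function.Injective (polyGaussLp hα) := by
  rw [injective_iff_map_eq_zero]
  intro p hp
  have h0 : polyGauss α p = fun _ => 0 := by
    refine Continuous.ae_eq_iff_eq volume (continuous_polyGauss α p) continuous_const |>.1 ?_
    have := coeFn_polyGaussLp hα p
    rw [hp] at this
    filter_upwards [this, Lp.coeFn_zero ℂ 2 (volume : Measure ℝ)] with x h1 h2
    rw [← h1, h2, Pi.zero_apply]
  refine Polynomial.eq_zero_of_infinite_isRoot p <|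
    (Set.infinite_range_of_injective ofReal_injective).mono ?_
  rintro _ ⟨x, rfl⟩
  simpa [polyGauss] using congrFun h0 x

/-- An element of `L²(ℝ)` that annihilates all polynomial multiples of a Gaussian vanishes. -/
theorem eq_zero_of_forall_integral_mul_polyGauss {α : ℂ} (hα : 0 < α.re) (f : Hsp)
    (h : ∀ n : ℕ, ∫ x : ℝ, (f : ℝ → ℂ) x * polyGauss α (.X ^ n) x = 0) : f = 0 := by
  have hF := ae_eq_zero_of_forall_integral_pow_mul_eq_zero
    (F := fun x : ℝ => (f : ℝ → ℂ) x * cexp (-α * (x : ℂ) ^ 2))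
    ((Lp.aestronglyMeasurable f).mul (by fun_prop : Continuous _).aestronglyMeasurable)
    (fun r => ?_) (fun n => ?_)
  · rw [Lp.eq_zero_iff_ae_eq_zero]
    filter_upwards [hF] with x hx
    simpa using hx
  · have hα2 : 0 < (2 * α).re := by simpa using hα
    have hmem : ∀ r : ℝ, MemLp (fun x : ℝ => rexp (r * x) * ‖cexp (-α * (x : ℂ) ^ 2)‖) 2 := by
      intro r
      rw [memLp_two_iff_integrable_sq_norm (by fun_prop : Continuous _).aestronglyMeasurable]
      refine (integrable_pow_mul_cexp_quadratic hα2 (2 * r) 0).norm.congr (.of_forall fun x => ?_)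
      simp only [pow_zero, one_mul, Complex.norm_exp, Real.norm_eq_abs, Real.abs_exp,
        ← Real.exp_add, ← Real.exp_nat_mul]
      congr 1
      simp
      ring
    have hint : ∀ r : ℝ, Integrable fun x : ℝ =>
        rexp (r * x) * ‖cexp (-α * (x : ℂ) ^ 2)‖ * ‖(f : ℝ → ℂ) x‖ := fun r =>
      (hmem r).integrable_mul (Lp.memLp f).norm
    refine ((hint r).add (hint (-r))).mono' ?_ (.of_forall fun x => ?_)
    · exact (by fun_prop : Continuous fun x : ℝ => rexp (r * |x|)).aestronglyMeasurable.mul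
        ((Lp.aestronglyMeasurable f).mul (by fun_prop : Continuous _).aestronglyMeasurable).norm
    · rw [Real.norm_of_nonneg (by positivity)]
      simp only [Pi.add_apply, norm_mul, ← add_mul, mul_assoc]
      rw [mul_comm ‖(f : ℝ → ℂ) x‖]
      gcongr
      rcases abs_cases x with h | h <;> rw [h.1]
      · linarith [Real.exp_pos (-r * x)]
      · rw [mul_neg, ← neg_mul]
        linarith [Real.exp_pos (r * x)]
  · rw [← h n]
    congr with x
    simp [polyGauss]
    ring

/-- The polynomials `P_n` with `∫ yⁿ exp(−βy² + 2βqxy) dy = √(π/β) exp(βq²x²) P_n(x)`. -/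
noncomputable def gaussMomentPoly (β q : ℂ) : ℕ → Polynomial ℂ
  | 0 => 1
  | 1 => .C q * .X
  | n + 2 => .C q * .X * gaussMomentPoly β q (n + 1) +
      .C ((n + 1) / (2 * β)) * gaussMomentPoly β q n

theorem gaussMomentPoly_sub_mem_degreeLT (β q : ℂ) (n : ℕ) :
    gaussMomentPoly β q n - .C (q ^ n) * .X ^ n ∈ Polynomial.degreeLT ℂ n := by
  have hmulX : ∀ {p : Polynomial ℂ} {m : ℕ}, p ∈ Polynomial.degreeLT ℂ m →
      .C q * .X * p ∈ Polynomial.degreeLT ℂ (m + 1) := by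
    intro p m hp
    rw [Polynomial.mem_degreeLT, Polynomial.degree_lt_iff_coeff_zero] at *
    intro k hk
    obtain ⟨k, rfl⟩ : ∃ l, k = l + 1 := ⟨k - 1, by lia⟩
    rw [mul_assoc, Polynomial.coeff_C_mul, Polynomial.coeff_X_mul, hp k (by lia), mul_zero]
  induction n using Nat.twoStepInduction with
  | zero => simp [gaussMomentPoly]
  | one => simp [gaussMomentPoly]
  | more n h0 h1 =>
    have h0' : gaussMomentPoly β q n ∈ Polynomial.degreeLT ℂ (n + 2) := by
      rw [← sub_add_cancel (gaussMomentPoly β q n) (.C (q ^ n) * .X ^ n)]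
      refine add_mem (Polynomial.degreeLT_mono (by lia) h0) ?_
      rw [Polynomial.mem_degreeLT]
      refine (Polynomial.degree_C_mul_X_pow_le _ _).trans_lt ?_
      exact_mod_cast (by lia : n < n + 2)
    have key : gaussMomentPoly β q (n + 2) - .C (q ^ (n + 2)) * .X ^ (n + 2) =
        .C q * .X * (gaussMomentPoly β q (n + 1) - .C (q ^ (n + 1)) * .X ^ (n + 1)) +
        ((n + 1) / (2 * β) : ℂ) • gaussMomentPoly β q n := by
      rw [gaussMomentPoly, Polynomial.smul_eq_C_mul, pow_succ q (n + 1), Polynomial.C_mul]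
      ring
    rw [key]
    exact add_mem (hmulX h1) (Submodule.smul_mem _ _ h0')

theorem integral_pow_mul_cexp_eq_gaussMomentPoly {β : ℂ} (hβ : 0 < β.re) (q x : ℂ) (n : ℕ) :
    ∫ y : ℝ, (y : ℂ) ^ n * cexp (-β * y ^ 2 + 2 * β * q * x * y) =
      (π / β) ^ (1 / 2 : ℂ) * cexp (β * q ^ 2 * x ^ 2) * (gaussMomentPoly β q n).eval x := by
  have hβ0 : β ≠ 0 := by rintro rfl; simp at hβ
  set t := 2 * β * q * x with ht
  have hI := integrable_pow_mul_cexp_quadratic hβ t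
  have hd : ∀ y : ℝ, HasDerivAt (fun y : ℝ => cexp (-β * y ^ 2 + t * y))
      ((-2 * β * y + t) * cexp (-β * y ^ 2 + t * y)) y := by
    intro y
    have h1 : HasDerivAt (fun z : ℂ => -β * z ^ 2 + t * z) (-2 * β * y + t) (y : ℂ) := by
      have := (((hasDerivAt_id (y : ℂ)).pow 2).const_mul (-β)).add
        ((hasDerivAt_id (y : ℂ)).const_mul t)
      refine this.congr_deriv ?_
      simp
      ring
    exact (h1.cexp.comp_ofReal).congr_deriv (mul_comm _ _)
  have hrec : ∀ n : ℕ, 2 * β * ∫ y : ℝ, (y : ℂ) ^ (n + 1) * cexp (-β * y ^ 2 + t * y) =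
      n * (∫ y : ℝ, (y : ℂ) ^ (n - 1) * cexp (-β * y ^ 2 + t * y)) +
      t * ∫ y : ℝ, (y : ℂ) ^ n * cexp (-β * y ^ 2 + t * y) := by
    intro n
    have hd' : ∀ y : ℝ, HasDerivAt (fun y : ℝ => (y : ℂ) ^ n * cexp (-β * y ^ 2 + t * y))
        (n * ((y : ℂ) ^ (n - 1) * cexp (-β * y ^ 2 + t * y)) +
          t * ((y : ℂ) ^ n * cexp (-β * y ^ 2 + t * y)) -
          2 * β * ((y : ℂ) ^ (n + 1) * cexp (-β * y ^ 2 + t * y))) y := by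
      intro y
      exact ((hasDerivAt_pow n (y : ℂ)).comp_ofReal.mul (hd y)).congr_deriv (by ring)
    have i1 := (hI (n - 1)).const_mul (n : ℂ)
    have i2 := (hI n).const_mul t
    have i3 := (hI (n + 1)).const_mul (2 * β)
    have i12 : Integrable fun y : ℝ => n * ((y : ℂ) ^ (n - 1) * cexp (-β * y ^ 2 + t * y)) +
          t * ((y : ℂ) ^ n * cexp (-β * y ^ 2 + t * y)) := i1.add i2
    have := integral_eq_zero_of_hasDerivAt_of_integrable hd' (i12.sub i3) (hI n)
    rw [integral_sub i12 i3, integral_add i1 i2, integral_const_mul, integral_const_mul,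
      integral_const_mul] at this
    exact (sub_eq_zero.1 this).symm
  have hzero : ∫ y : ℝ, (y : ℂ) ^ 0 * cexp (-β * y ^ 2 + t * y) =
      (π / β) ^ (1 / 2 : ℂ) * cexp (β * q ^ 2 * x ^ 2) := by
    have := integral_cexp_quadratic (b := -β) (by simpa using hβ) t 0
    simp only [add_zero, neg_neg] at this
    simp only [pow_zero, one_mul, this]
    congr 2
    rw [ht]
    field_simp
    ring
  induction n using Nat.twoStepInduction with
  | zero => rw [hzero, gaussMomentPoly, Polynomial.eval_one, mul_one]
  | one =>
    have h2 := hrec 0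
    simp only [Nat.cast_zero, zero_mul, zero_add, hzero] at h2
    refine mul_left_cancel₀ (mul_ne_zero two_ne_zero hβ0) (h2.trans ?_)
    simp only [gaussMomentPoly, Polynomial.eval_mul, Polynomial.eval_C, Polynomial.eval_X, ht]
    ring
  | more n h0 h1 =>
    have h2 := hrec (n + 1)
    rw [Nat.add_sub_cancel, h0, h1] at h2
    refine mul_left_cancel₀ (mul_ne_zero two_ne_zero hβ0) (h2.trans ?_)
    simp only [gaussMomentPoly, Polynomial.eval_add, Polynomial.eval_mul, Polynomial.eval_C,
      Polynomial.eval_X, ht]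
    push_cast
    field_simp
    ring

/-- An integral operator with symmetric kernel dominated by `G(x)G(y)`, `G ∈ L²`, is symmetric for
the bilinear pairing `∫ fh`. -/
theorem IsKerOp.integral_mul_comm {k : ℝ → ℝ → ℂ} {T : Hsp →L[ℂ] Hsp} (hT : IsKerOp k T)
    (hk : Continuous fun p : ℝ × ℝ => k p.1 p.2) (hsymm : ∀ x y, k x y = k y x) {G : ℝ → ℝ}
    (hG : MemLp G 2) (hkG : ∀ x y, ‖k x y‖ ≤ G x * G y) (f h : Hsp) :
    ∫ x, (T f : ℝ → ℂ) x * (h : ℝ → ℂ) x = ∫ x, (f : ℝ → ℂ) x * (T h : ℝ → ℂ) x := by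
  have hf := (Lp.memLp f).norm
  have hh := (Lp.memLp h).norm
  have hint : Integrable (fun p : ℝ × ℝ => k p.1 p.2 * (f : ℝ → ℂ) p.2 * (h : ℝ → ℂ) p.1)
      (volume.prod volume) := by
    refine ((hG.integrable_mul hh).mul_prod (hG.integrable_mul hf)).mono' ?_
      (.of_forall fun p => ?_)
    · exact (hk.aestronglyMeasurable.mul (Lp.aestronglyMeasurable f).comp_snd).mul
        (Lp.aestronglyMeasurable h).comp_fst
    · simp only [norm_mul, Pi.mul_apply]
      calc _ ≤ G p.1 * G p.2 * ‖(f : ℝ → ℂ) p.2‖ * ‖(h : ℝ → ℂ) p.1‖ := by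
            gcongr; exact hkG _ _
        _ = _ := by ring
  calc ∫ x, (T f : ℝ → ℂ) x * (h : ℝ → ℂ) x
      = ∫ x, ∫ y, k x y * (f : ℝ → ℂ) y * (h : ℝ → ℂ) x := by
        refine integral_congr_ae ?_
        filter_upwards [hT f] with x hx
        rw [hx, integral_mul_const]
    _ = ∫ y, ∫ x, k x y * (f : ℝ → ℂ) y * (h : ℝ → ℂ) x := integral_integral_swap hint
    _ = ∫ x, (f : ℝ → ℂ) x * (T h : ℝ → ℂ) x := by
        refine integral_congr_ae ?_
        filter_upwards [hT h] with y hy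
        rw [hy, ← integral_const_mul]
        congr with x
        rw [hsymm x y]
        ring

section Mehler

variable {s c α : ℂ} {T : Hsp →L[ℂ] Hsp}

/-- The Mehler kernel `exp(−s(x−y)² − c(x²+y²))`. -/
noncomputable def mehlerKer (s c : ℂ) (x y : ℝ) : ℂ :=
  cexp (-s * ((x : ℂ) - y) ^ 2 - c * ((x : ℂ) ^ 2 + (y : ℂ) ^ 2))

theorem norm_mehlerKer_le (hs : 0 ≤ s.re) (x y : ℝ) :
    ‖mehlerKer s c x y‖ ≤ rexp (-c.re * x ^ 2) * rexp (-c.re * y ^ 2) := by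
  rw [mehlerKer, Complex.norm_exp, ← Real.exp_add]
  gcongr
  have : (-s * ((x : ℂ) - y) ^ 2 - c * ((x : ℂ) ^ 2 + (y : ℂ) ^ 2)).re =
      -s.re * (x - y) ^ 2 - c.re * (x ^ 2 + y ^ 2) := by
    rw [← ofReal_sub, ← ofReal_pow, ← ofReal_pow, ← ofReal_pow, ← ofReal_add, sub_re,
      re_mul_ofReal, re_mul_ofReal, neg_re]
  rw [this]
  nlinarith [mul_nonneg hs (sq_nonneg (x - y))]

theorem memLp_exp_neg_mul_sq {r : ℝ} (hr : 0 < r) :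
    MemLp (fun x : ℝ => rexp (-r * x ^ 2)) 2 := by
  rw [memLp_two_iff_integrable_sq_norm (by fun_prop : Continuous _).aestronglyMeasurable]
  refine (integrable_exp_neg_mul_sq (by positivity : 0 < 2 * r)).congr (.of_forall fun x => ?_)
  simp only [Real.norm_eq_abs, Real.abs_exp, ← Real.exp_nat_mul]
  congr 1
  push_cast
  ring

theorem IsKerOp.isCompactOperator_of_mehlerKer (hs : 0 < s.re) (hc : 0 < c.re)
    (hT : IsKerOp (mehlerKer s c) T) : IsCompactOperator T :=
  hT.isCompactOperator (fun x => by unfold mehlerKer; fun_prop) (memLp_exp_neg_mul_sq hc)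
    (fun _ => (Real.exp_pos _).le) (norm_mehlerKer_le hs.le)

/-- Action of the Mehler operator on polynomial multiples of its Gaussian ground state. -/
theorem IsKerOp.mehlerKer_apply_polyGaussLp (hs : 0 < s.re) (hc : 0 < c.re) (hα : 0 < α.re)
    (hα2 : α ^ 2 = 2 * s * c + c ^ 2) (hT : IsKerOp (mehlerKer s c) T) (n : ℕ) :
    T (polyGaussLp hα (.X ^ n)) = polyGaussLp hα ((π / (s + α + c)) ^ (1 / 2 : ℂ) •
      gaussMomentPoly (s + α + c) (s / (s + α + c)) n) := by
  set D := s + α + c with hD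
  have hDre : 0 < D.re := by simp only [hD, add_re]; positivity
  have hD0 : D ≠ 0 := by intro h; simp [h] at hDre
  refine Lp.ext ?_
  filter_upwards [hT (polyGaussLp hα (.X ^ n)), coeFn_polyGaussLp hα
    ((π / D) ^ (1 / 2 : ℂ) • gaussMomentPoly D (s / D) n)] with x h1 h2
  rw [h1, h2]
  calc ∫ y : ℝ, mehlerKer s c x y * (polyGaussLp hα (.X ^ n) : ℝ → ℂ) y
      = ∫ y : ℝ, cexp (-(s + c) * x ^ 2) *
          ((y : ℂ) ^ n * cexp (-D * y ^ 2 + 2 * D * (s / D) * x * y)) := by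
        refine integral_congr_ae ?_
        filter_upwards [coeFn_polyGaussLp hα (.X ^ n)] with y hy
        rw [hy, polyGauss, mehlerKer, Polynomial.eval_pow, Polynomial.eval_X, mul_left_comm,
          ← Complex.exp_add, mul_left_comm (cexp _), ← Complex.exp_add]
        congr 2
        rw [mul_assoc 2 D, mul_div_cancel₀ _ hD0, hD]
        ring
    _ = _ := by
        have hexp : cexp (-(s + c) * x ^ 2) * cexp (D * (s / D) ^ 2 * x ^ 2) =
            cexp (-α * x ^ 2) := by
          rw [← Complex.exp_add]
          congr 1
          field_simp
          rw [hD]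
          linear_combination ((x : ℂ) ^ 2) * hα2
        rw [integral_const_mul, integral_pow_mul_cexp_eq_gaussMomentPoly hDre, polyGauss,
          Polynomial.eval_smul, smul_eq_mul, ← hexp]
        ring

/-- The eigenvalues of the Mehler operator. -/
noncomputable def mehlerEig (s c α : ℂ) (n : ℕ) : ℂ :=
  (π / (s + α + c)) ^ (1 / 2 : ℂ) * (s / (s + α + c)) ^ n

theorem mehlerEig_ne_zero (hs : 0 < s.re) (hc : 0 < c.re) (hα : 0 < α.re) (n : ℕ) :
    mehlerEig s c α n ≠ 0 := by
  have hs0 : s ≠ 0 := by rintro rfl; simp at hs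
  have hD0 : s + α + c ≠ 0 := by
    intro h
    have := congrArg re h
    simp only [add_re, zero_re] at this
    linarith
  have hπ : (π : ℂ) ≠ 0 := ofReal_ne_zero.2 pi_ne_zero
  refine mul_ne_zero ?_ (pow_ne_zero _ (div_ne_zero hs0 hD0))
  rw [Ne, cpow_eq_zero_iff, not_and_or]
  exact .inl (div_ne_zero hπ hD0)

/-- A linear map on polynomials that is triangular in the monomial basis has each diagonal entry
as an eigenvalue. -/
theorem exists_ne_zero_apply_eq_smul_of_triangular (L : Polynomial ℂ →ₗ[ℂ] Polynomial ℂ)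
    (d : ℕ → ℂ) (hL : ∀ n, L (.X ^ n) - d n • .X ^ n ∈ Polynomial.degreeLT ℂ n) (j : ℕ) :
    ∃ p ≠ 0, L p = d j • p := by
  let S : Polynomial ℂ →ₗ[ℂ] Polynomial ℂ := L - d j • LinearMap.id
  have hmono : ∀ n, S (.X ^ n) = (L (.X ^ n) - d n • .X ^ n) + (d n - d j) • .X ^ n := by
    intro n
    simp only [S, LinearMap.sub_apply, LinearMap.smul_apply, LinearMap.id_apply]
    module
  have hS : ∀ p ∈ Polynomial.degreeLT ℂ (j + 1), S p ∈ Polynomial.degreeLT ℂ j := by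
    intro p hp
    have hle : Polynomial.degreeLT ℂ (j + 1) ≤ (Polynomial.degreeLT ℂ j).comap S := by
      rw [Polynomial.degreeLT_eq_span_X_pow, Submodule.span_le]
      intro q hq
      obtain ⟨n, hn, rfl⟩ : ∃ n, n < j + 1 ∧ Polynomial.X ^ n = q := by simpa using hq
      rw [SetLike.mem_coe, Submodule.mem_comap, hmono]
      refine add_mem (Polynomial.degreeLT_mono (by lia) (hL n)) ?_
      rcases (Nat.lt_succ_iff_lt_or_eq.1 hn) with h | rfl
      · refine Submodule.smul_mem _ _ ?_
        rw [Polynomial.mem_degreeLT, Polynomial.degree_X_pow]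
        exact_mod_cast h
      · simp
    exact hle hp
  have hfin : ∀ n, Module.finrank ℂ (Polynomial.degreeLT ℂ n) = n := fun n => by
    rw [(Polynomial.degreeLTEquiv ℂ n).finrank_eq, Module.finrank_fin_fun]
  have hfd : ∀ n, FiniteDimensional ℂ (Polynomial.degreeLT ℂ n) := fun n =>
    (Polynomial.degreeLTEquiv ℂ n).symm.finiteDimensional
  have := hfd j
  have := hfd (j + 1)
  have hker := LinearMap.ker_ne_bot_of_finrank_lt (f := S.restrict hS) (by simp [hfin])
  obtain ⟨p, hp, hp0⟩ := Submodule.exists_mem_ne_zero_of_ne_bot hker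
  refine ⟨p, by simpa using hp0, ?_⟩
  have : S p = 0 := by simpa using congrArg Subtype.val (LinearMap.mem_ker.1 hp)
  simpa [S, sub_eq_zero] using this

theorem IsKerOp.spectrum_mehlerKer (hs : 0 < s.re) (hc : 0 < c.re) (hα : 0 < α.re)
    (hα2 : α ^ 2 = 2 * s * c + c ^ 2) (hT : IsKerOp (mehlerKer s c) T) :
    spectrum ℂ T \ {0} = Set.range (mehlerEig s c α) := by
  have hcomp := hT.isCompactOperator_of_mehlerKer hs hc
  have happly := hT.mehlerKer_apply_polyGaussLp hs hc hα hα2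
  let P : ℕ → Polynomial ℂ := fun n => (π / (s + α + c)) ^ (1 / 2 : ℂ) •
    gaussMomentPoly (s + α + c) (s / (s + α + c)) n
  have htri : ∀ n, P n - mehlerEig s c α n • .X ^ n ∈ Polynomial.degreeLT ℂ n := by
    intro n
    have := Submodule.smul_mem _ ((π / (s + α + c)) ^ (1 / 2 : ℂ))
      (gaussMomentPoly_sub_mem_degreeLT (s + α + c) (s / (s + α + c)) n)
    rwa [smul_sub, ← Polynomial.smul_eq_C_mul, smul_smul] at this
  ext μ
  constructor
  · rintro ⟨hμ, hμ0 : μ ≠ 0⟩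
    obtain ⟨f, hf⟩ := ((hcomp.hasEigenvalue_iff_mem_spectrum hμ0).2 hμ).exists_hasEigenvector
    have hTf : T f = μ • f := hf.apply_eq_smul
    by_contra hne
    refine hf.2 (eq_zero_of_forall_integral_mul_polyGauss hα f fun n => ?_)
    -- the pairing of `f` with polynomial multiples of the Gaussian
    let B : Polynomial ℂ →ₗ[ℂ] ℂ :=
      { toFun p := ∫ x, (f : ℝ → ℂ) x * polyGauss α p x
        map_add' p q := by
          rw [← integral_add]
          · congr with x
            simp [polyGauss]
            ring
          · exact (Lp.memLp f).integrable_mul (memLp_polyGauss hα p)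
          · exact (Lp.memLp f).integrable_mul (memLp_polyGauss hα q)
        map_smul' z p := by
          rw [RingHom.id_apply, smul_eq_mul, ← integral_const_mul]
          congr with x
          simp [polyGauss]
          ring }
    have hB : ∀ p, B p = ∫ x, (f : ℝ → ℂ) x * (polyGaussLp hα p : ℝ → ℂ) x := by
      intro p
      refine integral_congr_ae ?_
      filter_upwards [coeFn_polyGaussLp hα p] with x hx
      rw [hx]
    have hrel : ∀ n, μ * B (.X ^ n) = B (P n) := by
      intro n
      rw [hB, hB, ← happly, ← hT.integral_mul_comm (by unfold mehlerKer; fun_prop)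
        (fun x y => by unfold mehlerKer; ring_nf) (memLp_exp_neg_mul_sq hc)
        (norm_mehlerKer_le hs.le), hTf, ← integral_const_mul]
      refine integral_congr_ae ?_
      filter_upwards [Lp.coeFn_smul μ f] with x hx
      rw [hx, Pi.smul_apply, smul_eq_mul, mul_assoc]
    change B (.X ^ n) = 0
    induction n using Nat.strong_induction_on with
    | _ n ih =>
      have hlow : B (P n - mehlerEig s c α n • .X ^ n) = 0 := by
        have hle : Polynomial.degreeLT ℂ n ≤ LinearMap.ker B := by
          rw [Polynomial.degreeLT_eq_span_X_pow, Submodule.span_le]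
          intro q hq
          obtain ⟨m, hm, rfl⟩ : ∃ m, m < n ∧ Polynomial.X ^ m = q := by simpa using hq
          exact ih m hm
        exact hle (htri n)
      rw [map_sub, map_smul B (mehlerEig s c α n), ← hrel, smul_eq_mul, ← sub_mul] at hlow
      exact (mul_eq_zero.1 hlow).resolve_left fun h => hne ⟨n, (sub_eq_zero.1 h).symm⟩
  · rintro ⟨j, rfl⟩
    have hne := mehlerEig_ne_zero hs hc hα j
    refine ⟨(hcomp.hasEigenvalue_iff_mem_spectrum hne).1 ?_, hne⟩
    let L : Polynomial ℂ →ₗ[ℂ] Polynomial ℂ := (Polynomial.basisMonomials ℂ).constr ℂ P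
    have hX : ∀ n, Polynomial.basisMonomials ℂ n = .X ^ n := fun n => by
      simp [Polynomial.monomial_one_right_eq_X_pow]
    have hLX : ∀ n, L (.X ^ n) = P n := fun n => by
      rw [← hX]
      exact Module.Basis.constr_basis _ _ _ _
    obtain ⟨p, hp0, hp⟩ := exists_ne_zero_apply_eq_smul_of_triangular L (mehlerEig s c α)
      (fun n => by rw [hLX]; exact htri n) j
    have hint : (T : Hsp →ₗ[ℂ] Hsp) ∘ₗ polyGaussLp hα = polyGaussLp hα ∘ₗ L := by
      refine (Polynomial.basisMonomials ℂ).ext fun n => ?_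
      rw [hX, LinearMap.comp_apply, LinearMap.comp_apply, hLX]
      exact happly n
    refine Module.End.hasEigenvalue_of_hasEigenvector (x := polyGaussLp hα p)
      (Module.End.hasEigenvector_iff.2 ⟨Module.End.mem_eigenspace_iff.2 ?_, ?_⟩)
    · rw [← map_smul, ← hp]
      exact LinearMap.congr_fun hint p
    · exact (map_ne_zero_iff _ (polyGaussLp_injective hα)).2 hp0

end Mehler

/-- the nonzero spectrum of `K_hr` is `{λ_j^hr : j ∈ ℕ}`, and the Gaussian
`g_{α_hr}` is an eigenfunction with eigenvalue `λ₀^hr`. -/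
theorem stmt_6 :
    ∀ (W : ℝ) (ζ : ℂ) (a b : ℝ), 0 < W → ‖ζ‖ = 1 → 0 < (ζ^2).re → 0 < a →
    ∀ αhr : ℂ, 0 < αhr.re →
      αhr^2 = (W : ℂ)^2 * ζ^2 * ((a : ℂ) + (b : ℂ) * Complex.I)
        + ((a : ℂ) + (b : ℂ) * Complex.I)^2 / 4 →
    ∀ Khr : Hsp →L[ℂ] Hsp, IsKerOp (kerHr W ζ a b) Khr →
      (spectrum ℂ Khr \ {0} = Set.range (lamHr W ζ a b αhr)) ∧
      ∀ g : Hsp, (∀ᵐ x : ℝ, (g : ℝ → ℂ) x = gaussC αhr x) →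
        Khr g = lamHr W ζ a b αhr 0 • g := by
  intro W ζ a b hW _ hζ2 ha α hα hα2 T hT
  set s : ℂ := (W : ℂ) ^ 2 * ζ ^ 2 with hs_def
  set c : ℂ := ((a : ℂ) + (b : ℂ) * Complex.I) / 2 with hc_def
  have hs : 0 < s.re := by
    rw [hs_def, ← ofReal_pow, re_ofReal_mul]
    positivity
  have hc : 0 < c.re := by
    have : c.re = a / 2 := by simp [hc_def]
    rw [this]
    positivity
  have hsq : α ^ 2 = 2 * s * c + c ^ 2 := by
    rw [hα2, hc_def]
    ring
  have hker : kerHr W ζ a b = mehlerKer s c := by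
    ext x y
    rw [kerHr, mehlerKer, hs_def, neg_mul]
  have hlam : lamHr W ζ a b α = mehlerEig s c α := rfl
  rw [hker] at hT
  refine ⟨hlam ▸ hT.spectrum_mehlerKer hs hc hα hsq, fun g hg => ?_⟩
  obtain rfl : g = (2 * α / π) ^ (1 / 4 : ℂ) • polyGaussLp hα (.X ^ 0) := by
    refine Lp.ext ?_
    filter_upwards [hg, Lp.coeFn_smul ((2 * α / π) ^ (1 / 4 : ℂ)) (polyGaussLp hα (.X ^ 0)),
      coeFn_polyGaussLp hα (.X ^ 0)] with x h1 h2 h3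
    rw [h1, h2, Pi.smul_apply, h3]
    simp [gaussC, polyGauss]
  rw [map_smul, hT.mehlerKer_apply_polyGaussLp hs hc hα hsq 0, map_smul, smul_comm, hlam,
    mehlerEig, pow_zero, pow_zero, mul_one, gaussMomentPoly]
end

section
/- Assume additionally that ζ²(a+ib) is real and strictly positive, and let α > 0 be the positive real number with α² = W²·ζ²(a+ib) and g_α(x) = (2α/π)^{1/4}·exp(−αx²). Then there exist constants C', W₀ (depending on a, b, ζ) such that for all W ≥ W₀ there is a unit-norm eigenfunction g̃ of K_hr*·K_hr corresponding to its largest eigenvalue which satisfies ‖g̃ − g_α‖_{L²(ℝ)} ≤ C'·W^{−2}. -/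
open MeasureTheory Complex Real
open scoped ComplexInnerProductSpace

lemma memLp_cexp_neg_mul_sq {γ : ℂ} (hγ : 0 < γ.re) :
    MemLp (fun x : ℝ => cexp (-γ * (x : ℂ) ^ 2)) 2 (volume : Measure ℝ) := by
  rw [memLp_two_iff_integrable_sq_norm (by fun_prop)]
  refine (integrable_exp_neg_mul_sq (b := 2 * γ.re) (by positivity)).congr (.of_forall fun x => ?_)
  simp only
  rw [Complex.norm_exp, ← Real.exp_nat_mul]
  congr 1
  rw [← Complex.ofReal_pow, Complex.re_mul_ofReal]
  push_cast
  rw [Complex.neg_re]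
  ring

lemma memLp_exp_neg_mul_sq_s11 {ε : ℝ} (hε : 0 < ε) :
    MemLp (fun x : ℝ => Real.exp (-ε * x ^ 2)) 2 (volume : Measure ℝ) := by
  rw [memLp_two_iff_integrable_sq_norm (by fun_prop)]
  refine (integrable_exp_neg_mul_sq (b := 2 * ε) (by positivity)).congr (.of_forall fun x => ?_)
  simp only [Real.norm_eq_abs, Real.abs_exp]
  rw [← Real.exp_nat_mul]
  congr 1
  push_cast
  ring

lemma integrable_exp_mul_norm {ε : ℝ} (hε : 0 < ε) (f : Hsp) :
    Integrable (fun x : ℝ => Real.exp (-ε * x ^ 2) * ‖(f : ℝ → ℂ) x‖) :=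
  (memLp_exp_neg_mul_sq_s11 hε).integrable_mul (Lp.memLp f).norm

lemma continuous_uncurry_conj_swap {k : ℝ → ℝ → ℂ} (hk : Continuous (Function.uncurry k)) :
    Continuous (Function.uncurry fun x y => (starRingEnd ℂ) (k y x)) :=
  Complex.continuous_conj.comp (hk.comp (continuous_snd.prodMk continuous_fst))

/-- The adjoint of an integral operator with a Gaussian-dominated kernel has the conjugate
transpose kernel. -/
lemma IsKerOp.adjoint {k : ℝ → ℝ → ℂ} {T : Hsp →L[ℂ] Hsp} (hT : IsKerOp k T)
    (hk : Continuous (Function.uncurry k)) {ε : ℝ} (hε : 0 < ε)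
    (hb : ∀ x y, ‖k x y‖ ≤ Real.exp (-ε * x ^ 2) * Real.exp (-ε * y ^ 2)) :
    IsKerOp (fun x y => (starRingEnd ℂ) (k y x)) (ContinuousLinearMap.adjoint T) := by
  intro f
  have hfm := (Lp.memLp f).1
  set u : ℝ → ℂ := fun y => ∫ z : ℝ, (starRingEnd ℂ) (k z y) * (f : ℝ → ℂ) z with hu
  have hum : AEStronglyMeasurable u volume :=
    AEStronglyMeasurable.integral_prod_right'
      (f := fun p : ℝ × ℝ => (starRingEnd ℂ) (k p.2 p.1) * (f : ℝ → ℂ) p.2)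
      ((continuous_uncurry_conj_swap hk).aestronglyMeasurable.mul hfm.comp_snd)
  have hub : ∀ y, ‖u y‖ ≤ (∫ z : ℝ, Real.exp (-ε * z ^ 2) * ‖(f : ℝ → ℂ) z‖) *
      Real.exp (-ε * y ^ 2) := by
    intro y
    rw [← integral_mul_const]
    refine norm_integral_le_of_norm_le ((integrable_exp_mul_norm hε f).mul_const _)
      (.of_forall fun z => ?_)
    rw [norm_mul, RCLike.norm_conj]
    calc _ ≤ (Real.exp (-ε * z ^ 2) * Real.exp (-ε * y ^ 2)) * ‖(f : ℝ → ℂ) z‖ := by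
          gcongr; exact hb z y
      _ = _ := by ring
  have huL : MemLp u 2 volume :=
    ((memLp_exp_neg_mul_sq_s11 hε).const_mul _).mono' hum (.of_forall hub)
  suffices h : ContinuousLinearMap.adjoint T f = huL.toLp u by
    rw [h]; exact huL.coeFn_toLp
  refine ext_inner_left ℂ fun g => ?_
  rw [ContinuousLinearMap.adjoint_inner_right, L2.inner_def, L2.inner_def]
  have hgm := (Lp.memLp g).1
  have hint : Integrable (Function.uncurry fun x y : ℝ => (f : ℝ → ℂ) x *
      (starRingEnd ℂ) (k x y * (g : ℝ → ℂ) y)) (volume.prod volume) := by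
    refine ((integrable_exp_mul_norm hε f).mul_prod (integrable_exp_mul_norm hε g)).mono' ?_
      (.of_forall fun p => ?_)
    · exact hfm.comp_fst.mul (Complex.continuous_conj.comp_aestronglyMeasurable
        (hk.aestronglyMeasurable.mul hgm.comp_snd))
    · simp only [Function.uncurry, norm_mul, RCLike.norm_conj]
      calc _ ≤ ‖(f : ℝ → ℂ) p.1‖ * ((Real.exp (-ε * p.1 ^ 2) * Real.exp (-ε * p.2 ^ 2)) *
            ‖(g : ℝ → ℂ) p.2‖) := by gcongr; exact hb _ _
        _ = _ := by ring
  calc ∫ x, inner ℂ ((T g : ℝ → ℂ) x) ((f : ℝ → ℂ) x)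
      = ∫ x : ℝ, ∫ y : ℝ, (f : ℝ → ℂ) x * (starRingEnd ℂ) (k x y * (g : ℝ → ℂ) y) := by
        refine integral_congr_ae ?_
        filter_upwards [hT g] with x hx
        rw [hx, RCLike.inner_apply, ← integral_conj, integral_const_mul]
    _ = ∫ y : ℝ, ∫ x : ℝ, (f : ℝ → ℂ) x * (starRingEnd ℂ) (k x y * (g : ℝ → ℂ) y) :=
        integral_integral_swap hint
    _ = _ := by
        refine integral_congr_ae ?_
        filter_upwards [huL.coeFn_toLp] with y hy
        rw [hy, RCLike.inner_apply, hu, ← integral_mul_const]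
        refine integral_congr_ae (.of_forall fun x => ?_)
        simp only [map_mul]
        ring

/-- The composition of integral operators with Gaussian-dominated kernels. -/
lemma IsKerOp.comp {k l : ℝ → ℝ → ℂ} {T S : Hsp →L[ℂ] Hsp} (hS : IsKerOp l S)
    (hT : IsKerOp k T) (hl : Continuous (Function.uncurry l))
    (hk : Continuous (Function.uncurry k)) {ε : ℝ} (hε : 0 < ε)
    (hbl : ∀ x y, ‖l x y‖ ≤ Real.exp (-ε * x ^ 2) * Real.exp (-ε * y ^ 2))
    (hb : ∀ x y, ‖k x y‖ ≤ Real.exp (-ε * x ^ 2) * Real.exp (-ε * y ^ 2)) :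
    IsKerOp (fun x y => ∫ z : ℝ, l x z * k z y) (S ∘L T) := by
  intro f
  have hfm := (Lp.memLp f).1
  filter_upwards [hS (T f)] with x hx
  have hlx : Continuous (l x) := hl.comp (by fun_prop : Continuous fun z : ℝ => (x, z))
  have hint : Integrable (Function.uncurry fun z y : ℝ => l x z * (k z y * (f : ℝ → ℂ) y))
      (volume.prod volume) := by
    refine (((memLp_exp_neg_mul_sq_s11 hε).integrable_mul (memLp_exp_neg_mul_sq_s11 hε)).mul_prod
      (integrable_exp_mul_norm hε f)).mono' ?_ (.of_forall fun p => ?_)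
    · exact (hlx.comp continuous_fst).aestronglyMeasurable.mul
        (hk.aestronglyMeasurable.mul hfm.comp_snd)
    · simp only [Function.uncurry, norm_mul, Pi.mul_apply]
      have h1 : ‖l x p.1‖ ≤ Real.exp (-ε * p.1 ^ 2) :=
        (hbl x p.1).trans (mul_le_of_le_one_left (Real.exp_pos _).le
          (Real.exp_le_one_iff.2 (by nlinarith [sq_nonneg x])))
      calc _ ≤ Real.exp (-ε * p.1 ^ 2) * ((Real.exp (-ε * p.1 ^ 2) * Real.exp (-ε * p.2 ^ 2)) *
            ‖(f : ℝ → ℂ) p.2‖) := by gcongr; exact hb _ _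
        _ = _ := by ring
  rw [ContinuousLinearMap.comp_apply, hx]
  calc ∫ z : ℝ, l x z * (T f : ℝ → ℂ) z
      = ∫ z : ℝ, ∫ y : ℝ, l x z * (k z y * (f : ℝ → ℂ) y) := by
        refine integral_congr_ae ?_
        filter_upwards [hT f] with z hz
        rw [hz, integral_const_mul]
    _ = ∫ y : ℝ, ∫ z : ℝ, l x z * (k z y * (f : ℝ → ℂ) y) := integral_integral_swap hint
    _ = _ := by
        refine integral_congr_ae (.of_forall fun y => ?_)
        simp only
        rw [← integral_mul_const]
        simp only [mul_assoc]

/-- Perron–Frobenius bound: if the modulus of the kernel of `T` is dominated by a positive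
symmetric kernel that has a positive `L²` eigenfunction `φ` with eigenvalue `t`, then every
eigenvalue of `T` has modulus at most `t`. -/
lemma IsKerOp.norm_eigenvalue_le {h : ℝ → ℝ → ℂ} {T : Hsp →L[ℂ] Hsp} (hT : IsKerOp h T)
    {R : ℝ → ℝ → ℝ} (hRc : Continuous (Function.uncurry R)) (hR0 : ∀ x y, 0 ≤ R x y)
    (hRs : ∀ x y, R x y = R y x) (hhR : ∀ x y, ‖h x y‖ ≤ R x y)
    {φ : ℝ → ℝ} (hφc : Continuous φ) (hφ0 : ∀ x, 0 < φ x) (hφL : MemLp φ 2 volume)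
    {t : ℝ} (hint : ∀ x, Integrable fun y => R x y * φ y)
    (heig : ∀ x, ∫ y : ℝ, R x y * φ y = t * φ x)
    {s : ℂ} {v : Hsp} (hv : v ≠ 0) (hsv : T v = s • v) : ‖s‖ ≤ t := by
  have ht : 0 ≤ t := by
    have : 0 ≤ t * φ 0 := heig 0 ▸ integral_nonneg fun y => mul_nonneg (hR0 _ _) (hφ0 y).le
    exact nonneg_of_mul_nonneg_left this (hφ0 0)
  have hvm := (Lp.memLp v).1
  set I : ENNReal := ∫⁻ x : ℝ, ENNReal.ofReal (φ x) * ‖(v : ℝ → ℂ) x‖ₑ with hI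
  have hvI : Integrable fun x => φ x * ‖(v : ℝ → ℂ) x‖ :=
    hφL.integrable_mul (Lp.memLp v).norm
  have hItop : I ≠ ⊤ := by
    have := hvI.lintegral_lt_top.ne
    convert this using 3 with x
    rw [ENNReal.ofReal_mul (hφ0 x).le, ofReal_norm]
  have hφm : Measurable fun x => ENNReal.ofReal (φ x) := hφc.measurable.ennreal_ofReal
  have hI0 : I ≠ 0 := by
    intro h0
    have h1 := (lintegral_eq_zero_iff' (hφm.aemeasurable.mul hvm.enorm)).1 h0
    apply hv
    refine Lp.ext ?_
    filter_upwards [h1, Lp.coeFn_zero ℂ 2 (volume : Measure ℝ)] with x hx hz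
    rw [hz]
    simpa [hφ0 x, not_le.2 (hφ0 x)] using hx
  have hptw : ∀ᵐ x : ℝ, ‖s‖ₑ * ‖(v : ℝ → ℂ) x‖ₑ ≤
      ∫⁻ y : ℝ, ENNReal.ofReal (R x y) * ‖(v : ℝ → ℂ) y‖ₑ := by
    filter_upwards [hT v, Lp.coeFn_smul s v] with x hx hx'
    rw [← enorm_mul]
    have : s * (v : ℝ → ℂ) x = ∫ y : ℝ, h x y * (v : ℝ → ℂ) y := by
      rw [← hx, hsv, hx']; rfl
    rw [this]
    refine (enorm_integral_le_lintegral_enorm _).trans (lintegral_mono fun y => ?_)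
    rw [enorm_mul]
    gcongr
    rw [← ofReal_norm]
    exact ENNReal.ofReal_le_ofReal (hhR x y)
  have hRm : Measurable fun p : ℝ × ℝ => ENNReal.ofReal (R p.1 p.2) :=
    hRc.measurable.ennreal_ofReal
  have key : ‖s‖ₑ * I ≤ ENNReal.ofReal t * I := by
    calc ‖s‖ₑ * I = ∫⁻ x : ℝ, ENNReal.ofReal (φ x) * (‖s‖ₑ * ‖(v : ℝ → ℂ) x‖ₑ) := by
          rw [hI, ← lintegral_const_mul' _ _ enorm_ne_top]
          refine lintegral_congr fun x => ?_
          ring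
      _ ≤ ∫⁻ x : ℝ, ENNReal.ofReal (φ x) *
            ∫⁻ y : ℝ, ENNReal.ofReal (R x y) * ‖(v : ℝ → ℂ) y‖ₑ := by
          refine lintegral_mono_ae ?_
          filter_upwards [hptw] with x hx
          gcongr
      _ = ∫⁻ x : ℝ, ∫⁻ y : ℝ, ENNReal.ofReal (φ x) *
            (ENNReal.ofReal (R x y) * ‖(v : ℝ → ℂ) y‖ₑ) := by
          refine lintegral_congr fun x => ?_
          rw [lintegral_const_mul' _ _ ENNReal.ofReal_ne_top]
      _ = ∫⁻ y : ℝ, ∫⁻ x : ℝ, ENNReal.ofReal (φ x) *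
            (ENNReal.ofReal (R x y) * ‖(v : ℝ → ℂ) y‖ₑ) := by
          refine lintegral_lintegral_swap ?_
          exact (hφm.comp measurable_fst).aemeasurable.mul
            (hRm.aemeasurable.mul hvm.comp_snd.enorm)
      _ = ∫⁻ y : ℝ, ENNReal.ofReal t * (ENNReal.ofReal (φ y) * ‖(v : ℝ → ℂ) y‖ₑ) := by
          refine lintegral_congr fun y => ?_
          have h1 : ∫⁻ x : ℝ, ENNReal.ofReal (R y x * φ x) = ENNReal.ofReal (t * φ y) := by
            rw [← heig y, ofReal_integral_eq_lintegral_ofReal (hint y)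
              (.of_forall fun x => mul_nonneg (hR0 _ _) (hφ0 x).le)]
          rw [← mul_assoc, ← ENNReal.ofReal_mul ht, ← h1,
            ← lintegral_mul_const' _ _ enorm_ne_top]
          refine lintegral_congr fun x => ?_
          rw [hRs x y, ENNReal.ofReal_mul (hR0 _ _)]
          ring
      _ = ENNReal.ofReal t * I := by
          rw [lintegral_const_mul' _ _ ENNReal.ofReal_ne_top]
  rw [ENNReal.mul_le_mul_iff_left hI0 hItop, ← ofReal_norm] at key
  exact (ENNReal.ofReal_le_ofReal_iff ht).1 key

/-- The Gaussian kernel `exp(-c (x - y)² - β (x² + y²))`. -/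
noncomputable def gaussKer (c β : ℂ) (x y : ℝ) : ℂ :=
  cexp (-c * ((x : ℂ) - y) ^ 2 - β * ((x : ℂ) ^ 2 + (y : ℂ) ^ 2))

lemma continuous_gaussKer (c β : ℂ) : Continuous (Function.uncurry (gaussKer c β)) := by
  unfold gaussKer Function.uncurry
  fun_prop

lemma norm_gaussKer_le {c β : ℂ} (hc : 0 < c.re) (x y : ℝ) :
    ‖gaussKer c β x y‖ ≤ Real.exp (-β.re * x ^ 2) * Real.exp (-β.re * y ^ 2) := by
  rw [gaussKer, Complex.norm_exp, ← Real.exp_add, Real.exp_le_exp]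
  have : (-c * ((x : ℂ) - y) ^ 2 - β * ((x : ℂ) ^ 2 + (y : ℂ) ^ 2)).re =
      -c.re * (x - y) ^ 2 - β.re * (x ^ 2 + y ^ 2) := by
    rw [← Complex.ofReal_sub, ← Complex.ofReal_pow, ← Complex.ofReal_pow, ← Complex.ofReal_pow,
      ← Complex.ofReal_add, Complex.sub_re, Complex.re_mul_ofReal, Complex.re_mul_ofReal,
      Complex.neg_re]
  rw [this]
  nlinarith [mul_nonneg hc.le (sq_nonneg (x - y))]

lemma ofReal_sqrt_eq_cpow {x : ℝ} (hx : 0 ≤ x) : ((√x : ℝ) : ℂ) = (x : ℂ) ^ (1 / 2 : ℂ) := by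
  rw [Real.sqrt_eq_rpow, Complex.ofReal_cpow hx]
  norm_num

lemma integral_conj_gaussKer_mul {c β : ℂ} {A : ℝ} (hA : A = 2 * c.re + 2 * β.re) (hA0 : 0 < A)
    (x y : ℝ) :
    ∫ z : ℝ, (starRingEnd ℂ) (gaussKer c β z x) * gaussKer c β z y =
      (√(π / A) : ℝ) * cexp (-(starRingEnd ℂ) (c + β - c ^ 2 / A) * (x : ℂ) ^ 2
        - (c + β - c ^ 2 / A) * (y : ℂ) ^ 2 + 2 * ((Complex.normSq c / A : ℝ) : ℂ) * x * y) := by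
  have hAC : (A : ℂ) = c + (starRingEnd ℂ) c + β + (starRingEnd ℂ) β := by
    rw [hA, Complex.add_conj, add_assoc, Complex.add_conj]; push_cast; ring
  have hA' : (A : ℂ) ≠ 0 := by exact_mod_cast hA0.ne'
  have h1 : ∀ z : ℝ, (starRingEnd ℂ) (gaussKer c β z x) * gaussKer c β z y =
      cexp ((-(A : ℂ)) * (z : ℂ) ^ 2 + (2 * ((starRingEnd ℂ) c * x + c * y)) * z +
        (-((starRingEnd ℂ) c + (starRingEnd ℂ) β) * (x : ℂ) ^ 2 - (c + β) * (y : ℂ) ^ 2)) := by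
    intro z
    rw [gaussKer, gaussKer, ← Complex.exp_conj, ← Complex.exp_add, hAC]
    congr 1
    simp only [map_sub, map_mul, map_add, map_neg, map_pow, Complex.conj_ofReal]
    ring
  simp_rw [h1]
  rw [integral_cexp_quadratic (by simpa using hA0), ofReal_sqrt_eq_cpow (by positivity)]
  congr 1
  · push_cast; ring_nf
  · congr 1
    rw [Complex.ofReal_div, Complex.normSq_eq_conj_mul_self]
    simp only [map_sub, map_add, map_div₀, map_pow, Complex.conj_ofReal]
    field_simp
    ring

lemma integrable_exp_quadratic {P : ℝ} (hP : 0 < P) (L M : ℝ) :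
    Integrable fun y : ℝ => Real.exp (-P * y ^ 2 + L * y + M) := by
  have := (integrable_cexp_quadratic (b := (P : ℂ)) (by simpa using hP) L M).re
  refine this.congr (.of_forall fun y => ?_)
  simp only [RCLike.re_eq_complex_re]
  rw [← Complex.exp_ofReal_re]
  push_cast
  rfl

lemma integral_exp_quadratic {P : ℝ} (hP : 0 < P) (L M : ℝ) :
    ∫ y : ℝ, Real.exp (-P * y ^ 2 + L * y + M) = √(π / P) * Real.exp (M + L ^ 2 / (4 * P)) := by
  have h := integral_cexp_quadratic (b := -(P : ℂ)) (by simpa using hP) L M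
  apply Complex.ofReal_injective
  rw [← integral_complex_ofReal, Complex.ofReal_mul, ofReal_sqrt_eq_cpow (by positivity)]
  push_cast
  rw [h]
  congr 2
  · ring
  · field_simp
    ring

/-- The Gaussian `exp(-(r - i Im p) x²)` is a top eigenvector of `T* T` when `T` has a Gaussian
kernel. -/
lemma IsKerOp.gaussKer_top_eigenvector {c β : ℂ} (hc : 0 < c.re) (hβ : 0 < β.re)
    {A : ℝ} (hA : A = 2 * c.re + 2 * β.re) {p : ℂ} (hp : p = c + β - c ^ 2 / A)
    {q : ℝ} (hq : q = Complex.normSq c / A) {r : ℝ} (hp0 : 0 < p.re)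
    (hr : 0 < r) (hrq : r ^ 2 = p.re ^ 2 - q ^ 2)
    {T : Hsp →L[ℂ] Hsp} (hT : IsKerOp (gaussKer c β) T)
    {e : Hsp} (he : ∀ᵐ x : ℝ, (e : ℝ → ℂ) x = cexp (-(r - p.im * Complex.I) * (x : ℂ) ^ 2)) :
    ∃ t : ℝ, (ContinuousLinearMap.adjoint T ∘L T) e = (t : ℂ) • e ∧
      ∀ s : ℂ, (∃ v : Hsp, v ≠ 0 ∧ (ContinuousLinearMap.adjoint T ∘L T) v = s • v) →
        ‖s‖ ≤ t := by
  have hA0 : 0 < A := by rw [hA]; positivity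
  have hk := continuous_gaussKer c β
  have hb := norm_gaussKer_le (β := β) hc
  have hk' : Continuous (Function.uncurry fun x y => (starRingEnd ℂ) (gaussKer c β y x)) :=
    continuous_uncurry_conj_swap hk
  have hb' : ∀ x y, ‖(starRingEnd ℂ) (gaussKer c β y x)‖ ≤
      Real.exp (-β.re * x ^ 2) * Real.exp (-β.re * y ^ 2) := fun x y => by
    rw [RCLike.norm_conj, mul_comm]
    exact hb y x
  have hTT := (hT.adjoint hk hβ hb).comp hT hk' hk hβ hb' hb
  set R : ℝ → ℝ → ℝ := fun x y =>
    √(π / A) * Real.exp (-p.re * x ^ 2 - p.re * y ^ 2 + 2 * q * x * y) with hR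
  set φ : ℝ → ℝ := fun x => Real.exp (-r * x ^ 2) with hφ
  set t : ℝ := √(π / A) * √(π / (p.re + r)) with ht
  have hker : ∀ x y : ℝ, ∫ z : ℝ, (starRingEnd ℂ) (gaussKer c β z x) * gaussKer c β z y =
      cexp (p.im * Complex.I * (x : ℂ) ^ 2) * (R x y : ℂ) *
        cexp (-(p.im * Complex.I) * (y : ℂ) ^ 2) := by
    intro x y
    rw [integral_conj_gaussKer_mul hA hA0, ← hp, ← hq, hR]
    push_cast
    rw [mul_left_comm (cexp (p.im * Complex.I * (x : ℂ) ^ 2)), mul_assoc ((√(π / A) : ℝ) : ℂ),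
      ← Complex.exp_add, ← Complex.exp_add]
    congr 2
    have h1 : (starRingEnd ℂ) p = p.re - p.im * Complex.I := by
      apply Complex.ext <;> simp
    have h2 := Complex.re_add_im p
    rw [h1]
    nth_rw 3 [← h2]
    ring
  have hRφ : ∀ x y, R x y * φ y =
      √(π / A) * Real.exp (-(p.re + r) * y ^ 2 + (2 * q * x) * y + (-p.re * x ^ 2)) := by
    intro x y
    rw [hR, hφ, mul_assoc, ← Real.exp_add]
    congr 2
    ring
  have hint : ∀ x, Integrable fun y => R x y * φ y := by
    intro x
    simp_rw [hRφ]
    exact (integrable_exp_quadratic (by positivity) _ _).const_mul _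
  have heig : ∀ x, ∫ y : ℝ, R x y * φ y = t * φ x := by
    intro x
    simp_rw [hRφ]
    rw [integral_const_mul, integral_exp_quadratic (by positivity),
      show -p.re * x ^ 2 + (2 * q * x) ^ 2 / (4 * (p.re + r)) = -r * x ^ 2 by
        have : p.re + r ≠ 0 := by positivity
        field_simp
        linear_combination 4 * x ^ 2 * hrq]
    exact (mul_assoc _ _ _).symm
  have hn : ∀ x : ℝ, ‖cexp (p.im * Complex.I * (x : ℂ) ^ 2)‖ = 1 := by
    intro x
    rw [show (p.im * Complex.I * (x : ℂ) ^ 2) = ((p.im * x ^ 2 : ℝ) : ℂ) * Complex.I by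
      push_cast; ring]
    exact Complex.norm_exp_ofReal_mul_I _
  have hR0 : ∀ x y, 0 ≤ R x y := fun x y => by positivity
  refine ⟨t, ?_, fun s ⟨v, hv, hsv⟩ => ?_⟩
  · refine Lp.ext ?_
    filter_upwards [hTT e, Lp.coeFn_smul (t : ℂ) e, he] with x hx hx' hex
    rw [hx, hx', Pi.smul_apply, smul_eq_mul, hex]
    calc _ = ∫ y : ℝ, cexp (p.im * Complex.I * (x : ℂ) ^ 2) * ((R x y * φ y : ℝ) : ℂ) := by
          refine integral_congr_ae ?_
          filter_upwards [he] with y hy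
          rw [hker, hy, mul_assoc, mul_assoc, ← Complex.exp_add]
          push_cast
          rw [hφ]
          push_cast
          congr 4
          ring
      _ = _ := by
          rw [integral_const_mul, integral_complex_ofReal, heig, hφ]
          push_cast
          rw [mul_left_comm, ← Complex.exp_add]
          congr 2
          ring
  · refine hTT.norm_eigenvalue_le (R := R) (φ := φ) (by rw [hR]; unfold Function.uncurry; fun_prop)
      hR0 (fun x y => ?_) (fun x y => ?_) (by rw [hφ]; fun_prop) (fun x => Real.exp_pos _)
      (memLp_exp_neg_mul_sq_s11 hr) hint heig hv hsv
    · rw [hR]; ring_nf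
    · rw [hker, norm_mul, norm_mul, hn, neg_mul, Complex.exp_neg, norm_inv, hn,
        Complex.norm_real, Real.norm_of_nonneg (hR0 x y)]
      simp

lemma norm_inner_gaussian_sq {γ₁ γ₂ : ℂ} (h₁ : 0 < γ₁.re) (h₂ : 0 < γ₂.re) {e₁ e₂ : Hsp}
    (he₁ : ∀ᵐ x : ℝ, (e₁ : ℝ → ℂ) x = cexp (-γ₁ * (x : ℂ) ^ 2))
    (he₂ : ∀ᵐ x : ℝ, (e₂ : ℝ → ℂ) x = cexp (-γ₂ * (x : ℂ) ^ 2)) :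
    ‖(inner ℂ e₁ e₂ : ℂ)‖ ^ 2 = π / ‖(starRingEnd ℂ) γ₁ + γ₂‖ := by
  have h : (inner ℂ e₁ e₂ : ℂ) = (π / ((starRingEnd ℂ) γ₁ + γ₂)) ^ (1 / 2 : ℂ) := by
    rw [L2.inner_def, ← integral_gaussian_complex (by simp; positivity)]
    refine integral_congr_ae ?_
    filter_upwards [he₁, he₂] with x hx₁ hx₂
    rw [hx₁, hx₂, RCLike.inner_apply, ← Complex.exp_conj, ← Complex.exp_add]
    congr 1
    simp only [map_mul, map_neg, map_pow, Complex.conj_ofReal]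
    ring
  rw [h, show (1 / 2 : ℂ) = ((1 / 2 : ℝ) : ℂ) by norm_num, Complex.norm_cpow_real,
    ← Real.sqrt_eq_rpow, Real.sq_sqrt (norm_nonneg _), norm_div, Complex.norm_real,
    Real.norm_of_nonneg pi_pos.le]

lemma norm_gaussian_pow_four {γ : ℂ} (h : 0 < γ.re) {e : Hsp}
    (he : ∀ᵐ x : ℝ, (e : ℝ → ℂ) x = cexp (-γ * (x : ℂ) ^ 2)) :
    ‖e‖ ^ 4 = π / (2 * γ.re) := by
  have h2 := norm_inner_gaussian_sq h h he he
  rw [inner_self_eq_norm_sq_to_K, add_comm, Complex.add_conj, Complex.norm_real,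
    Real.norm_of_nonneg (by positivity)] at h2
  rw [← h2]
  simp
  ring

/-- A nonzero vector can be scaled to a unit vector whose distance to a given unit vector is
controlled by the overlap. -/
lemma exists_smul_norm_sub_sq_le {E : Type*} [NormedAddCommGroup E] [InnerProductSpace ℂ E]
    {e g : E} (he : e ≠ 0) (hg : ‖g‖ = 1) :
    ∃ c : ℂ, ‖c • e‖ = 1 ∧
      ‖c • e - g‖ ^ 2 ≤ 2 * (1 - ‖(inner ℂ e g : ℂ)‖ ^ 4 / ‖e‖ ^ 4) := by
  have he' : 0 < ‖e‖ := norm_pos_iff.2 he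
  obtain ⟨u, hu, huw⟩ := RCLike.exists_norm_eq_mul_self (inner ℂ e g : ℂ)
  have hn : ‖((starRingEnd ℂ) u / ‖e‖ : ℂ) • e‖ = 1 := by
    rw [norm_smul, norm_div, RCLike.norm_conj, hu, Complex.norm_real, norm_norm,
      one_div_mul_cancel he'.ne']
  refine ⟨(starRingEnd ℂ) u / ‖e‖, hn, ?_⟩
  set ρ : ℝ := ‖(inner ℂ e g : ℂ)‖ / ‖e‖ with hρ
  have hin : (inner ℂ (((starRingEnd ℂ) u / ‖e‖ : ℂ) • e) g : ℂ) = (ρ : ℂ) := by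
    rw [inner_smul_left, map_div₀, Complex.conj_conj, Complex.conj_ofReal, div_mul_eq_mul_div,
      ← huw, hρ]
    push_cast
    rfl
  have hρ0 : 0 ≤ ρ := by positivity
  have hρ1 : ρ ≤ 1 := by
    rw [hρ, div_le_one he']
    simpa [hg] using norm_inner_le_norm (𝕜 := ℂ) e g
  rw [@norm_sub_sq ℂ, hin, hn, hg, ← div_pow, ← hρ]
  have h4 : ρ ^ 4 ≤ ρ := by
    simpa using pow_le_pow_of_le_one hρ0 hρ1 (show 1 ≤ 4 by norm_num)
  simp only [RCLike.re_eq_complex_re, Complex.ofReal_re]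
  linarith

lemma exists_smul_gaussian_near_gaussC {α r s : ℝ} (hα : 0 < α) (hr : 0 < r) {e g : Hsp}
    (he : ∀ᵐ x : ℝ, (e : ℝ → ℂ) x = cexp (-(r - s * Complex.I) * (x : ℂ) ^ 2))
    (hg : ∀ᵐ x : ℝ, (g : ℝ → ℂ) x = gaussC (α : ℂ) x) :
    ∃ c : ℂ, ‖c • e‖ = 1 ∧
      ‖c • e - g‖ ^ 2 ≤ 2 * (((r - α) ^ 2 + s ^ 2) / ((r + α) ^ 2 + s ^ 2)) := by
  have hγ : ((r : ℂ) - s * Complex.I).re = r := by simp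
  have hγ0 : 0 < ((r : ℂ) - s * Complex.I).re := by rwa [hγ]
  have hα0 : 0 < (α : ℂ).re := by simpa
  obtain ⟨f, hf⟩ : ∃ f : Hsp, ∀ᵐ x : ℝ, (f : ℝ → ℂ) x = cexp (-(α : ℂ) * (x : ℂ) ^ 2) :=
    ⟨(memLp_cexp_neg_mul_sq hα0).toLp _, MemLp.coeFn_toLp _⟩
  set N : ℂ := (2 * α / (π : ℂ)) ^ (1 / 4 : ℂ) with hN
  have hN4 : ‖N‖ ^ 4 = 2 * α / π := by
    rw [hN, show (1 / 4 : ℂ) = ((1 / 4 : ℝ) : ℂ) by norm_num, Complex.norm_cpow_real,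
      show (2 * α / (π : ℂ)) = ((2 * α / π : ℝ) : ℂ) by push_cast; rfl, Complex.norm_real,
      Real.norm_of_nonneg (by positivity), ← Real.rpow_natCast, ← Real.rpow_mul (by positivity)]
    norm_num
  have hgf : g = N • f := by
    refine Lp.ext ?_
    filter_upwards [hg, hf, Lp.coeFn_smul N f] with x h1 h2 h3
    rw [h1, h3, Pi.smul_apply, h2, smul_eq_mul, gaussC]
  have hg1 : ‖g‖ = 1 := by
    have : ‖g‖ ^ 4 = 1 := by
      rw [hgf, norm_smul, mul_pow, hN4, norm_gaussian_pow_four hα0 hf, Complex.ofReal_re]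
      field_simp
    exact (pow_eq_one_iff_of_nonneg (norm_nonneg _) (by norm_num)).1 this
  have he4 := norm_gaussian_pow_four hγ0 he
  rw [hγ] at he4
  have he0 : e ≠ 0 := by
    rintro rfl
    have : 0 < π / (2 * r) := by positivity
    rw [norm_zero, zero_pow (by norm_num)] at he4
    linarith
  obtain ⟨c, hc, hle⟩ := exists_smul_norm_sub_sq_le he0 hg1
  refine ⟨c, hc, hle.trans_eq ?_⟩
  have hD : ‖(starRingEnd ℂ) ((r : ℂ) - s * Complex.I) + α‖ ^ 2 = (r + α) ^ 2 + s ^ 2 := by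
    rw [← Complex.normSq_eq_norm_sq, Complex.normSq_apply]
    simp
    ring
  have hw : ‖(inner ℂ e g : ℂ)‖ ^ 4 = (2 * α / π) * (π ^ 2 / ((r + α) ^ 2 + s ^ 2)) := by
    rw [hgf, inner_smul_right, norm_mul, mul_pow, hN4,
      show ‖(inner ℂ e f : ℂ)‖ ^ 4 = (‖(inner ℂ e f : ℂ)‖ ^ 2) ^ 2 by ring,
      norm_inner_gaussian_sq hγ0 hα0 he hf, div_pow, hD]
  rw [hw, he4]
  have hD0 : (r + α) ^ 2 + s ^ 2 ≠ 0 := by positivity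
  field_simp
  ring

lemma gaussKer_exponent_bounds {x y κ u : ℝ} (hx : 0 < x) (hxy : x ^ 2 + y ^ 2 = 1) (hκ : 0 < κ)
    (hu : 0 < u) {A P q s : ℝ} (hA : A = x * (2 * u + κ))
    (hP : P = u * x + κ * x / 2 - u ^ 2 * (x ^ 2 - y ^ 2) / A) (hq : q = u ^ 2 / A)
    (hs : s = u * y - κ * y / 2 - 2 * u ^ 2 * x * y / A) :
    q < P ∧ |P ^ 2 - q ^ 2 - u * κ| ≤ κ ^ 2 ∧ s ^ 2 ≤ κ ^ 4 / (16 * u ^ 2) := by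
  have hm : 0 < 2 * u + κ := by positivity
  have hA0 : 0 < A := by rw [hA]; positivity
  have hx1 : x ^ 2 ≤ 1 := by nlinarith [sq_nonneg y]
  have hy : y ^ 2 = 1 - x ^ 2 := by linarith
  have hy1 : y ^ 2 ≤ 1 := by nlinarith [sq_nonneg x]
  have hD : P - q = x * ((2 * u * κ + κ ^ 2 / 2) / (2 * u + κ)) := by
    rw [hP, hq, hA, hy]
    field_simp
    ring
  have hPq : P ^ 2 - q ^ 2 - u * κ = x ^ 2 * ((2 * u * κ + κ ^ 2 / 2) / (2 * u + κ)) ^ 2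
      - u * κ * (κ * (3 * u + κ) / (2 * u + κ) ^ 2) := by
    have : P = q + x * ((2 * u * κ + κ ^ 2 / 2) / (2 * u + κ)) := by linarith
    rw [this, hq, hA]
    field_simp
    ring
  have hE0 : 0 ≤ (2 * u * κ + κ ^ 2 / 2) / (2 * u + κ) := by positivity
  have hE1 : (2 * u * κ + κ ^ 2 / 2) / (2 * u + κ) ≤ κ := by
    rw [div_le_iff₀ hm]
    nlinarith [sq_nonneg κ]
  have hF : u * κ * (κ * (3 * u + κ) / (2 * u + κ) ^ 2) ≤ κ ^ 2 := by
    rw [mul_div_assoc', div_le_iff₀ (by positivity)]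
    have : 0 ≤ κ ^ 2 * (u ^ 2 + 3 * u * κ + κ ^ 2) := by positivity
    nlinarith
  have hF0 : 0 ≤ u * κ * (κ * (3 * u + κ) / (2 * u + κ) ^ 2) := by positivity
  have hE2 : ((2 * u * κ + κ ^ 2 / 2) / (2 * u + κ)) ^ 2 ≤ κ ^ 2 := pow_le_pow_left₀ hE0 hE1 2
  have hG0 : 0 ≤ x ^ 2 * ((2 * u * κ + κ ^ 2 / 2) / (2 * u + κ)) ^ 2 := by positivity
  have hG : x ^ 2 * ((2 * u * κ + κ ^ 2 / 2) / (2 * u + κ)) ^ 2 ≤ κ ^ 2 :=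
    (mul_le_of_le_one_left (sq_nonneg _) hx1).trans hE2
  refine ⟨?_, ?_, ?_⟩
  · have : 0 < x * ((2 * u * κ + κ ^ 2 / 2) / (2 * u + κ)) := by positivity
    linarith
  · rw [hPq, abs_le]
    constructor <;> linarith
  · have h1 : s = -y * (κ ^ 2 / (2 * (2 * u + κ))) := by
      rw [hs, hA]
      field_simp
      ring
    calc s ^ 2 = y ^ 2 * (κ ^ 2 / (2 * (2 * u + κ))) ^ 2 := by rw [h1]; ring
      _ ≤ (κ ^ 2 / (2 * (2 * u + κ))) ^ 2 := mul_le_of_le_one_left (sq_nonneg _) hy1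
      _ ≤ (κ ^ 2 / (4 * u)) ^ 2 :=
        pow_le_pow_left₀ (by positivity)
          (div_le_div_of_nonneg_left (by positivity) (by positivity) (by linarith)) 2
      _ = _ := by field_simp; ring

lemma gaussian_distance_ratio_le {κ u α r s : ℝ} (hκ : 0 < κ) (hu : 1 ≤ u) (hα : 0 < α)
    (hr : 0 < r) (hα2 : α ^ 2 = u * κ) (hrα : |r ^ 2 - u * κ| ≤ κ ^ 2)
    (hs : s ^ 2 ≤ κ ^ 4 / (16 * u ^ 2)) :
    ((r - α) ^ 2 + s ^ 2) / ((r + α) ^ 2 + s ^ 2) ≤ (κ ^ 2 + κ ^ 3) / u ^ 2 := by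
  have hu0 : 0 < u := by linarith
  have h1 : (r - α) ^ 2 * (u * κ) ≤ κ ^ 4 := by
    calc (r - α) ^ 2 * (u * κ) ≤ (r - α) ^ 2 * (r + α) ^ 2 := by
          gcongr; rw [← hα2]; gcongr; linarith
      _ = |r ^ 2 - u * κ| ^ 2 := by rw [sq_abs, ← hα2]; ring
      _ ≤ (κ ^ 2) ^ 2 := by gcongr
      _ = κ ^ 4 := by ring
  have h2 : (r - α) ^ 2 ≤ κ ^ 3 / u := by
    rw [le_div_iff₀ hu0]
    refine le_of_mul_le_mul_right ?_ hκ
    linarith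
  have h3 : s ^ 2 ≤ κ ^ 4 / u := by
    refine hs.trans ?_
    gcongr
    nlinarith
  calc _ ≤ (κ ^ 3 / u + κ ^ 4 / u) / (u * κ) := by
        gcongr
        rw [← hα2]
        nlinarith [sq_nonneg s, mul_pos hr hα, sq_nonneg r]
    _ = _ := by field_simp

lemma kerHr_eq_gaussKer (W : ℝ) (ζ : ℂ) (a b : ℝ) :
    kerHr W ζ a b = gaussKer ((W : ℂ) ^ 2 * ζ ^ 2) (((a : ℂ) + (b : ℂ) * Complex.I) / 2) := by
  funext x y
  rw [kerHr, gaussKer, neg_mul, neg_mul]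

/-- if `ζ²(a+ib)` is real and positive and `α > 0` satisfies
`α² = W²ζ²(a+ib)`, then the top (normalized) eigenfunction `g̃` of `K_hr*K_hr`
can be chosen with `‖g̃ − g_α‖ ≤ C'·W^{−2}`. -/
theorem stmt_11 :
    ∀ (ζ : ℂ) (a b : ℝ), ‖ζ‖ = 1 → 0 < (ζ^2).re → 0 < a →
    (ζ^2 * ((a : ℂ) + (b : ℂ) * Complex.I)).im = 0 →
    0 < (ζ^2 * ((a : ℂ) + (b : ℂ) * Complex.I)).re →
    ∃ C' : ℝ, 0 < C' ∧ ∃ W₀ : ℝ, 0 < W₀ ∧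
    ∀ W : ℝ, W₀ ≤ W →
    ∀ α : ℝ, 0 < α → ((α : ℂ))^2 = (W : ℂ)^2 * ζ^2 * ((a : ℂ) + (b : ℂ) * Complex.I) →
    ∀ Khr : Hsp →L[ℂ] Hsp, IsKerOp (kerHr W ζ a b) Khr →
    ∀ g : Hsp, (∀ᵐ x : ℝ, (g : ℝ → ℂ) x = gaussC (α : ℂ) x) →
    ∃ (t : ℝ) (gt : Hsp),
      ‖gt‖ = 1 ∧
      (ContinuousLinearMap.adjoint Khr ∘L Khr) gt = ((t : ℂ)) • gt ∧
      (∀ s : ℂ, (∃ v : Hsp, v ≠ 0 ∧ (ContinuousLinearMap.adjoint Khr ∘L Khr) v = s • v) →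
        ‖s‖ ≤ t) ∧
      ‖gt - g‖ ≤ C' * W ^ (-2 : ℝ) := by
  have two_mul_le_sq : ∀ M : ℝ, 0 ≤ M → 2 * M ≤ (1 + 2 * M) ^ 2 := fun M hM => by nlinarith
  intro ζ a b hζ hx ha him hre
  have hz1 : ‖ζ ^ 2‖ = 1 := by rw [norm_pow, hζ, one_pow]
  set κ : ℝ := (ζ ^ 2 * ((a : ℂ) + (b : ℂ) * Complex.I)).re with hκ
  have hκC : ζ ^ 2 * ((a : ℂ) + (b : ℂ) * Complex.I) = (κ : ℂ) :=
    Complex.ext rfl (by simpa using him)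
  refine ⟨1 + 2 * (κ ^ 2 + κ ^ 3), by positivity, 1, one_pos, ?_⟩
  intro W hW α hα hα2 Khr hK g hg
  rw [kerHr_eq_gaussKer] at hK
  have hα2' : α ^ 2 = W ^ 2 * κ := by
    rw [mul_assoc, hκC] at hα2
    exact_mod_cast hα2
  have hu : 1 ≤ W ^ 2 := by nlinarith
  have hu0 : 0 < W ^ 2 := by positivity
  have hxy : (ζ ^ 2).re ^ 2 + (ζ ^ 2).im ^ 2 = 1 := by
    have := Complex.normSq_eq_norm_sq (ζ ^ 2)
    rw [hz1, Complex.normSq_apply] at this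
    linarith
  generalize ζ ^ 2 = z at *
  have hκ' : κ = z.re * a - z.im * b := by simpa using hκ
  have him' : z.re * b + z.im * a = 0 := by simpa using him
  have ha' : a = κ * z.re := by
    rw [hκ']; linear_combination -a * hxy + z.im * him'
  have hb' : b = -(κ * z.im) := by
    rw [hκ']; linear_combination -b * hxy + z.re * him'
  clear_value κ
  set c : ℂ := (W : ℂ) ^ 2 * z with hc
  set β : ℂ := ((a : ℂ) + (b : ℂ) * Complex.I) / 2 with hβ
  have hcre : c.re = W ^ 2 * z.re := by
    rw [hc, ← Complex.ofReal_pow, Complex.re_ofReal_mul]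
  have hcim : c.im = W ^ 2 * z.im := by
    rw [hc, ← Complex.ofReal_pow, Complex.im_ofReal_mul]
  have hβre : β.re = a / 2 := by simp [hβ]
  have hβim : β.im = b / 2 := by simp [hβ]
  set A : ℝ := 2 * c.re + 2 * β.re with hA
  have hA' : A = z.re * (2 * W ^ 2 + κ) := by rw [hA, hcre, hβre, ha']; ring
  set p : ℂ := c + β - c ^ 2 / A with hp
  set q : ℝ := Complex.normSq c / A with hq
  have hpre : p.re = W ^ 2 * z.re + κ * z.re / 2 -
      (W ^ 2) ^ 2 * (z.re ^ 2 - z.im ^ 2) / A := by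
    rw [hp, Complex.sub_re, Complex.div_ofReal_re, Complex.add_re, sq c, Complex.mul_re c c, hcre,
      hcim, hβre, ha']
    ring
  have hpim : p.im = W ^ 2 * z.im - κ * z.im / 2 -
      2 * (W ^ 2) ^ 2 * z.re * z.im / A := by
    rw [hp, Complex.sub_im, Complex.div_ofReal_im, Complex.add_im, sq c, Complex.mul_im c c, hcre,
      hcim, hβim, hb']
    ring
  have hq' : q = (W ^ 2) ^ 2 / A := by
    rw [hq, Complex.normSq_apply, hcre, hcim]
    congr 1
    linear_combination (W ^ 2) ^ 2 * hxy
  obtain ⟨hqp, hrα, hs⟩ := gaussKer_exponent_bounds hx hxy hre hu0 hA' hpre hq' hpim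
  have hA0 : 0 < A := by rw [hA']; positivity
  have hq0 : 0 < q := by rw [hq']; positivity
  have hpq : 0 < p.re ^ 2 - q ^ 2 := by nlinarith
  set r : ℝ := √(p.re ^ 2 - q ^ 2) with hr
  have hr0 : 0 < r := Real.sqrt_pos.2 hpq
  have hr2 : r ^ 2 = p.re ^ 2 - q ^ 2 := Real.sq_sqrt hpq.le
  have hγ : 0 < ((r : ℂ) - p.im * Complex.I).re := by simpa using hr0
  obtain ⟨e, he⟩ : ∃ e : Hsp, ∀ᵐ x : ℝ,
      (e : ℝ → ℂ) x = cexp (-((r : ℂ) - p.im * Complex.I) * (x : ℂ) ^ 2) :=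
    ⟨(memLp_cexp_neg_mul_sq hγ).toLp _, MemLp.coeFn_toLp _⟩
  obtain ⟨t, hte, htop⟩ := hK.gaussKer_top_eigenvector (by rw [hcre]; positivity)
    (by rw [hβre]; positivity) hA hp hq (hq0.trans hqp) hr0 hr2 he
  obtain ⟨d, hd, hdg⟩ := exists_smul_gaussian_near_gaussC hα hr0 he hg
  refine ⟨t, d • e, hd, ?_, htop, ?_⟩
  · rw [map_smul, hte, smul_comm]
  · have hratio := gaussian_distance_ratio_le hre hu hα hr0 hα2' (by rwa [hr2]) hs
    rw [Real.rpow_neg (by positivity), Real.rpow_two, ← div_eq_mul_inv]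
    refine le_of_sq_le_sq ?_ (by positivity)
    calc ‖d • e - g‖ ^ 2 ≤ 2 * ((κ ^ 2 + κ ^ 3) / (W ^ 2) ^ 2) := hdg.trans (by gcongr)
      _ = 2 * (κ ^ 2 + κ ^ 3) / (W ^ 2) ^ 2 := by ring
      _ ≤ (1 + 2 * (κ ^ 2 + κ ^ 3)) ^ 2 / (W ^ 2) ^ 2 :=
        div_le_div_of_nonneg_right (two_mul_le_sq _ (by positivity)) (by positivity)
      _ = _ := by rw [div_pow]
end

section
/- For every ε > 0 there exist constants C', W₀ > 0 (depending on ε, C, and the constant in the hypothesis on α) such that for all W ≥ W₀ and all real α > 0 satisfying |α² − W²ζ²U''(0)/2| ≤ C·W^{3/2}, the double integral I(α) = ∬_{ℝ²} exp(−W²ζ²(x−y)² − U(x)/2 − αx² − U(y)/2 − αy²) dx dy satisfies |I(α) − √(π/(W²ζ² + α))·√(π/(2α))| ≤ C'·W^{−3/2+ε}·|√(π/(W²ζ² + α))·√(π/(2α))| (principal square roots). -/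
open MeasureTheory Complex Real
open scoped ComplexInnerProductSpace

lemma norm_le_mul_abs_pow_succ_of_hasDerivAt {h d : ℝ → ℂ} {M : ℝ} {n : ℕ} (hM : 0 ≤ M)
    (h0 : h 0 = 0) (hd : ∀ x, HasDerivAt h (d x) x)
    (hb : ∀ x, |x| ≤ 1 → ‖d x‖ ≤ M * |x| ^ n) {x : ℝ} (hx : |x| ≤ 1) :
    ‖h x‖ ≤ M * |x| ^ (n + 1) := by
  have key := (convex_Icc (-|x|) |x|).norm_image_sub_le_of_norm_hasDerivWithin_le
    (f := h) (f' := d) (C := M * |x| ^ n) (x := 0) (y := x)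
    (fun y _ => (hd y).hasDerivWithinAt)
    (fun y hy => by
      have hy' : |y| ≤ |x| := abs_le.2 hy
      exact (hb y (hy'.trans hx)).trans (by gcongr))
    ⟨by simp, by simp⟩ ⟨neg_abs_le x, le_abs_self x⟩
  rw [h0, sub_zero, sub_zero, Real.norm_eq_abs] at key
  rwa [pow_succ, ← mul_assoc]

lemma exists_norm_sub_quadratic_le {U : ℝ → ℂ} (hU : ContDiff ℝ (⊤ : ℕ∞) U) (h0 : U 0 = 0)
    (h1 : deriv U 0 = 0) :
    ∃ M : ℝ, 0 ≤ M ∧ ∀ x : ℝ, |x| ≤ 1 →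
      ‖U x - deriv (deriv U) 0 / 2 * (x : ℂ) ^ 2‖ ≤ M * |x| ^ 3 := by
  have hU1 : ContDiff ℝ (⊤ : ℕ∞) (deriv U) := (contDiff_infty_iff_deriv.1 hU).2
  have hU2 : ContDiff ℝ (⊤ : ℕ∞) (deriv (deriv U)) := (contDiff_infty_iff_deriv.1 hU1).2
  have hU3 : ContDiff ℝ (⊤ : ℕ∞) (deriv (deriv (deriv U))) := (contDiff_infty_iff_deriv.1 hU2).2
  have diff {f : ℝ → ℂ} (hf : ContDiff ℝ (⊤ : ℕ∞) f) (x : ℝ) : HasDerivAt f (deriv f x) x :=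
    ((contDiff_infty_iff_deriv.1 hf).1 x).hasDerivAt
  obtain ⟨M, hM⟩ := (isCompact_Icc (a := (-1 : ℝ)) (b := 1)).exists_bound_of_continuousOn
    hU3.continuous.continuousOn
  have hM0 : 0 ≤ M := (norm_nonneg _).trans (hM 0 ⟨by norm_num, by norm_num⟩)
  have ofReal_deriv (x : ℝ) : HasDerivAt (fun y : ℝ => (y : ℂ)) 1 x := ofRealCLM.hasDerivAt
  refine ⟨M, hM0, fun x hx => ?_⟩
  refine norm_le_mul_abs_pow_succ_of_hasDerivAt
    (h := fun x : ℝ => U x - deriv (deriv U) 0 / 2 * (x : ℂ) ^ 2)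
    (d := fun x : ℝ => deriv U x - deriv (deriv U) 0 * x) (n := 2) hM0 (by simp [h0])
    (fun x => ?_) (fun x hx => ?_) hx
  · refine ((diff hU x).sub (((ofReal_deriv x).pow 2).const_mul
      (deriv (deriv U) 0 / 2))).congr_deriv ?_
    push_cast
    ring
  refine norm_le_mul_abs_pow_succ_of_hasDerivAt
    (h := fun x : ℝ => deriv U x - deriv (deriv U) 0 * x)
    (d := fun x : ℝ => deriv (deriv U) x - deriv (deriv U) 0) (n := 1) hM0 (by simp [h1])
    (fun x => ?_) (fun x hx => ?_) hx
  · refine ((diff hU1 x).sub ((ofReal_deriv x).const_mul (deriv (deriv U) 0))).congr_deriv ?_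
    rw [mul_one]
  refine norm_le_mul_abs_pow_succ_of_hasDerivAt
    (h := fun x : ℝ => deriv (deriv U) x - deriv (deriv U) 0)
    (d := fun x : ℝ => deriv (deriv (deriv U)) x) (n := 0) hM0 (by simp)
    (fun x => ?_) (fun x hx => ?_) hx
  · exact (diff hU2 x).sub_const _
  · simpa using hM x (abs_le.1 hx)

lemma norm_pi_div_cpow_half {z : ℂ} (hz : z ≠ 0) :
    ‖((π : ℂ) / z) ^ (1 / 2 : ℂ)‖ = √(π / ‖z‖) := by
  have h : ((π : ℂ) / z) ≠ 0 := div_ne_zero (by exact_mod_cast Real.pi_ne_zero) hz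
  have := Complex.norm_cpow_of_ne_zero h (1 / 2 : ℂ)
  rw [this, Real.sqrt_eq_rpow]
  simp [abs_of_pos Real.pi_pos]

lemma cpow_half_sq (z : ℂ) : (z ^ (1 / 2 : ℂ)) ^ 2 = z := by
  simp

lemma abs_im_le_re_cpow_half {z : ℂ} (hz : 0 < z.re) :
    |(z ^ (1 / 2 : ℂ)).im| ≤ (z ^ (1 / 2 : ℂ)).re := by
  have hre : 0 ≤ (z ^ (1 / 2 : ℂ)).re := by
    have h0 : z ≠ 0 := by rintro rfl; simp at hz
    rw [Complex.cpow_def_of_ne_zero h0, Complex.exp_re]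
    refine mul_nonneg (Real.exp_pos _).le (Real.cos_nonneg_of_mem_Icc ?_)
    have him : (Complex.log z * (1 / 2)).im = z.arg / 2 := by
      simp [Complex.mul_im, Complex.log_im]
      ring
    rw [him]
    have := Complex.neg_pi_lt_arg z
    have := Complex.arg_le_pi z
    constructor <;> linarith
  have hsq := congrArg Complex.re (cpow_half_sq z)
  rw [sq, Complex.mul_re] at hsq
  exact abs_le_of_sq_le_sq (by nlinarith) hre

/-- Relative Lipschitz estimate for `z ↦ √(π / z)` on the right half-plane. -/
lemma norm_pi_div_cpow_half_sub_le {z w : ℂ} (hz : 0 < z.re) (hw : 0 < w.re) :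
    ‖((π : ℂ) / z) ^ (1 / 2 : ℂ) - ((π : ℂ) / w) ^ (1 / 2 : ℂ)‖
      ≤ ‖((π : ℂ) / w) ^ (1 / 2 : ℂ)‖ * (‖z - w‖ / ‖z‖) := by
  have hz0 : z ≠ 0 := by rintro rfl; simp at hz
  have hw0 : w ≠ 0 := by rintro rfl; simp at hw
  have re_pos {v : ℂ} (hv : 0 < v.re) : 0 < ((π : ℂ) / v).re := by
    have hv0 : v ≠ 0 := by rintro rfl; simp at hv
    rw [div_eq_mul_inv, Complex.re_ofReal_mul, Complex.inv_re]
    exact mul_pos Real.pi_pos (div_pos hv (Complex.normSq_pos.2 hv0))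
  have hp := abs_im_le_re_cpow_half (re_pos hz)
  have hq := abs_im_le_re_cpow_half (re_pos hw)
  have hp2 := cpow_half_sq ((π : ℂ) / z)
  have hq2 := cpow_half_sq ((π : ℂ) / w)
  have hπ : (π : ℂ) ≠ 0 := by exact_mod_cast Real.pi_ne_zero
  set p := ((π : ℂ) / z) ^ (1 / 2 : ℂ)
  set q := ((π : ℂ) / w) ^ (1 / 2 : ℂ)
  have hq0 : q ≠ 0 := by
    intro h
    rw [h] at hq2
    exact div_ne_zero hπ hw0 (by simpa using hq2.symm)
  have hle : ‖q‖ ≤ ‖p + q‖ := by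
    have hinner : 0 ≤ p.re * q.re + p.im * q.im := by
      have := mul_le_mul hp hq (abs_nonneg _) ((abs_nonneg _).trans hp)
      rw [← abs_mul] at this
      linarith [neg_abs_le (p.im * q.im)]
    refine le_of_sq_le_sq ?_ (norm_nonneg _)
    rw [Complex.sq_norm, Complex.sq_norm, Complex.normSq_apply, Complex.normSq_apply,
      Complex.add_re, Complex.add_im]
    nlinarith [mul_self_nonneg p.re, mul_self_nonneg p.im]
  have hfac : (p - q) * (p + q) = q ^ 2 * ((w - z) / z) := by
    have : (p - q) * (p + q) = p ^ 2 - q ^ 2 := by ring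
    rw [this, hp2, hq2]
    field_simp
  have hnorm : ‖p - q‖ * ‖p + q‖ = ‖q‖ ^ 2 * (‖z - w‖ / ‖z‖) := by
    rw [← norm_mul, hfac, norm_mul, norm_pow, norm_div, norm_sub_rev]
  have hqpos : 0 < ‖q‖ := norm_pos_iff.2 hq0
  refine le_of_mul_le_mul_right ?_ hqpos
  calc ‖p - q‖ * ‖q‖ ≤ ‖p - q‖ * ‖p + q‖ := by gcongr
    _ = _ := by rw [hnorm]; ring

lemma integral_integral_cexp_quadratic {A β : ℂ} (h : 0 < (A + β).re)
    (hγ : 0 < ((2 * A * β + β ^ 2) / (A + β)).re) :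
    ∫ x : ℝ, ∫ y : ℝ,
        cexp (-A * ((x : ℂ) - (y : ℂ)) ^ 2 - β * (x : ℂ) ^ 2 - β * (y : ℂ) ^ 2)
      = ((π : ℂ) / (A + β)) ^ (1 / 2 : ℂ)
        * ((π : ℂ) / ((2 * A * β + β ^ 2) / (A + β))) ^ (1 / 2 : ℂ) := by
  have h0 : A + β ≠ 0 := by intro h'; simp [h'] at h
  have inner (x : ℝ) : ∫ y : ℝ,
        cexp (-A * ((x : ℂ) - (y : ℂ)) ^ 2 - β * (x : ℂ) ^ 2 - β * (y : ℂ) ^ 2)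
      = ((π : ℂ) / (A + β)) ^ (1 / 2 : ℂ)
        * cexp (-((2 * A * β + β ^ 2) / (A + β)) * (x : ℂ) ^ 2) := by
    have := integral_cexp_quadratic (b := -(A + β)) (by rw [Complex.neg_re]; linarith) (2 * A * x)
      (-(A + β) * (x : ℂ) ^ 2)
    rw [neg_neg] at this
    convert this using 2
    · ext y
      ring_nf
    · congr 1
      field_simp
      ring
  simp_rw [inner]
  rw [integral_const_mul, integral_gaussian_complex hγ]

lemma integrable_exp_mul_exp_sub {a b : ℝ} (ha : 0 < a) (hb : 0 < b) :
    Integrable (fun p : ℝ × ℝ => rexp (-b * p.2 ^ 2) * rexp (-a * (p.1 - p.2) ^ 2))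
      (volume.prod volume) := by
  simpa using (integrable_exp_neg_mul_sq hb).convolution_integrand
    (ContinuousLinearMap.mul ℝ ℝ) (integrable_exp_neg_mul_sq ha)

lemma integral_exp_mul_exp_sub {a b : ℝ} (ha : 0 < a) (hb : 0 < b) :
    ∫ p : ℝ × ℝ, rexp (-b * p.2 ^ 2) * rexp (-a * (p.1 - p.2) ^ 2) ∂(volume.prod volume)
      = √(π / b) * √(π / a) := by
  rw [integral_prod_symm _ (integrable_exp_mul_exp_sub ha hb)]
  simp_rw [integral_const_mul]
  have (y : ℝ) : ∫ x : ℝ, rexp (-a * (x - y) ^ 2) = √(π / a) := by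
    rw [integral_sub_right_eq_self (fun x => rexp (-a * x ^ 2)) y, integral_gaussian]
  simp_rw [this]
  rw [integral_mul_const, integral_gaussian]

lemma abs_pow_three_mul_exp_le {α : ℝ} (hα : 0 < α) (x : ℝ) :
    |x| ^ 3 * rexp (-α * x ^ 2) ≤ 6 / √α ^ 3 * rexp (-(α / 2) * x ^ 2) := by
  have hs : 0 < √α := Real.sqrt_pos.2 hα
  have hcube : (√α * |x|) ^ 3 ≤ 6 * rexp (α / 2 * x ^ 2) := by
    have ht : (√α * |x|) ^ 2 = α * x ^ 2 := by rw [mul_pow, Real.sq_sqrt hα.le, sq_abs]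
    have hexp := Real.quadratic_le_exp_of_nonneg (x := α / 2 * x ^ 2) (by positivity)
    have h4 : α / 2 * x ^ 2 = (√α * |x|) ^ 2 / 2 := by rw [ht]; ring
    rw [h4] at hexp ⊢
    nlinarith [sq_nonneg ((√α * |x|) ^ 2 - √α * |x|)]
  have hsplit : rexp (-(α / 2) * x ^ 2) = rexp (α / 2 * x ^ 2) * rexp (-α * x ^ 2) := by
    rw [← Real.exp_add]
    ring_nf
  rw [hsplit, ← mul_assoc]
  gcongr
  rw [div_mul_eq_mul_div, le_div_iff₀ (by positivity)]
  linarith [mul_pow (√α) |x| 3]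

/-- Replacing the weight `f` by `g` in a double Gaussian integral, when `f` and `g` agree to
third order at the origin. -/
lemma norm_integral_integral_sub_le {f g : ℝ → ℂ} (hf : Continuous f) (hg : Continuous g)
    (hf1 : ∀ x, ‖f x‖ ≤ 1) (hg1 : ∀ x, ‖g x‖ ≤ 1) {M : ℝ} (hM : 0 ≤ M)
    (hfg : ∀ x, ‖f x - g x‖ ≤ M * |x| ^ 3) {A : ℂ} (hA : 0 < A.re) {α : ℝ} (hα : 0 < α) :
    ‖(∫ x : ℝ, ∫ y : ℝ, cexp (-A * ((x : ℂ) - (y : ℂ)) ^ 2 - (α : ℂ) * (x : ℂ) ^ 2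
          - (α : ℂ) * (y : ℂ) ^ 2) * (f x * f y))
      - ∫ x : ℝ, ∫ y : ℝ, cexp (-A * ((x : ℂ) - (y : ℂ)) ^ 2 - (α : ℂ) * (x : ℂ) ^ 2
          - (α : ℂ) * (y : ℂ) ^ 2) * (g x * g y)‖
      ≤ 12 * M / √α ^ 3 * (√(π / (α / 2)) * √(π / A.re)) := by
  set k : ℝ × ℝ → ℂ := fun p => cexp (-A * ((p.1 : ℂ) - (p.2 : ℂ)) ^ 2
    - (α : ℂ) * (p.1 : ℂ) ^ 2 - (α : ℂ) * (p.2 : ℂ) ^ 2) with hk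
  have hkc : Continuous k := by fun_prop
  have hknorm (p : ℝ × ℝ) : ‖k p‖ =
      rexp (-A.re * (p.1 - p.2) ^ 2) * rexp (-α * p.1 ^ 2) * rexp (-α * p.2 ^ 2) := by
    rw [hk, Complex.norm_exp, ← Real.exp_add, ← Real.exp_add]
    congr 1
    have : -A * ((p.1 : ℂ) - (p.2 : ℂ)) ^ 2 - (α : ℂ) * (p.1 : ℂ) ^ 2 - (α : ℂ) * (p.2 : ℂ) ^ 2
        = (((p.1 - p.2) ^ 2 : ℝ) : ℂ) * (-A) - ((α * p.1 ^ 2 + α * p.2 ^ 2 : ℝ) : ℂ) := by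
      push_cast
      ring
    rw [this, Complex.sub_re, Complex.re_ofReal_mul, Complex.ofReal_re, Complex.neg_re]
    ring
  have hexp1 (t : ℝ) : rexp (-α * t ^ 2) ≤ 1 :=
    Real.exp_le_one_iff.2 (by nlinarith [sq_nonneg t])
  have hα2 : 0 < α / 2 := by positivity
  have hint2 := integrable_exp_mul_exp_sub hA hα2
  have hval2 := integral_exp_mul_exp_sub hA hα2
  have hint1 := hint2.swap
  have hval1 := integral_prod_swap (μ := (volume : Measure ℝ)) (ν := (volume : Measure ℝ))
    (fun p : ℝ × ℝ => rexp (-(α / 2) * p.2 ^ 2) * rexp (-A.re * (p.1 - p.2) ^ 2))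
  rw [hval2] at hval1
  have hintk {h : ℝ → ℂ} (hc : Continuous h) (h1 : ∀ x, ‖h x‖ ≤ 1) :
      Integrable (fun p : ℝ × ℝ => k p * (h p.1 * h p.2)) (volume.prod volume) := by
    refine (integrable_exp_mul_exp_sub hA hα).mono'
      (by fun_prop : Continuous _).aestronglyMeasurable (ae_of_all _ fun p => ?_)
    rw [norm_mul, norm_mul, hknorm]
    calc _ ≤ rexp (-A.re * (p.1 - p.2) ^ 2) * 1 * rexp (-α * p.2 ^ 2) * (1 * 1) := by
          gcongr
          exacts [hexp1 _, h1 _, h1 _]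
      _ = _ := by ring
  rw [← integral_prod (fun p : ℝ × ℝ => k p * (f p.1 * f p.2)) (hintk hf hf1),
    ← integral_prod (fun p : ℝ × ℝ => k p * (g p.1 * g p.2)) (hintk hg hg1),
    ← integral_sub (hintk hf hf1) (hintk hg hg1)]
  have hbound := norm_integral_le_of_norm_le ((hint1.add hint2).const_mul (6 * M / √α ^ 3))
    (f := fun p : ℝ × ℝ => k p * (f p.1 * f p.2) - k p * (g p.1 * g p.2))
    (ae_of_all _ fun p => ?_)
  · refine hbound.trans (le_of_eq ?_)
    rw [integral_const_mul]
    simp only [Pi.add_apply]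
    rw [integral_add hint1 hint2, hval2]
    simp only [Function.comp_apply]
    rw [hval1]
    ring
  · have hsplit : k p * (f p.1 * f p.2) - k p * (g p.1 * g p.2)
        = k p * ((f p.1 - g p.1) * f p.2 + g p.1 * (f p.2 - g p.2)) := by ring
    rw [hsplit, norm_mul]
    have hw : ‖(f p.1 - g p.1) * f p.2 + g p.1 * (f p.2 - g p.2)‖
        ≤ M * |p.1| ^ 3 + M * |p.2| ^ 3 := by
      refine (norm_add_le _ _).trans ?_
      rw [norm_mul, norm_mul]
      refine add_le_add ?_ ?_
      · exact (mul_le_of_le_one_right (norm_nonneg _) (hf1 _)).trans (hfg _)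
      · exact (mul_le_of_le_one_left (norm_nonneg _) (hg1 _)).trans (hfg _)
    have e1 := abs_pow_three_mul_exp_le hα p.1
    have e2 := abs_pow_three_mul_exp_le hα p.2
    calc _ ≤ ‖k p‖ * (M * |p.1| ^ 3 + M * |p.2| ^ 3) := by gcongr
      _ = M * rexp (-A.re * (p.1 - p.2) ^ 2) *
          ((|p.1| ^ 3 * rexp (-α * p.1 ^ 2)) * rexp (-α * p.2 ^ 2)
            + rexp (-α * p.1 ^ 2) * (|p.2| ^ 3 * rexp (-α * p.2 ^ 2))) := by
          rw [hknorm]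
          ring
      _ ≤ M * rexp (-A.re * (p.1 - p.2) ^ 2) *
          ((6 / √α ^ 3 * rexp (-(α / 2) * p.1 ^ 2)) * 1
            + 1 * (6 / √α ^ 3 * rexp (-(α / 2) * p.2 ^ 2))) := by
          gcongr
          exacts [hexp1 _, hexp1 _]
      _ = _ := by
          simp only [Pi.add_apply, Function.comp_apply, Prod.fst_swap, Prod.snd_swap]
          rw [show (p.2 - p.1) ^ 2 = (p.1 - p.2) ^ 2 by ring]
          ring

lemma re_div_two_nonneg {z : ℂ} (hz : 0 ≤ z.re) : 0 ≤ (z / 2).re := by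
  rw [Complex.div_ofNat_re]
  positivity

lemma re_mul_sq_nonneg {u : ℂ} (hu : 0 ≤ u.re) (x : ℝ) : 0 ≤ (u * (x : ℂ) ^ 2).re := by
  rw [← Complex.ofReal_pow, Complex.re_mul_ofReal]
  positivity

lemma norm_cexp_neg_le_one {z : ℂ} (hz : 0 ≤ z.re) : ‖cexp (-z)‖ ≤ 1 := by
  rw [Complex.norm_exp]
  exact Real.exp_le_one_iff.2 (by simpa using hz)

lemma norm_pi_div_cpow_half_mul_sub_le {A u : ℂ} {α D : ℝ} (hA : 0 < A.re) (hα : 0 < α)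
    (hu : 0 ≤ u.re) (hD : ‖A * u - (α : ℂ) ^ 2 + u ^ 2 / 4‖ ≤ D * A.re) (hDα : D ≤ α) :
    0 < ((2 * A * (α + u / 2) + (α + u / 2) ^ 2) / (A + (α + u / 2))).re ∧
    ‖((π : ℂ) / (A + (α + u / 2))) ^ (1 / 2 : ℂ)
        * ((π : ℂ) / ((2 * A * (α + u / 2) + (α + u / 2) ^ 2) / (A + (α + u / 2)))) ^ (1 / 2 : ℂ)
      - ((π : ℂ) / (A + α)) ^ (1 / 2 : ℂ) * ((π : ℂ) / (2 * α)) ^ (1 / 2 : ℂ)‖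
      ≤ (2 * (‖u‖ / A.re) + D / α)
        * ‖((π : ℂ) / (A + α)) ^ (1 / 2 : ℂ) * ((π : ℂ) / (2 * α)) ^ (1 / 2 : ℂ)‖ := by
  have hzre : A.re ≤ (A + (α + u / 2)).re := by
    have : (u / 2).re = u.re / 2 := by simp
    rw [Complex.add_re, Complex.add_re, this, Complex.ofReal_re]
    linarith
  have hz : A.re ≤ ‖A + (α + u / 2)‖ := hzre.trans (Complex.re_le_norm _)
  have hz0 : A + (α + u / 2) ≠ 0 := norm_pos_iff.1 (hA.trans_le hz)
  have hD0 : 0 ≤ D := nonneg_of_mul_nonneg_left ((norm_nonneg _).trans hD) hA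
  set z := A + (α + u / 2) with hzdef
  set γ := (2 * A * (α + u / 2) + (α + u / 2) ^ 2) / z with hγdef
  have hγsub : γ - 2 * α = (A * u - (α : ℂ) ^ 2 + u ^ 2 / 4) / z := by
    rw [hγdef, eq_div_iff hz0, sub_mul, div_mul_cancel₀ _ hz0, hzdef]
    ring
  have hγD : ‖γ - 2 * α‖ ≤ D := by
    rw [hγsub, norm_div, div_le_iff₀ (hA.trans_le hz)]
    exact hD.trans (by gcongr)
  have hγre : α ≤ γ.re := by
    have h := (neg_abs_le _).trans' (neg_le_neg ((Complex.abs_re_le_norm (γ - 2 * α)).trans hγD))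
    have h2 : (2 * (α : ℂ)).re = 2 * α := by simp
    rw [Complex.sub_re, h2] at h
    linarith
  have hγα : α ≤ ‖γ‖ := hγre.trans (Complex.re_le_norm _)
  have hγ0 : 0 < γ.re := hα.trans_le hγre
  refine ⟨hγ0, ?_⟩
  have hAα : 0 < (A + α).re := by
    rw [Complex.add_re, Complex.ofReal_re]
    positivity
  have h1 := norm_pi_div_cpow_half_sub_le (hA.trans_le hzre) hAα
  have h2 := norm_pi_div_cpow_half_sub_le (w := 2 * α) hγ0 (by simpa using hα)
  have hd1 : ‖z - (A + α)‖ / ‖z‖ ≤ ‖u‖ / A.re := by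
    have : z - (A + α) = u / 2 := by rw [hzdef]; ring
    rw [this, norm_div]
    gcongr
    norm_num
  have hd2 : ‖γ - 2 * α‖ / ‖γ‖ ≤ D / α := by gcongr
  replace h1 := h1.trans (mul_le_mul_of_nonneg_left hd1 (norm_nonneg _))
  replace h2 := h2.trans (mul_le_mul_of_nonneg_left hd2 (norm_nonneg _))
  have hd2' : D / α ≤ 1 := (div_le_one hα).2 hDα
  set p₁ := ((π : ℂ) / z) ^ (1 / 2 : ℂ)
  set p₂ := ((π : ℂ) / γ) ^ (1 / 2 : ℂ)
  set q₁ := ((π : ℂ) / (A + α)) ^ (1 / 2 : ℂ)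
  set q₂ := ((π : ℂ) / (2 * α)) ^ (1 / 2 : ℂ)
  have hsplit : p₁ * p₂ - q₁ * q₂ = (p₁ - q₁) * q₂ + q₁ * (p₂ - q₂) + (p₁ - q₁) * (p₂ - q₂) := by
    ring
  have hδ : 0 ≤ ‖u‖ / A.re := by positivity
  calc ‖p₁ * p₂ - q₁ * q₂‖
      ≤ ‖p₁ - q₁‖ * ‖q₂‖ + ‖q₁‖ * ‖p₂ - q₂‖ + ‖p₁ - q₁‖ * ‖p₂ - q₂‖ := by
        rw [hsplit, ← norm_mul, ← norm_mul, ← norm_mul]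
        exact norm_add₃_le
    _ ≤ (‖q₁‖ * (‖u‖ / A.re)) * ‖q₂‖ + ‖q₁‖ * (‖q₂‖ * (D / α))
        + (‖q₁‖ * (‖u‖ / A.re)) * (‖q₂‖ * 1) := by
        gcongr
        exact h2.trans (by gcongr)
    _ = _ := by
        rw [norm_mul]
        ring

lemma inv_le_re_of_forall_inv_mul_min_le {C M : ℝ} {U : ℝ → ℂ} {u : ℂ}
    (hU : ∀ x : ℝ, (1 / C) * min 1 (x ^ 2) ≤ (U x).re)
    (hM : ∀ x : ℝ, |x| ≤ 1 → ‖U x - u * (x : ℂ) ^ 2‖ ≤ M * |x| ^ 3) :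
    1 / C ≤ u.re := by
  have hlim : Filter.Tendsto (fun x : ℝ => u.re + M * x) (nhdsWithin 0 (Set.Ioi 0))
      (nhds u.re) := by
    have : Filter.Tendsto (fun x : ℝ => u.re + M * x) (nhds 0) (nhds (u.re + M * 0)) :=
      (by fun_prop : Continuous fun x : ℝ => u.re + M * x).tendsto 0
    rw [mul_zero, add_zero] at this
    exact this.mono_left nhdsWithin_le_nhds
  refine ge_of_tendsto hlim ?_
  filter_upwards [Ioc_mem_nhdsGT (zero_lt_one' ℝ)] with x hx
  have hx2 : 0 < x ^ 2 := pow_pos hx.1 2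
  have h1 := hU x
  rw [min_eq_right (pow_le_one₀ hx.1.le hx.2)] at h1
  have h2 := (Complex.re_le_norm _).trans (hM x (by rw [abs_of_pos hx.1]; exact hx.2))
  have h3 : (u * (x : ℂ) ^ 2).re = u.re * x ^ 2 := by
    rw [← Complex.ofReal_pow, Complex.re_mul_ofReal]
  rw [Complex.sub_re, h3, abs_of_pos hx.1] at h2
  refine le_of_mul_le_mul_right ?_ hx2
  nlinarith

lemma norm_cexp_sub_cexp_quadratic_le {M : ℝ} {U : ℝ → ℂ} {u : ℂ} (hM0 : 0 ≤ M)
    (hU : ∀ x, 0 ≤ (U x).re) (hu : 0 ≤ u.re)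
    (hM : ∀ x : ℝ, |x| ≤ 1 → ‖U x - u * (x : ℂ) ^ 2‖ ≤ M * |x| ^ 3) (x : ℝ) :
    ‖cexp (-(U x / 2)) - cexp (-(u * (x : ℂ) ^ 2 / 2))‖ ≤ (M + 2) * |x| ^ 3 := by
  have hre1 : 0 ≤ (U x / 2).re := re_div_two_nonneg (hU x)
  have hre2 : 0 ≤ (u * (x : ℂ) ^ 2 / 2).re := re_div_two_nonneg (re_mul_sq_nonneg hu x)
  rcases le_total |x| 1 with hx | hx
  · refine (norm_cexp_neg_sub_cexp_neg_le hre1 hre2).trans ?_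
    rw [← sub_div, norm_div, Complex.norm_ofNat]
    have := hM x hx
    have : 0 ≤ M * |x| ^ 3 := by positivity
    have : 0 ≤ |x| ^ 3 := by positivity
    linarith
  · have := norm_sub_le (cexp (-(U x / 2))) (cexp (-(u * (x : ℂ) ^ 2 / 2)))
    have := norm_cexp_neg_le_one hre1
    have := norm_cexp_neg_le_one hre2
    have := one_le_pow₀ hx (n := 3)
    nlinarith

lemma div_le_and_le_of_norm_sq_sub_mul_le {A u : ℂ} {C s α : ℝ} (hC : 1 ≤ C) (hs1 : 1 ≤ s)
    (hs_lower : 2 * C ^ 2 ≤ s) (hα : 0 < α) (hunorm : 1 / C ≤ ‖u‖) (hAnorm : ‖A‖ = s ^ 4)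
    (hαA : ‖(α : ℂ) ^ 2 - A * u‖ ≤ C * s ^ 3) :
    s ^ 2 / (2 * C) ≤ α ∧ α ≤ (‖u‖ + C + 1) * s ^ 4 := by
  have hs0 : 0 < s := by positivity
  have hα2 : ‖(α : ℂ) ^ 2‖ = α ^ 2 := by
    rw [norm_pow, Complex.norm_real, Real.norm_of_nonneg hα.le]
  have hα_lower : s ^ 2 / (2 * C) ≤ α := by
    have h1 : ‖A * u‖ - ‖(α : ℂ) ^ 2‖ ≤ C * s ^ 3 :=
      (norm_sub_norm_le _ _).trans (by rwa [norm_sub_rev])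
    rw [norm_mul, hAnorm, hα2] at h1
    have h2 : s ^ 4 * (1 / C) ≤ s ^ 4 * ‖u‖ := by gcongr
    have h3 : C * s ^ 3 ≤ s ^ 4 / (2 * C) := by
      rw [le_div_iff₀ (by positivity)]
      nlinarith [pow_pos hs0 3]
    have h4 : (s ^ 2 / (2 * C)) ^ 2 ≤ s ^ 4 / (2 * C) := by
      rw [div_pow, ← pow_mul]
      gcongr
      nlinarith
    have h5 : s ^ 4 * (1 / C) = s ^ 4 / (2 * C) + s ^ 4 / (2 * C) := by
      field_simp
      norm_num
    exact le_of_sq_le_sq (by linarith) hα.le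
  have hα_upper : α ≤ (‖u‖ + C + 1) * s ^ 4 := by
    have h1 : ‖(α : ℂ) ^ 2‖ - ‖A * u‖ ≤ C * s ^ 3 := (norm_sub_norm_le _ _).trans hαA
    rw [norm_mul, hAnorm, hα2] at h1
    have h2 : s ^ 3 ≤ s ^ 4 := pow_le_pow_right₀ hs1 (by norm_num)
    have h3 : 1 ≤ s ^ 4 := one_le_pow₀ hs1
    have h4 : α ≤ α ^ 2 + 1 := by nlinarith [sq_nonneg (α - 1)]
    have h5 : C * s ^ 3 ≤ C * s ^ 4 := by gcongr
    linarith
  exact ⟨hα_lower, hα_upper⟩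

lemma cubic_error_le_mul_norm {A : ℂ} {a C L M s α : ℝ} (hα : 0 < α) (hM : 0 ≤ M) (hs0 : 0 < s)
    (ha0 : 0 < a) (hCpos : 0 < C) (hL : 0 ≤ L) (hAre : A.re = a * s ^ 4) (hAnorm : ‖A‖ ≤ s ^ 4)
    (hα_lower : s ^ 2 / (2 * C) ≤ α) (hα_upper : α ≤ L * s ^ 4) :
    12 * M / √α ^ 3 * (√(π / (α / 2)) * √(π / A.re))
      ≤ 24 * M * √(2 * C) ^ 3 * √((1 + L) / a) * (s ^ 3)⁻¹
        * ‖((π : ℂ) / (A + α)) ^ (1 / 2 : ℂ) * ((π : ℂ) / (2 * α)) ^ (1 / 2 : ℂ)‖ := by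
  have hApos : 0 < A.re := by rw [hAre]; positivity
  have hAα0 : A + α ≠ 0 := by
    intro h
    have := congrArg Complex.re h
    rw [Complex.add_re, Complex.ofReal_re, Complex.zero_re] at this
    linarith
  have hTnorm : ‖((π : ℂ) / (A + α)) ^ (1 / 2 : ℂ) * ((π : ℂ) / (2 * α)) ^ (1 / 2 : ℂ)‖
      = √(π / ‖A + α‖) * √(π / (2 * α)) := by
    have h2α : ‖2 * (α : ℂ)‖ = 2 * α := by
      rw [norm_mul, Complex.norm_real, Real.norm_of_nonneg hα.le, Complex.norm_ofNat]
    rw [norm_mul, norm_pi_div_cpow_half hAα0,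
      norm_pi_div_cpow_half (norm_pos_iff.1 (by rw [h2α]; positivity)), h2α]
  have h1 : √(π / (α / 2)) = 2 * √(π / (2 * α)) := by
    rw [show π / (α / 2) = 2 ^ 2 * (π / (2 * α)) by field_simp,
      Real.sqrt_mul (by norm_num), Real.sqrt_sq (by norm_num)]
  have h2 : √(π / A.re) ≤ √((1 + L) / a) * √(π / ‖A + α‖) := by
    rw [← Real.sqrt_mul (by positivity)]
    refine Real.sqrt_le_sqrt ?_
    have hpos : 0 < ‖A + α‖ := norm_pos_iff.2 hAα0
    have hle : ‖A + α‖ ≤ (1 + L) * s ^ 4 := by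
      refine (norm_add_le _ _).trans ?_
      rw [Complex.norm_real, Real.norm_of_nonneg hα.le]
      linarith
    rw [div_mul_div_comm, div_le_div_iff₀ hApos (by positivity), hAre]
    calc π * (a * ‖A + α‖) ≤ π * (a * ((1 + L) * s ^ 4)) := by gcongr
      _ = _ := by ring
  have h3 : 1 / √α ^ 3 ≤ √(2 * C) ^ 3 * (s ^ 3)⁻¹ := by
    have h4 : s / √(2 * C) ≤ √α := by
      refine Real.le_sqrt_of_sq_le ?_
      rwa [div_pow, Real.sq_sqrt (by positivity)]
    rw [← div_eq_mul_inv, ← div_pow, ← one_div_pow, one_div]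
    refine pow_le_pow_left₀ (by positivity) ?_ 3
    rw [← inv_div s]
    exact inv_anti₀ (by positivity) h4
  rw [hTnorm, h1]
  calc _ = 12 * M * (1 / √α ^ 3) * (2 * √(π / (2 * α)) * √(π / A.re)) := by ring
    _ ≤ 12 * M * (√(2 * C) ^ 3 * (s ^ 3)⁻¹)
        * (2 * √(π / (2 * α)) * (√((1 + L) / a) * √(π / ‖A + α‖))) := by gcongr
    _ = _ := by ring

/-- saddle point asymptotics of the double integral `I(α)`:
for `α > 0` with `|α² − W²ζ²U''(0)/2| ≤ C·W^{3/2}`,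
`I(α) = (1 + O(W^{−3/2+ε}))·√(π/(W²ζ²+α))·√(π/(2α))`. -/
theorem stmt_12 :
    ∀ (C : ℝ) (ζ : ℂ) (U : ℝ → ℂ), 1 ≤ C → ‖ζ‖ = 1 → 0 < (ζ^2).re →
    ContDiff ℝ (⊤ : ℕ∞) U → U 0 = 0 → deriv U 0 = 0 →
    (∀ x : ℝ, (1/C) * min 1 (x^2) ≤ (U x).re) →
    ∀ ε : ℝ, 0 < ε →
    ∃ C' : ℝ, 0 < C' ∧ ∃ W₀ : ℝ, 0 < W₀ ∧
    ∀ W : ℝ, W₀ ≤ W →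
    ∀ α : ℝ, 0 < α →
      ‖((α : ℂ))^2 - (W : ℂ)^2 * ζ^2 * deriv (deriv U) 0 / 2‖ ≤ C * W ^ ((3:ℝ)/2) →
      ‖(∫ x : ℝ, ∫ y : ℝ,
          Complex.exp (-(W : ℂ)^2 * ζ^2 * ((x : ℂ) - (y : ℂ))^2
            - U x / 2 - (α : ℂ) * (x : ℂ)^2 - U y / 2 - (α : ℂ) * (y : ℂ)^2))
        - ((π : ℂ) / ((W : ℂ)^2 * ζ^2 + (α : ℂ))) ^ (1/2 : ℂ)
          * ((π : ℂ) / (2 * (α : ℂ))) ^ (1/2 : ℂ)‖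
      ≤ C' * W ^ (-(3:ℝ)/2 + ε) *
          ‖((π : ℂ) / ((W : ℂ)^2 * ζ^2 + (α : ℂ))) ^ (1/2 : ℂ)
            * ((π : ℂ) / (2 * (α : ℂ))) ^ (1/2 : ℂ)‖ := by
  intro C ζ U hC hζ hζre hU hU0 hU1 hU3 ε hε
  obtain ⟨M, hM0, hM⟩ := exists_norm_sub_quadratic_le hU hU0 hU1
  have hu := inv_le_re_of_forall_inv_mul_min_le hU3 hM
  have hUre (x : ℝ) : 0 ≤ (U x).re := (hU3 x).trans' (by positivity)
  have hCpos : 0 < C := by positivity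
  set u : ℂ := deriv (deriv U) 0 / 2 with hudef
  have hu0 : 0 ≤ u.re := hu.trans' (by positivity)
  have hunorm : 1 / C ≤ ‖u‖ := hu.trans (Complex.re_le_norm u)
  set a := (ζ ^ 2).re
  set L := ‖u‖ + C + 1
  set c := (C + ‖u‖ ^ 2) / a with hc
  have hLpos : 0 < L := by positivity
  have hcpos : 0 < c := by positivity
  set K := 24 * (M + 2) * √(2 * C) ^ 3 * √((1 + L) / a) + (2 * (‖u‖ / a) + 2 * C * c) with hK
  refine ⟨K, by positivity, max 1 (max (4 * C ^ 4) (2 * C * c)), by positivity, ?_⟩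
  intro W hW α hα hαW
  have hW1 : 1 ≤ W := (le_max_left _ _).trans hW
  have hWC : 4 * C ^ 4 ≤ W := ((le_max_left _ _).trans (le_max_right _ _)).trans hW
  have hWc : 2 * C * c ≤ W := ((le_max_right _ _).trans (le_max_right _ _)).trans hW
  have hW0 : 0 < W := by positivity
  set s := √W with hs
  have hs1 : 1 ≤ s := Real.one_le_sqrt.2 hW1
  have hs0 : 0 < s := by positivity
  have hsW : W = s ^ 2 := (Real.sq_sqrt hW0.le).symm
  have hrpow : W ^ ((3 : ℝ) / 2) = s ^ 3 := by
    rw [hs, Real.sqrt_eq_rpow, ← Real.rpow_natCast, ← Real.rpow_mul hW0.le]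
    norm_num
  have hrpow' : (s ^ 3)⁻¹ ≤ W ^ (-(3 : ℝ) / 2 + ε) := by
    rw [← hrpow, ← Real.rpow_neg hW0.le]
    exact Real.rpow_le_rpow_of_exponent_le hW1 (by linarith)
  set A : ℂ := (W : ℂ) ^ 2 * ζ ^ 2 with hAdef
  have hAre : A.re = a * s ^ 4 := by
    rw [hAdef, ← Complex.ofReal_pow, Complex.re_ofReal_mul, hsW]
    ring
  have hApos : 0 < A.re := by rw [hAre]; positivity
  have hAnorm : ‖A‖ = s ^ 4 := by
    rw [hAdef, norm_mul, norm_pow, norm_pow, hζ, Complex.norm_real, Real.norm_of_nonneg hW0.le,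
      hsW]
    ring
  have hαA : ‖(α : ℂ) ^ 2 - A * u‖ ≤ C * s ^ 3 := by
    rw [← hrpow, hudef, ← mul_div_assoc]
    exact hαW
  have hs_lower : 2 * C ^ 2 ≤ s := by
    refine le_of_sq_le_sq ?_ hs0.le
    rw [← hsW]
    linarith
  obtain ⟨hα_lower, hα_upper⟩ := div_le_and_le_of_norm_sq_sub_mul_le hC hs1 hs_lower hα hunorm
    hAnorm hαA
  have hD : ‖A * u - (α : ℂ) ^ 2 + u ^ 2 / 4‖ ≤ c / s * A.re := by
    have h1 : c / s * A.re = (C + ‖u‖ ^ 2) * s ^ 3 := by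
      rw [hc, hAre]
      field_simp
    rw [h1]
    refine (norm_add_le _ _).trans ?_
    rw [norm_sub_rev, norm_div, norm_pow, Complex.norm_ofNat]
    have h2 : ‖u‖ ^ 2 * 1 ≤ ‖u‖ ^ 2 * s ^ 3 := by
      gcongr
      exact one_le_pow₀ hs1
    have := sq_nonneg ‖u‖
    linarith
  have hDα : c / s ≤ α := by
    refine (div_le_self hcpos.le hs1).trans (hα_lower.trans' ?_)
    rw [le_div_iff₀ (by positivity), ← hsW]
    linarith
  obtain ⟨hγ, hGT⟩ := norm_pi_div_cpow_half_mul_sub_le hApos hα hu0 hD hDα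
  have hβ : 0 < (A + (α + u / 2)).re := by
    have : (u / 2).re = u.re / 2 := by simp
    rw [Complex.add_re, Complex.add_re, this, Complex.ofReal_re]
    positivity
  have hG := integral_integral_cexp_quadratic hβ hγ
  have hIG := norm_integral_integral_sub_le
    (f := fun x => cexp (-(U x / 2))) (g := fun x => cexp (-(u * (x : ℂ) ^ 2 / 2)))
    (by have := hU.continuous; fun_prop) (by fun_prop)
    (fun x => norm_cexp_neg_le_one (re_div_two_nonneg (hUre x)))
    (fun x => norm_cexp_neg_le_one (re_div_two_nonneg (re_mul_sq_nonneg hu0 x)))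
    (by positivity : 0 ≤ M + 2) (norm_cexp_sub_cexp_quadratic_le hM0 hUre hu0 hM) hApos hα
  have hI (x y : ℝ) : cexp (-A * ((x : ℂ) - y) ^ 2 - α * (x : ℂ) ^ 2 - α * (y : ℂ) ^ 2)
        * (cexp (-(U x / 2)) * cexp (-(U y / 2)))
      = cexp (-(W : ℂ)^2 * ζ^2 * ((x : ℂ) - (y : ℂ))^2
            - U x / 2 - (α : ℂ) * (x : ℂ)^2 - U y / 2 - (α : ℂ) * (y : ℂ)^2) := by
    rw [← Complex.exp_add, ← Complex.exp_add, hAdef]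
    congr 1
    ring
  have hg (x y : ℝ) : cexp (-A * ((x : ℂ) - y) ^ 2 - α * (x : ℂ) ^ 2 - α * (y : ℂ) ^ 2)
        * (cexp (-(u * (x : ℂ) ^ 2 / 2)) * cexp (-(u * (y : ℂ) ^ 2 / 2)))
      = cexp (-A * ((x : ℂ) - y) ^ 2 - (α + u / 2) * (x : ℂ) ^ 2
            - (α + u / 2) * (y : ℂ) ^ 2) := by
    rw [← Complex.exp_add, ← Complex.exp_add]
    congr 1
    ring
  simp only [hI, hg] at hIG
  rw [hG] at hIG
  have hcubic := cubic_error_le_mul_norm (M := M + 2) hα (by positivity) hs0 hζre hCpos hLpos.le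
    hAre hAnorm.le hα_lower hα_upper
  set T := ((π : ℂ) / (A + α)) ^ (1 / 2 : ℂ) * ((π : ℂ) / (2 * α)) ^ (1 / 2 : ℂ)
  have hquad : 2 * (‖u‖ / A.re) + c / s / α ≤ (2 * (‖u‖ / a) + 2 * C * c) * (s ^ 3)⁻¹ := by
    have h1 : ‖u‖ / A.re ≤ ‖u‖ / a * (s ^ 3)⁻¹ := by
      rw [hAre, ← div_div, ← div_eq_mul_inv]
      gcongr
      norm_num
    have h2 : c / s / α ≤ 2 * C * c * (s ^ 3)⁻¹ := by
      calc c / s / α ≤ c / s / (s ^ 2 / (2 * C)) := by gcongr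
        _ = _ := by field_simp
    linarith
  calc _ ≤ 12 * (M + 2) / √α ^ 3 * (√(π / (α / 2)) * √(π / A.re))
        + (2 * (‖u‖ / A.re) + c / s / α) * ‖T‖ :=
        (norm_sub_le_norm_sub_add_norm_sub _ _ _).trans (add_le_add hIG hGT)
    _ ≤ 24 * (M + 2) * √(2 * C) ^ 3 * √((1 + L) / a) * (s ^ 3)⁻¹ * ‖T‖
        + (2 * (‖u‖ / a) + 2 * C * c) * (s ^ 3)⁻¹ * ‖T‖ := by gcongr
    _ = K * (s ^ 3)⁻¹ * ‖T‖ := by rw [hK]; ring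
    _ ≤ K * W ^ (-(3 : ℝ) / 2 + ε) * ‖T‖ := by gcongr
end
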